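/- arXiv:1603.07113 — 3 statements merged into one kernel-verified Lean document; each statement's English description precedes it below -/
import Mathlib

section
/- Let n ≥ 3 be an integer and let λ be a real number with λ ≥ (3n + √(5n² − 4n))/(n² + n). If f is a close-to-convex function on the unit disk with Taylor coefficients a_k, then |λ a_n² − a_{2n−1}| ≤ λ n² − (2n − 1). -/
open Complex Metric

/-- The k-th Taylor coefficient of `f` at `0`: `a_k = f^{(k)}(0)/k!`. -/
noncomputable def taylorCoeff (f : ℂ → ℂ) (k : ℕ) : ℂ :=
  iteratedDeriv k f 0 / (Nat.factorial k)

/-- `g` is a (normalized) starlike function on the unit disk. -/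
def IsStarlikeFn (g : ℂ → ℂ) : Prop :=
  DifferentiableOn ℂ g (ball (0 : ℂ) 1) ∧ g 0 = 0 ∧ deriv g 0 = 1 ∧
    ∀ z ∈ ball (0 : ℂ) 1 \ {0}, 0 < (z * deriv g z / g z).re

/-- `f` is a (normalized) close-to-convex function on the unit disk. -/
def IsCloseToConvex (f : ℂ → ℂ) : Prop :=
  DifferentiableOn ℂ f (ball (0 : ℂ) 1) ∧ f 0 = 0 ∧ deriv f 0 = 1 ∧
    ∃ θ : ℝ, ∃ g : ℂ → ℂ, IsStarlikeFn g ∧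
      ∀ z ∈ ball (0 : ℂ) 1 \ {0},
        0 < (Complex.exp (θ * Complex.I) * z * deriv f z / g z).re


namespace Zal
open PowerSeries Finset

/-- Finite linear functional on power series. -/
noncomputable def ell (D : ℕ) (d : ℕ → ℂ) (S : PowerSeries ℂ) : ℂ :=
  ∑ i ∈ range (D + 1), d i * coeff i S

noncomputable def geom (y : ℂ) : PowerSeries ℂ := PowerSeries.mk fun i => y ^ i
noncomputable def inv2 (y : ℂ) : PowerSeries ℂ := PowerSeries.mk fun i => ((i : ℂ) + 1) * y ^ i
noncomputable def inv3 (y : ℂ) : PowerSeries ℂ :=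
  PowerSeries.mk fun i => (((i : ℂ) + 1) * (i + 2) / 2) * y ^ i

lemma ell_sub (D d) (S T : PowerSeries ℂ) : ell D d (S - T) = ell D d S - ell D d T := by
  simp [ell, mul_sub, Finset.sum_sub_distrib]

lemma ell_shift (D : ℕ) (d : ℕ → ℂ) (G : PowerSeries ℂ) :
    ∃ d' : ℕ → ℂ, ∀ S, ell D d (S * G) = ell D d' S := by
  refine ⟨fun i => ∑ N ∈ range (D + 1), if i ≤ N then d N * coeff (N - i) G else 0, fun S => ?_⟩
  unfold ell
  simp_rw [coeff_mul, Finset.Nat.sum_antidiagonal_eq_sum_range_succ_mk, Finset.mul_sum,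
    Finset.sum_mul]
  rw [Finset.sum_comm (s := range (D + 1)) (t := range (D + 1))]
  refine Finset.sum_congr rfl fun N hN => ?_
  rw [Finset.mem_range] at hN
  have : range (N + 1) ⊆ range (D + 1) := by
    intro i; simp only [Finset.mem_range]; omega
  rw [← Finset.sum_subset this]
  · refine Finset.sum_congr rfl fun i hi => ?_
    rw [Finset.mem_range] at hi
    rw [if_pos (by omega)]; ring
  · intro i _ hi
    rw [Finset.mem_range] at hi
    rw [if_neg (by omega)]; ring

/-- Moment sequences of probability measures on the circle, stated dually. -/
def Mom (K : PowerSeries ℂ) : Prop :=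
  ∀ (D : ℕ) (d : ℕ → ℂ) (M : ℝ), (∀ y : ℂ, ‖y‖ = 1 → (ell D d (geom y)).re ≤ M) →
    (ell D d K).re ≤ M

lemma Mom.mul {K : PowerSeries ℂ} (hK : Mom K) (G : PowerSeries ℂ) (D : ℕ) (d : ℕ → ℂ) (M : ℝ)
    (h : ∀ y : ℂ, ‖y‖ = 1 → (ell D d (geom y * G)).re ≤ M) : (ell D d (K * G)).re ≤ M := by
  obtain ⟨d', hd'⟩ := ell_shift D d G
  rw [hd']
  exact hK D d' M fun y hy => by rw [← hd']; exact h y hy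

lemma Mom.mul_affine {K : PowerSeries ℂ} (hK : Mom K) (c : ℂ) (G : PowerSeries ℂ) (D : ℕ)
    (d : ℕ → ℂ) (M : ℝ)
    (h : ∀ y : ℂ, ‖y‖ = 1 → (ell D d ((C (1 + c) * geom y - C c) * G)).re ≤ M) :
    (ell D d ((C (1 + c) * K - C c) * G)).re ≤ M := by
  have e : ∀ S : PowerSeries ℂ, (C (1 + c) * S - C c) * G = S * (C (1 + c) * G) - C c * G := by
    intro S; ring
  have := hK.mul (C (1 + c) * G) D d (M + (ell D d (C c * G)).re) (fun y hy => by
    have := h y hy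
    rw [e, ell_sub, Complex.sub_re] at this
    linarith)
  rw [e, ell_sub, Complex.sub_re]
  linarith

lemma affine_geom (c y : ℂ) : C (1 + c) * geom y - C c = (1 + C (c * y) * X) * geom y := by
  ext n
  cases n with
  | zero => simp [geom, add_mul, mul_assoc]
  | succ n =>
    simp [geom, add_mul, mul_assoc, coeff_succ_X_mul]
    left; ring

lemma beta_nat (i j : ℕ) : ∫ s in (0:ℝ)..1, ((s : ℂ) ^ i * (1 - (s : ℂ)) ^ j) =
    (i.factorial * j.factorial : ℂ) / ((i + j + 1).factorial : ℂ) := by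
  have h := Complex.betaIntegral_eq_Gamma_mul_div (i + 1) (j + 1)
    (by simp; positivity) (by simp; positivity)
  rw [Complex.Gamma_nat_eq_factorial, Complex.Gamma_nat_eq_factorial,
    show (i : ℂ) + 1 + (j + 1) = ((i + j + 1 : ℕ) : ℂ) + 1 by push_cast; ring,
    Complex.Gamma_nat_eq_factorial] at h
  rw [← h, Complex.betaIntegral]
  simp

lemma coeff_int1 (b c : ℂ) (N : ℕ) : coeff N (geom b * geom c) =
    ∫ s in (0:ℝ)..1, coeff N (inv2 ((s : ℂ) * b + (1 - (s : ℂ)) * c)) := by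
  simp only [geom, inv2, coeff_mul, coeff_mk, Finset.Nat.sum_antidiagonal_eq_sum_range_succ_mk]
  simp_rw [add_pow, Finset.mul_sum]
  rw [intervalIntegral.integral_finsetSum]
  · refine Finset.sum_congr rfl fun i hi => ?_
    rw [Finset.mem_range] at hi
    have e : ∀ s : ℝ, ((N : ℂ) + 1) * (((s : ℂ) * b) ^ i * ((1 - (s : ℂ)) * c) ^ (N - i) * (N.choose i : ℂ))
      = (((N : ℂ) + 1) * (N.choose i) * b ^ i * c ^ (N - i)) *
        ((s : ℂ) ^ i * (1 - (s : ℂ)) ^ (N - i)) := by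
      intro s; rw [mul_pow, mul_pow]; ring
    simp_rw [e]
    rw [intervalIntegral.integral_const_mul, beta_nat, show i + (N - i) + 1 = N + 1 by omega]
    have h1 : (N.choose i : ℂ) * i.factorial * (N - i).factorial = N.factorial := by
      exact_mod_cast Nat.choose_mul_factorial_mul_factorial (by omega : i ≤ N)
    have h2 : ((N + 1).factorial : ℂ) = (N + 1) * N.factorial := by
      exact_mod_cast Nat.factorial_succ N
    have h3 : ((N + 1).factorial : ℂ) ≠ 0 := by exact_mod_cast Nat.factorial_ne_zero _
    rw [mul_div_assoc', eq_div_iff h3, h2, ← h1]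
    ring
  · intro i _
    apply Continuous.intervalIntegrable
    fun_prop

lemma coeff_int2 (w a : ℂ) (N : ℕ) : coeff N (inv2 w * geom a) =
    ∫ s in (0:ℝ)..1, (2 * s : ℂ) * coeff N (inv3 ((s : ℂ) * w + (1 - (s : ℂ)) * a)) := by
  simp only [geom, inv2, inv3, coeff_mul, coeff_mk,
    Finset.Nat.sum_antidiagonal_eq_sum_range_succ_mk]
  simp_rw [add_pow, Finset.mul_sum]
  rw [intervalIntegral.integral_finsetSum]
  · refine Finset.sum_congr rfl fun i hi => ?_
    rw [Finset.mem_range] at hi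
    have e : ∀ s : ℝ, (2 * (s:ℂ)) * (((N : ℂ) + 1) * (N + 2) / 2 * (((s : ℂ) * w) ^ i * ((1 - (s : ℂ)) * a) ^ (N - i) * (N.choose i : ℂ)))
      = (((N : ℂ) + 1) * (N + 2) * (N.choose i) * w ^ i * a ^ (N - i)) *
        ((s : ℂ) ^ (i + 1) * (1 - (s : ℂ)) ^ (N - i)) := by
      intro s; rw [mul_pow, mul_pow]; ring
    simp_rw [e]
    rw [intervalIntegral.integral_const_mul, beta_nat, show i + 1 + (N - i) + 1 = N + 2 by omega]
    have h1 : (N.choose i : ℂ) * i.factorial * (N - i).factorial = N.factorial := by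
      exact_mod_cast Nat.choose_mul_factorial_mul_factorial (by omega : i ≤ N)
    have h2 : ((N + 2).factorial : ℂ) = (N + 2) * ((N + 1) * N.factorial) := by
      rw [Nat.factorial_succ, Nat.factorial_succ]; push_cast; ring
    have h4 : ((i + 1).factorial : ℂ) = (i + 1) * i.factorial := by
      exact_mod_cast Nat.factorial_succ i
    have h3 : ((N + 2).factorial : ℂ) ≠ 0 := by exact_mod_cast Nat.factorial_ne_zero _
    rw [mul_div_assoc', eq_div_iff h3, h2, ← h1, h4]
    ring
  · intro i _
    apply Continuous.intervalIntegrable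
    fun_prop

lemma ell_inv2_cont (D d) : Continuous fun w => ell D d (inv2 w) := by
  unfold ell inv2; simp only [coeff_mk]; fun_prop
lemma ell_inv3_cont (D d) : Continuous fun w => ell D d (inv3 w) := by
  unfold ell inv3; simp only [coeff_mk]; fun_prop
lemma ell_inv3_diff (D d) : Differentiable ℂ fun w => ell D d (inv3 w) := by
  unfold ell inv3; simp only [coeff_mk]; fun_prop

lemma ell_int1 (D d) (b c : ℂ) : ell D d (geom b * geom c) =
    ∫ s in (0:ℝ)..1, ell D d (inv2 ((s : ℂ) * b + (1 - (s : ℂ)) * c)) := by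
  unfold ell
  rw [intervalIntegral.integral_finsetSum]
  · refine Finset.sum_congr rfl fun i _ => ?_
    rw [coeff_int1, intervalIntegral.integral_const_mul]
  · intro i _
    apply Continuous.intervalIntegrable
    simp only [inv2, coeff_mk]; fun_prop

lemma ell_int2 (D d) (w a : ℂ) : ell D d (inv2 w * geom a) =
    ∫ s in (0:ℝ)..1, (2 * s : ℂ) * ell D d (inv3 ((s : ℂ) * w + (1 - (s : ℂ)) * a)) := by
  unfold ell
  simp_rw [Finset.mul_sum]
  rw [intervalIntegral.integral_finsetSum]
  · refine Finset.sum_congr rfl fun i _ => ?_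
    rw [coeff_int2, ← intervalIntegral.integral_const_mul]
    congr 1; ext s; ring
  · intro i _
    apply Continuous.intervalIntegrable
    simp only [inv3, coeff_mk]; fun_prop

lemma norm_comb {s : ℝ} (hs : s ∈ Set.Icc (0:ℝ) 1) {b c : ℂ} (hb : ‖b‖ ≤ 1) (hc : ‖c‖ ≤ 1) :
    ‖(s : ℂ) * b + (1 - (s : ℂ)) * c‖ ≤ 1 := by
  have h1 : ‖(s : ℂ)‖ = s := by simp [abs_of_nonneg hs.1]
  have h2 : ‖(1 - (s : ℂ))‖ = 1 - s := by
    rw [← Complex.ofReal_one, ← Complex.ofReal_sub, Complex.norm_real, Real.norm_eq_abs,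
      abs_of_nonneg (by linarith [hs.2])]
  refine (norm_add_le _ _).trans ?_
  rw [norm_mul, norm_mul, h1, h2]
  nlinarith [hs.1, hs.2]

lemma re_int_le {φ : ℝ → ℂ} (hφ : Continuous φ) {ψ : ℝ → ℝ} (hψ : Continuous ψ) {M : ℝ}
    (h : ∀ s ∈ Set.Icc (0:ℝ) 1, (φ s).re ≤ ψ s) (hM : ∫ s in (0:ℝ)..1, ψ s = M) :
    (∫ s in (0:ℝ)..1, φ s).re ≤ M := by
  have e : (∫ s in (0:ℝ)..1, φ s).re = ∫ s in (0:ℝ)..1, (φ s).re := by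
    have := Complex.reCLM.intervalIntegral_comp_comm (hφ.intervalIntegrable (μ := MeasureTheory.volume) 0 1)
    simpa using this.symm
  rw [e, ← hM]
  apply intervalIntegral.integral_mono_on (by norm_num)
  · exact (Complex.continuous_re.comp hφ).intervalIntegrable _ _
  · exact hψ.intervalIntegrable _ _
  · exact h

lemma dirichlet (D d) (M : ℝ) (h : ∀ w : ℂ, ‖w‖ ≤ 1 → (ell D d (inv3 w)).re ≤ M) (a b c : ℂ)
    (ha : ‖a‖ ≤ 1) (hb : ‖b‖ ≤ 1) (hc : ‖c‖ ≤ 1) :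
    (ell D d (geom b * geom c * geom a)).re ≤ M := by
  have A : ∀ w : ℂ, ‖w‖ ≤ 1 → (ell D d (inv2 w * geom a)).re ≤ M := by
    intro w hw
    rw [ell_int2]
    have := ell_inv3_cont D d
    refine re_int_le (ψ := fun s => 2 * s * M)
      ((by fun_prop : Continuous fun s : ℝ => (2 * s : ℂ)).mul (this.comp (by fun_prop :
        Continuous fun s : ℝ => (s : ℂ) * w + (1 - (s : ℂ)) * a))) (by fun_prop) ?_ ?_
    · intro s hs
      have h1 := h _ (norm_comb hs hw ha)
      have : ((2 * s : ℂ) * ell D d (inv3 ((s : ℂ) * w + (1 - (s : ℂ)) * a))).re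
        = 2 * s * (ell D d (inv3 ((s : ℂ) * w + (1 - (s : ℂ)) * a))).re := by
        rw [← Complex.re_ofReal_mul]; push_cast; rfl
      refine this.le.trans ?_
      exact mul_le_mul_of_nonneg_left h1 (by linarith [hs.1])
    · simp_rw [show ∀ s : ℝ, 2 * s * M = (2 * M) * s from fun s => by ring]
      rw [intervalIntegral.integral_const_mul, integral_id]; ring
  obtain ⟨d', hd'⟩ := ell_shift D d (geom a)
  rw [hd', ell_int1]
  have := ell_inv2_cont D d'
  refine re_int_le (ψ := fun s => M) (this.comp (by fun_prop :
        Continuous fun s : ℝ => (s : ℂ) * b + (1 - (s : ℂ)) * c)) (by fun_prop) ?_ (by simp)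
  intro s hs
  refine (congrArg Complex.re (hd' _)).symm.le.trans ?_
  exact A _ (norm_comb hs hb hc)

lemma disc_of_circle (D d) (M : ℝ) (h : ∀ w : ℂ, ‖w‖ = 1 → (ell D d (inv3 w)).re ≤ M) (w : ℂ)
    (hw : ‖w‖ ≤ 1) : (ell D d (inv3 w)).re ≤ M := by
  have hd : Differentiable ℂ fun w => Complex.exp (ell D d (inv3 w)) := (ell_inv3_diff D d).cexp
  have := Complex.norm_le_of_forall_mem_frontier_norm_le (U := Metric.ball (0:ℂ) 1)
    Metric.isBounded_ball hd.diffContOnCl (C := Real.exp M) (z := w) (by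
      intro z hz
      rw [frontier_ball _ one_ne_zero, mem_sphere_zero_iff_norm] at hz
      rw [Complex.norm_exp]
      exact Real.exp_le_exp.2 (h z hz)) (by
      rw [closure_ball _ one_ne_zero]; simpa using hw)
  rw [Complex.norm_exp] at this
  exact Real.exp_le_exp.1 this

/-- Convex hull reduction. -/
lemma hull {K1 K2 K3 : PowerSeries ℂ} (h1 : Mom K1) (h2 : Mom K2) (h3 : Mom K3) (c : ℂ)
    (hc : ‖c‖ = 1) (D d) (M : ℝ)
    (h : ∀ x y : ℂ, ‖x‖ = 1 → ‖y‖ = 1 → (ell D d (inv3 y * (1 + C x * X))).re ≤ M) :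
    (ell D d ((C (1 + c) * K1 - C c) * (K2 * K3))).re ≤ M := by
  refine h1.mul_affine c _ D d M fun y hy => ?_
  rw [affine_geom, show (1 + C (c * y) * X) * geom y * (K2 * K3) =
    K2 * (K3 * ((1 + C (c * y) * X) * geom y)) by ring]
  refine h2.mul _ D d M fun b hb => ?_
  rw [show geom b * (K3 * ((1 + C (c * y) * X) * geom y)) =
    K3 * (geom b * ((1 + C (c * y) * X) * geom y)) by ring]
  refine h3.mul _ D d M fun b' hb' => ?_
  rw [show geom b' * (geom b * ((1 + C (c * y) * X) * geom y)) =
    (geom b' * geom b * geom y) * (1 + C (c * y) * X) by ring]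
  obtain ⟨d', hd'⟩ := ell_shift D d (1 + C (c * y) * X)
  rw [hd']
  refine dirichlet D d' M (disc_of_circle D d' M fun w hw => ?_) _ _ _ hy.le hb'.le hb.le
  rw [← hd']
  exact h _ _ (by simp [hc, hy]) hw

end Zal

namespace Zal
open PowerSeries Finset Real

noncomputable def ser (F : ℂ → ℂ) : PowerSeries ℂ := PowerSeries.mk (taylorCoeff F)

lemma cont_of_diff {F : ℂ → ℂ} (hF : DifferentiableOn ℂ F (Metric.ball 0 1)) (n : WithTop ℕ∞) :
    ContDiffAt ℂ n F 0 :=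
  (hF.analyticAt (Metric.ball_mem_nhds 0 one_pos)).contDiffAt

lemma ser_mul {F G : ℂ → ℂ} (hF : DifferentiableOn ℂ F (Metric.ball 0 1))
    (hG : DifferentiableOn ℂ G (Metric.ball 0 1)) : ser (F * G) = ser F * ser G := by
  ext N
  simp only [ser, coeff_mk, coeff_mul, Finset.Nat.sum_antidiagonal_eq_sum_range_succ_mk]
  unfold taylorCoeff
  rw [iteratedDeriv_mul (cont_of_diff hF _) (cont_of_diff hG _), Finset.sum_div]
  refine Finset.sum_congr rfl fun i hi => ?_
  rw [Finset.mem_range] at hi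
  have h1 : (N.choose i : ℂ) * i.factorial * (N - i).factorial = N.factorial := by
    exact_mod_cast Nat.choose_mul_factorial_mul_factorial (by omega : i ≤ N)
  have h2 : (i.factorial : ℂ) ≠ 0 := by exact_mod_cast Nat.factorial_ne_zero _
  have h3 : ((N - i).factorial : ℂ) ≠ 0 := by exact_mod_cast Nat.factorial_ne_zero _
  have h4 : (N.choose i : ℂ) ≠ 0 := by
    exact_mod_cast (Nat.choose_pos (by omega : i ≤ N)).ne'
  rw [← h1]
  field_simp

lemma ser_congr {F G : ℂ → ℂ} (h : Set.EqOn F G (Metric.ball 0 1)) : ser F = ser G := by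
  ext N
  simp only [ser, coeff_mk, taylorCoeff]
  rw [Filter.EventuallyEq.iteratedDeriv_eq N
    (Filter.eventuallyEq_of_mem (Metric.ball_mem_nhds (0:ℂ) one_pos) h)]

lemma taylor_zero (F : ℂ → ℂ) : taylorCoeff F 0 = F 0 := by simp [taylorCoeff]

lemma ser_affine {F : ℂ → ℂ} (hF : DifferentiableOn ℂ F (Metric.ball 0 1)) (a b : ℂ) :
    ser (fun z => a * F z - b) = C a * ser F - C b := by
  ext N
  simp only [ser, coeff_mk, map_sub, coeff_C_mul, coeff_C]
  cases N with
  | zero => simp [taylor_zero]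
  | succ N =>
    unfold taylorCoeff
    rw [iteratedDeriv_fun_sub (by
      exact contDiffAt_const.mul (cont_of_diff hF _)) contDiffAt_const]
    rw [iteratedDeriv_const_mul_field]
    simp [iteratedDeriv_const, mul_div_assoc]

lemma avg_neg {F : ℂ → ℂ} (hF : DifferentiableOn ℂ F (Metric.ball 0 1)) {r : ℝ} (h0 : 0 < r)
    (h1 : r < 1) (i : ℕ) :
    circleAverage (fun z => ((r : ℂ) / z) ^ i * F z) 0 r = r ^ i * taylorCoeff F i := by
  have hF' : DifferentiableOn ℂ F (Metric.closedBall 0 r) :=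
    hF.mono (Metric.closedBall_subset_ball h1)
  have := hF'.circleIntegral_one_div_sub_center_pow_smul h0 i
  rw [circleAverage_eq_circleIntegral h0.ne']
  have e : (fun z : ℂ => (z - 0)⁻¹ • (((r : ℂ) / z) ^ i * F z)) =
      fun z => (r : ℂ) ^ i • ((1 / (z - 0) ^ (i + 1)) • F z) := by
    ext z
    simp only [smul_eq_mul, sub_zero, div_eq_mul_inv, mul_pow, inv_pow, pow_succ, mul_inv, one_mul]
    ring
  rw [e, circleIntegral.integral_smul, this]
  unfold taylorCoeff
  have := Complex.two_pi_I_ne_zero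
  simp only [smul_eq_mul]
  field_simp

lemma avg_pos {F : ℂ → ℂ} (hF : DifferentiableOn ℂ F (Metric.ball 0 1)) {r : ℝ} (h0 : 0 < r)
    (h1 : r < 1) (i : ℕ) :
    circleAverage (fun z => (z / (r : ℂ)) ^ i * F z) 0 r = 0 ^ i * F 0 := by
  have hF' : DifferentiableOn ℂ F (Metric.closedBall 0 r) :=
    hF.mono (Metric.closedBall_subset_ball h1)
  rw [DiffContOnCl.circleAverage]
  · simp
  · rw [abs_of_pos h0]
    apply DifferentiableOn.diffContOnCl
    rw [closure_ball _ h0.ne']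
    refine DifferentiableOn.mul ?_ hF'
    fun_prop

lemma poly_ineq {F : ℂ → ℂ} (hF : DifferentiableOn ℂ F (Metric.ball 0 1))
    (hre : ∀ z ∈ Metric.ball (0:ℂ) 1, 0 ≤ (F z).re) (D : ℕ) (d : ℕ → ℂ) (M : ℝ)
    (hM : ∀ y : ℂ, ‖y‖ = 1 → (ell D d (geom y)).re ≤ M) (hF0 : F 0 = 1) {r : ℝ} (h0 : 0 < r)
    (h1 : r < 1) :
    (∑ i ∈ range (D + 1), d i * (r ^ i * taylorCoeff F i)).re + (d 0).re ≤ 2 * M := by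
  have hc : ContinuousOn F (Metric.sphere 0 |r|) := by
    rw [abs_of_pos h0]
    exact hF.continuousOn.mono (Metric.sphere_subset_closedBall.trans
      (Metric.closedBall_subset_ball h1))
  have hne : ∀ z ∈ Metric.sphere (0:ℂ) |r|, z ≠ 0 := by
    intro z hz
    rw [mem_sphere_zero_iff_norm, abs_of_pos h0] at hz
    rw [← norm_pos_iff, hz]; exact h0
  have i1 : ∀ i, CircleIntegrable (fun z => ((r : ℂ) / z) ^ i * F z) 0 r := by
    intro i
    apply ContinuousOn.circleIntegrable'
    refine ContinuousOn.mul (ContinuousOn.pow (ContinuousOn.div continuousOn_const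
      continuousOn_id hne) i) hc
  have i2 : ∀ i, CircleIntegrable (fun z => (z / (r : ℂ)) ^ i * F z) 0 r := by
    intro i
    apply ContinuousOn.circleIntegrable'
    refine ContinuousOn.mul (by fun_prop) hc
  have j1 : ∀ i, CircleIntegrable (fun z => d i • (((r : ℂ) / z) ^ i * F z)) 0 r :=
    fun i => (i1 i).const_smul
  have j2 : ∀ i, CircleIntegrable (fun z => (starRingEnd ℂ (d i)) • ((z / (r : ℂ)) ^ i * F z)) 0 r :=
    fun i => (i2 i).const_smul
  let T : ℂ → ℂ := fun z => ∑ i ∈ range (D + 1), (d i • (((r : ℂ) / z) ^ i * F z) +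
    (starRingEnd ℂ (d i)) • ((z / (r : ℂ)) ^ i * F z))
  have iT : CircleIntegrable T 0 r := by
    have : T = ∑ i ∈ range (D + 1), fun z => (d i • (((r : ℂ) / z) ^ i * F z) +
      (starRingEnd ℂ (d i)) • ((z / (r : ℂ)) ^ i * F z)) := by
      ext z; simp [T, Finset.sum_apply]
    rw [this]
    exact CircleIntegrable.sum _ fun i _ => (j1 i).add (j2 i)
  have iF : CircleIntegrable F 0 r := hc.circleIntegrable'
  have aT : circleAverage T 0 r = ∑ i ∈ range (D + 1), (d i * (r ^ i * taylorCoeff F i) +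
      (starRingEnd ℂ (d i)) * (0 ^ i * F 0)) := by
    rw [circleAverage_fun_sum]
    · refine Finset.sum_congr rfl fun i _ => ?_
      rw [circleAverage_fun_add (j1 i) (j2 i),
        circleAverage_fun_smul, circleAverage_fun_smul, avg_neg hF h0 h1, avg_pos hF h0 h1]
      rfl
    · exact fun i _ => (j1 i).add (j2 i)
  have jF : CircleIntegrable (fun z => ((2 * M : ℝ) : ℂ) • F z) 0 r := iF.const_smul
  have aF : circleAverage F 0 r = F 0 := by
    simpa using avg_pos hF h0 h1 0
  have aW : circleAverage (fun z => ((2 * M : ℝ) : ℂ) • F z - T z) 0 r =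
      ((2 * M : ℝ) : ℂ) * F 0 - ∑ i ∈ range (D + 1), (d i * (r ^ i * taylorCoeff F i) +
      (starRingEnd ℂ (d i)) * (0 ^ i * F 0)) := by
    rw [circleAverage_fun_sub jF iT, circleAverage_fun_smul, aT, aF]
    rfl
  have iW : CircleIntegrable (fun z => ((2 * M : ℝ) : ℂ) • F z - T z) 0 r :=
    (iF.const_smul).sub iT
  have key := Complex.reCLM.circleAverage_comp_comm iW
  have nn : 0 ≤ circleAverage (Complex.reCLM ∘ fun z => ((2 * M : ℝ) : ℂ) • F z - T z) 0 r := by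
    apply circleAverage_nonneg_of_nonneg
    intro z hz
    have hz0 := hne z hz
    rw [mem_sphere_zero_iff_norm, abs_of_pos h0] at hz
    have hr : (r : ℂ) ≠ 0 := by exact_mod_cast h0.ne'
    have hy : ‖(r : ℂ) / z‖ = 1 := by
      rw [norm_div, hz, Complex.norm_real, Real.norm_of_nonneg h0.le, div_self h0.ne']
    have hconj : z / (r : ℂ) = starRingEnd ℂ ((r : ℂ) / z) := by
      rw [← Complex.inv_eq_conj hy, inv_div]
    have h3 := hM _ hy
    have hT : T z = ((2 * (ell D d (geom ((r : ℂ) / z))).re : ℝ) : ℂ) * F z := by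
      simp only [T, ell, geom, coeff_mk]
      rw [← Complex.add_conj, map_sum, ← Finset.sum_add_distrib, Finset.sum_mul]
      refine Finset.sum_congr rfl fun i _ => ?_
      rw [hconj, map_mul, map_pow, smul_eq_mul, smul_eq_mul]
      ring
    have hz1 : 0 ≤ (F z).re := hre z (by simpa [hz] using h1)
    simp only [Function.comp_apply, hT, Complex.reCLM_apply, smul_eq_mul, Complex.sub_re,
      Complex.re_ofReal_mul]
    nlinarith
  rw [key, aW, hF0, Finset.sum_add_distrib] at nn
  have e2 : ∑ i ∈ range (D + 1), (starRingEnd ℂ (d i)) * (0 ^ i * (1:ℂ)) = starRingEnd ℂ (d 0) := by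
    rw [Finset.sum_eq_single 0]
    · simp
    · intro i _ hi; simp [hi]
    · simp
  rw [e2] at nn
  simp only [Complex.reCLM_apply, Complex.sub_re, Complex.add_re, mul_one, Complex.ofReal_re,
    Complex.conj_re] at nn
  linarith

lemma mom_of_re {k : ℂ → ℂ} (hk : DifferentiableOn ℂ k (Metric.ball 0 1))
    (hre : ∀ z ∈ Metric.ball (0:ℂ) 1, 1 / 2 ≤ (k z).re) (hk0 : k 0 = 1) : Mom (ser k) := by
  intro D d M hM
  let F : ℂ → ℂ := fun z => 2 * k z - 1
  have hF : DifferentiableOn ℂ F (Metric.ball 0 1) := (hk.const_mul 2).sub_const 1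
  have hFre : ∀ z ∈ Metric.ball (0:ℂ) 1, 0 ≤ (F z).re := by
    intro z hz
    have := hre z hz
    simp [F]; linarith
  have hF0 : F 0 = 1 := by simp [F, hk0]; norm_num
  have hs := ser_affine hk 2 1
  have hcoef : ∀ i, taylorCoeff F i = 2 * taylorCoeff k i - if i = 0 then 1 else 0 := by
    intro i
    have := congrArg (coeff i) hs
    simpa [ser, coeff_C, coeff_mk, F, coeff_one] using this
  have lim : Filter.Tendsto (fun r : ℝ => (∑ i ∈ range (D + 1), d i * ((r:ℂ) ^ i * taylorCoeff F i)).re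
      + (d 0).re) (nhdsWithin 1 (Set.Iio 1)) (nhds ((∑ i ∈ range (D + 1), d i * (((1:ℝ):ℂ) ^ i * taylorCoeff F i)).re
      + (d 0).re)) := by
    apply tendsto_nhdsWithin_of_tendsto_nhds
    apply Continuous.tendsto (f := fun r : ℝ => (∑ i ∈ range (D + 1), d i * ((r:ℂ) ^ i * taylorCoeff F i)).re
      + (d 0).re)
    have : Continuous fun r : ℝ => (∑ i ∈ range (D + 1), d i * ((r:ℂ) ^ i * taylorCoeff F i)) := by
      fun_prop
    exact (Complex.continuous_re.comp this).add continuous_const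
  have hle := le_of_tendsto lim (b := 2 * M) (by
    filter_upwards [Ioo_mem_nhdsLT (show (0:ℝ) < 1 by norm_num)] with r hr
    exact poly_ineq hF hFre D d M hM hF0 hr.1 hr.2)
  have e : ∑ i ∈ range (D + 1), d i * (((1:ℝ):ℂ) ^ i * taylorCoeff F i) =
      2 * ell D d (ser k) - d 0 := by
    have e2 : ∑ i ∈ range (D + 1), d i * (if i = 0 then 1 else 0 : ℂ) = d 0 := by simp
    rw [← e2, ell, Finset.mul_sum, ← Finset.sum_sub_distrib]
    refine Finset.sum_congr rfl fun i _ => ?_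
    rw [hcoef]; simp only [ser, coeff_mk, Complex.ofReal_one, one_pow, one_mul]; ring
  rw [e] at hle
  simp at hle
  linarith

end Zal

namespace Zal
open Set

lemma jack {w : ℂ → ℂ} (hw : DifferentiableOn ℂ w (ball 0 1)) (hw0 : w 0 = 0) {z1 : ℂ}
    (hz1 : z1 ∈ ball (0:ℂ) 1) (h1 : 1 ≤ ‖w z1‖) :
    ∃ z0 ∈ ball (0:ℂ) 1, z0 ≠ 0 ∧ ‖w z0‖ = 1 ∧ ∃ m : ℝ, 1 ≤ m ∧ z0 * deriv w z0 = m * w z0 := by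
  have hz1' : ‖z1‖ < 1 := by simpa using hz1
  have hcont : ContinuousOn (fun z => ‖w z‖) (closedBall (0:ℂ) ‖z1‖) :=
    (hw.continuousOn.mono (closedBall_subset_ball hz1')).norm
  have hK : IsCompact (closedBall (0:ℂ) ‖z1‖ ∩ (fun z => ‖w z‖) ⁻¹' Ici 1) :=
    (isCompact_closedBall _ _).of_isClosed_subset
      (hcont.preimage_isClosed_of_isClosed isClosed_closedBall isClosed_Ici) inter_subset_left
  obtain ⟨z0, hz0K, hmin⟩ := hK.exists_isMinOn ⟨z1, by simp, h1⟩ continuous_norm.continuousOn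
  have hz0le : ‖z0‖ ≤ ‖z1‖ := by simpa using hz0K.1
  have hz0lt : ‖z0‖ < 1 := hz0le.trans_lt hz1'
  have hge : 1 ≤ ‖w z0‖ := hz0K.2
  have hz0 : z0 ≠ 0 := by
    rintro rfl
    rw [hw0, norm_zero] at hge; linarith
  have hpos : 0 < ‖z0‖ := norm_pos_iff.2 hz0
  have hin : ∀ z : ℂ, ‖z‖ < ‖z0‖ → ‖w z‖ < 1 := by
    intro z hz
    by_contra hcon
    push Not at hcon
    have := hmin (show z ∈ _ from ⟨by simpa using (hz.le.trans hz0le), hcon⟩)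
    simp only [mem_ofPred_eq] at this
    linarith
  have hcl : ∀ z : ℂ, ‖z‖ ≤ ‖z0‖ → ‖w z‖ ≤ 1 := by
    intro z hz
    have hcb : closure (ball (0:ℂ) ‖z0‖) = closedBall 0 ‖z0‖ := closure_ball _ hpos.ne'
    refine le_on_closure (s := ball (0:ℂ) ‖z0‖) (f := fun z => ‖w z‖) (g := fun _ => 1) ?_ ?_
      continuousOn_const ?_
    · intro x hx; exact (hin x (by simpa using hx)).le
    · rw [hcb]; exact hcont.mono (closedBall_subset_closedBall hz0le)
    · rw [hcb]; simpa using hz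
  have heq : ‖w z0‖ = 1 := le_antisymm (hcl z0 le_rfl) hge
  have hsch : ∀ z : ℂ, ‖z‖ < ‖z0‖ → ‖w z‖ ≤ ‖z‖ / ‖z0‖ := by
    intro z hz
    have := Complex.dist_le_div_mul_dist_of_mapsTo_ball (f := w) (c := 0) (z := z) (R₁ := ‖z0‖)
      (R₂ := 1) (hw.mono (ball_subset_ball hz0lt.le)) (by
        intro x hx
        simpa [hw0] using (hin x (by simpa using hx)).le) (by simpa using hz)
    simpa [hw0, div_eq_inv_mul] using this
  have hmem : z0 ∈ ball (0:ℂ) 1 := by simpa using hz0lt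
  have hd : HasDerivAt w (deriv w z0) z0 :=
    ((hw z0 hmem).differentiableAt (isOpen_ball.mem_nhds hmem)).hasDerivAt
  -- radial derivative
  have hrad : HasDerivAt (fun s : ℝ => w ((s : ℂ) * z0)) (z0 * deriv w z0) 1 := by
    have a1 : HasDerivAt (fun s : ℂ => w (s * z0)) (deriv w z0 * z0) ((1:ℝ):ℂ) := by
      have a2 : HasDerivAt (fun s : ℂ => s * z0) z0 ((1:ℝ):ℂ) := by
        simpa using (hasDerivAt_id ((1:ℝ):ℂ)).mul_const z0
      exact HasDerivAt.comp ((1:ℝ):ℂ) (h₂ := w) (by simpa using hd) a2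
    rw [mul_comm]
    exact a1.comp_ofReal
  have hrad2 := hrad.norm_sq.sub ((hasDerivAt_id (1:ℝ)).pow 2)
  have h_re : 1 ≤ (starRingEnd ℂ (w z0) * (z0 * deriv w z0)).re := by
    have ht := (hasDerivAt_iff_tendsto_slope_left_right.1 hrad2).1
    have hnn := ge_of_tendsto ht (b := 0) (by
      filter_upwards [Ioo_mem_nhdsLT (show (0:ℝ) < 1 by norm_num)] with s hs
      have hsn : ‖(s : ℂ) * z0‖ = s * ‖z0‖ := by
        rw [norm_mul, Complex.norm_real, Real.norm_of_nonneg hs.1.le]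
      have hb := hsch ((s : ℂ) * z0) (by rw [hsn]; nlinarith [hs.2])
      rw [hsn, mul_div_assoc, div_self hpos.ne', mul_one] at hb
      have hb2 : ‖w ((s : ℂ) * z0)‖ ^ 2 ≤ s ^ 2 := pow_le_pow_left₀ (norm_nonneg _) hb 2
      rw [slope_def_field]
      apply div_nonneg_of_nonpos
      · simp [heq]; linarith
      · linarith [hs.2])
    simp [Complex.inner] at hnn
    simp
    linarith
  have htan : HasDerivAt (fun s : ℝ => w (Complex.exp (s * Complex.I) * z0))
      (Complex.I * (z0 * deriv w z0)) 0 := by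
    have a1 : HasDerivAt (fun s : ℂ => w (Complex.exp (s * Complex.I) * z0))
        (deriv w z0 * (Complex.exp (((0:ℝ):ℂ) * Complex.I) * (1 * Complex.I) * z0)) ((0:ℝ):ℂ) := by
      have a2 : HasDerivAt (fun s : ℂ => Complex.exp (s * Complex.I) * z0)
          (Complex.exp (((0:ℝ):ℂ) * Complex.I) * (1 * Complex.I) * z0) ((0:ℝ):ℂ) :=
        (((hasDerivAt_id ((0:ℝ):ℂ)).mul_const Complex.I).cexp).mul_const z0
      exact HasDerivAt.comp ((0:ℝ):ℂ) (h₂ := w) (by simpa using hd) a2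
    have := a1.comp_ofReal
    convert this using 1
    simp; ring
  have h_im : (starRingEnd ℂ (w z0) * (Complex.I * (z0 * deriv w z0))).re = 0 := by
    have hmax : IsLocalMax (fun s : ℝ => ‖w (Complex.exp (s * Complex.I) * z0)‖ ^ 2) 0 := by
      refine Filter.Eventually.of_forall fun s => ?_
      have : ‖w (Complex.exp (s * Complex.I) * z0)‖ ≤ 1 := hcl _ (by
        rw [norm_mul, Complex.norm_exp_ofReal_mul_I, one_mul])
      simp only [Complex.ofReal_zero, zero_mul, Complex.exp_zero, one_mul, heq]
      nlinarith [norm_nonneg (w (Complex.exp (s * Complex.I) * z0))]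
    have := hmax.hasDerivAt_eq_zero htan.norm_sq
    simp [Complex.inner] at this
    simp
    linarith
  refine ⟨z0, hmem, hz0, heq, (starRingEnd ℂ (w z0) * (z0 * deriv w z0)).re, h_re, ?_⟩
  have hreal : (((starRingEnd ℂ (w z0) * (z0 * deriv w z0)).re : ℝ) : ℂ) =
      starRingEnd ℂ (w z0) * (z0 * deriv w z0) := by
    apply Complex.ext
    · simp
    · rw [Complex.ofReal_im]
      have : (starRingEnd ℂ (w z0) * (Complex.I * (z0 * deriv w z0))).re =
        - (starRingEnd ℂ (w z0) * (z0 * deriv w z0)).im := by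
        rw [show starRingEnd ℂ (w z0) * (Complex.I * (z0 * deriv w z0)) =
          Complex.I * (starRingEnd ℂ (w z0) * (z0 * deriv w z0)) by ring, Complex.I_mul_re]
      linarith
  rw [hreal, mul_right_comm, mul_comm (starRingEnd ℂ (w z0)), Complex.mul_conj,
    Complex.normSq_eq_norm_sq, heq]
  simp

lemma real_ineq (n lam : ℝ) (hn : 2 ≤ n)
    (hlam : (3 * n + Real.sqrt (5 * n ^ 2 - 4 * n)) / (n ^ 2 + n) ≤ lam) (u s v w : ℝ)
    (h1 : u ^ 2 + s ^ 2 = 1) (h2 : v ^ 2 + w ^ 2 = 1) :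
    lam * ((n + 1) / 2 * u + (n - 1) / 2 * v) ^ 2 - (n * (u * u - s * s) + (n - 1) * (u * v - s * w))
      ≤ lam * n ^ 2 - (2 * n - 1) := by
  rw [div_le_iff₀ (by positivity)] at hlam
  have hs0 := Real.sqrt_nonneg (5 * n ^ 2 - 4 * n)
  have hs := Real.sq_sqrt (show 0 ≤ 5 * n ^ 2 - 4 * n by nlinarith)
  set R := Real.sqrt (5 * n ^ 2 - 4 * n)
  have hl3 : 3 ≤ lam * (n + 1) := by
    have : 3 * n ≤ lam * (n + 1) * n := by linarith
    exact le_of_mul_le_mul_right this (by linarith)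
  have hlpos : 0 < lam := by
    by_contra hc; push Not at hc; nlinarith
  have he : 0 < lam * n - 1 := by nlinarith
  have hdet : 0 ≤ lam ^ 2 * n * (n + 1) - 6 * n * lam + 4 := by
    have h3 : R ^ 2 ≤ (lam * (n ^ 2 + n) - 3 * n) ^ 2 :=
      pow_le_pow_left₀ hs0 (by linarith) 2
    rw [hs] at h3
    have h4 : 0 ≤ (lam ^ 2 * n * (n + 1) - 6 * n * lam + 4) * (n * (n + 1)) := by nlinarith
    exact nonneg_of_mul_nonneg_left h4 (by positivity)
  set e := lam * n - 1 with hedef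
  -- A + B
  have hAB : 0 ≤ lam * n * (n + 1) - (5 * n - 1) - (n - 1) / e := by
    rw [sub_nonneg, div_le_iff₀ he, hedef]
    nlinarith
  have hB : 0 ≤ lam * (n ^ 2 - 1) / 4 - (n - 1) / 2 := by nlinarith
  have hsq : 0 ≤ (s - e * w) ^ 2 / e := by positivity
  have hsq' : (s - e * w) ^ 2 / e = s ^ 2 / e - 2 * s * w + e * w ^ 2 := by field_simp; ring
  have hss : s ^ 2 = 1 - u ^ 2 := by linarith
  have hww : w ^ 2 = 1 - v ^ 2 := by linarith
  have key : lam * n ^ 2 - (2 * n - 1) - (lam * ((n + 1) / 2 * u + (n - 1) / 2 * v) ^ 2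
      - (n * (u * u - s * s) + (n - 1) * (u * v - s * w)))
      = (lam * n * (n + 1) - (5 * n - 1) - (n - 1) / e) / 2 * s ^ 2
        + (lam * (n ^ 2 - 1) / 4 - (n - 1) / 2) * (u - v) ^ 2
        + (n - 1) / 2 * ((s - e * w) ^ 2 / e) := by
    rw [hsq', show u * u - s * s = u ^ 2 - s ^ 2 by ring, hww, hss, hedef]
    ring
  have : 0 ≤ (lam * n * (n + 1) - (5 * n - 1) - (n - 1) / e) / 2 * s ^ 2
        + (lam * (n ^ 2 - 1) / 4 - (n - 1) / 2) * (u - v) ^ 2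
        + (n - 1) / 2 * ((s - e * w) ^ 2 / e) := by
    have : 0 ≤ (n - 1) / 2 := by linarith
    positivity
  linarith

end Zal

namespace Zal
open Set

lemma half_re {w : ℂ} (hw1 : w ≠ 1) : 2 * ((1 - w)⁻¹).re - 1 = (1 - ‖w‖ ^ 2) / Complex.normSq (1 - w) := by
  have : Complex.normSq (1 - w) ≠ 0 := by
    rw [Ne, Complex.normSq_eq_zero, sub_eq_zero]; exact fun h => hw1 h.symm
  rw [Complex.inv_re, ← Complex.normSq_eq_norm_sq]
  field_simp
  simp [Complex.normSq_apply]
  ring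

lemma starlike_sqrt {g : ℂ → ℂ} (hg : IsStarlikeFn g) :
    ∃ k : ℂ → ℂ, DifferentiableOn ℂ k (ball 0 1) ∧ k 0 = 1 ∧
      (∀ z ∈ ball (0:ℂ) 1, 1 / 2 ≤ (k z).re) ∧ ∀ z ∈ ball (0:ℂ) 1, g z = z * (k z * k z) := by
  obtain ⟨hgd, hg0, hg1, hst⟩ := hg
  have hnhds : ball (0:ℂ) 1 ∈ nhds (0:ℂ) := ball_mem_nhds 0 one_pos
  set h : ℂ → ℂ := dslope g 0 with hh
  have hd : DifferentiableOn ℂ h (ball 0 1) := (Complex.differentiableOn_dslope hnhds).2 hgd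
  have hh0 : h 0 = 1 := by simp [hh, hg1]
  have hgh : ∀ z, g z = z * h z := by
    intro z
    have := sub_smul_dslope g 0 z
    simpa [hg0] using this.symm
  have hne : ∀ z ∈ ball (0:ℂ) 1, h z ≠ 0 := by
    intro z hz h0
    by_cases hz0 : z = 0
    · rw [hz0, hh0] at h0; exact one_ne_zero h0
    · have := hst z ⟨hz, hz0⟩
      rw [hgh z, h0] at this
      simp at this
  have hder : ∀ z ∈ ball (0:ℂ) 1, HasDerivAt h (deriv h z) z := fun z hz =>
    ((hd z hz).differentiableAt (isOpen_ball.mem_nhds hz)).hasDerivAt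
  have hφ : DifferentiableOn ℂ (fun z => deriv h z / h z) (ball 0 1) :=
    (hd.deriv isOpen_ball).div hd hne
  obtain ⟨L, hL0, hL⟩ := (hφ.isExactOn_ball).with_val_at 0 0
  have hLd : DifferentiableOn ℂ L (ball 0 1) := fun z hz =>
    (hL z hz).differentiableAt.differentiableWithinAt
  have hexp : ∀ z ∈ ball (0:ℂ) 1, h z = Complex.exp (L z) := by
    have hq : ∀ z ∈ ball (0:ℂ) 1, HasDerivAt (fun z => h z * Complex.exp (-L z)) 0 z := by
      intro z hz
      have := hne z hz
      have e : deriv h z * Complex.exp (-L z) +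
          h z * (Complex.exp (-L z) * -(deriv h z / h z)) = 0 := by
        field_simp
        ring
      exact HasDerivAt.congr_deriv ((hder z hz).mul ((hL z hz).neg.cexp)) e
    intro z hz
    have := isOpen_ball.is_const_of_deriv_eq_zero (convex_ball (0:ℂ) 1).isPreconnected
      (fun z hz => (hq z hz).differentiableAt.differentiableWithinAt)
      (fun z hz => (hq z hz).deriv) hz (mem_ball_self one_pos)
    rw [hL0, hh0, Complex.exp_neg] at this
    have h2 := Complex.exp_ne_zero (L z)
    field_simp at this
    simpa using this
  -- the Schwarz function
  let w : ℂ → ℂ := fun z => 1 - Complex.exp (-(L z / 2))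
  have hwd : ∀ z ∈ ball (0:ℂ) 1, HasDerivAt w ((1 - w z) * (deriv h z / h z) / 2) z := by
    intro z hz
    have e : -(Complex.exp (-(L z / 2)) * -((deriv h z / h z) / 2)) =
        (1 - w z) * (deriv h z / h z) / 2 := by
      simp only [w]
      ring
    exact HasDerivAt.congr_deriv (((hL z hz).div_const 2).neg.cexp.const_sub 1) e
  have hwD : DifferentiableOn ℂ w (ball 0 1) := fun z hz =>
    (hwd z hz).differentiableAt.differentiableWithinAt
  have hw0 : w 0 = 0 := by simp [w, hL0]
  have hw1 : ∀ z, w z ≠ 1 := by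
    intro z hz
    have : Complex.exp (-(L z / 2)) = 0 := by simpa [w] using hz
    exact Complex.exp_ne_zero _ this
  have hlt : ∀ z ∈ ball (0:ℂ) 1, ‖w z‖ < 1 := by
    intro z1 hz1
    by_contra hcon
    push Not at hcon
    obtain ⟨z, hz, hz0, hn1, m, hm, hjack⟩ := jack hwD hw0 hz1 hcon
    have hpos := hst z ⟨hz, hz0⟩
    have hgd' : deriv g z = h z + z * deriv h z := by
      have : g = fun z => z * h z := funext hgh
      rw [this]
      have h3 : HasDerivAt (fun z => z * h z) (1 * h z + z * deriv h z) z :=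
        (hasDerivAt_id z).mul (hder z hz)
      rw [h3.deriv, one_mul]
    have hq : z * deriv g z / g z = 1 + z * (deriv h z / h z) := by
      rw [hgd', hgh z]
      have := hne z hz
      field_simp
    rw [(hwd z hz).deriv] at hjack
    have h1w : 1 - w z ≠ 0 := sub_ne_zero.2 (hw1 z).symm
    have hq2 : z * (deriv h z / h z) = m * (2 * (1 - w z)⁻¹ - 2) := by
      have : (1 - w z) * (z * (deriv h z / h z)) = 2 * m * w z := by
        linear_combination 2 * hjack
      have e : z * (deriv h z / h z) = 2 * m * w z / (1 - w z) := by
        rw [eq_div_iff h1w]; linear_combination this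
      rw [e]; field_simp; ring
    rw [hq, hq2, Complex.add_re, Complex.re_ofReal_mul] at hpos
    have hh := half_re (hw1 z)
    rw [hn1] at hh
    simp at hh hpos
    have : (2 * ((1 - w z)⁻¹).re - 2) = -1 := by simp; linarith
    simp at this
    rw [this] at hpos
    linarith
  refine ⟨fun z => Complex.exp (L z / 2), (hLd.div_const 2).cexp, by simp [hL0], ?_, ?_⟩
  · intro z hz
    have e : (1 - w z)⁻¹ = Complex.exp (L z / 2) := by
      simp [w, ← Complex.exp_neg]
    have h2 := half_re (hw1 z)
    rw [e] at h2
    have h3 : 0 ≤ (1 - ‖w z‖ ^ 2) / Complex.normSq (1 - w z) := by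
      apply div_nonneg _ (Complex.normSq_nonneg _)
      nlinarith [hlt z hz, norm_nonneg (w z)]
    show 1 / 2 ≤ (Complex.exp (L z / 2)).re
    linarith
  · intro z hz
    rw [hgh, hexp z hz, ← Complex.exp_add]
    congr 2; ring

lemma ctc_decomp {f : ℂ → ℂ} (hf : IsCloseToConvex f) :
    ∃ (c : ℂ) (κ k : ℂ → ℂ), ‖c‖ = 1 ∧ DifferentiableOn ℂ κ (ball 0 1) ∧
      DifferentiableOn ℂ k (ball 0 1) ∧ Mom (ser κ) ∧ Mom (ser k) ∧
      EqOn (deriv f) ((fun z => (1 + c) * κ z - c) * (k * k)) (ball 0 1) := by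
  obtain ⟨hfd, hf0, hf1, θ, g, hg, hre⟩ := hf
  obtain ⟨k, hkd, hk0, hkre, hgk⟩ := starlike_sqrt hg
  have hkne : ∀ z ∈ ball (0:ℂ) 1, k z ≠ 0 := by
    intro z hz h0
    have := hkre z hz
    rw [h0] at this; simp at this; linarith
  set E : ℂ := Complex.exp (θ * Complex.I) with hE
  have hEn : E = Real.cos θ + Real.sin θ * Complex.I := by
    rw [hE, Complex.exp_mul_I]; simp
  let p : ℂ → ℂ := fun z => deriv f z / (k z * k z)
  have hpd : DifferentiableOn ℂ p (ball 0 1) :=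
    (hfd.deriv isOpen_ball).div (hkd.mul hkd) fun z hz => mul_ne_zero (hkne z hz) (hkne z hz)
  have hp0 : p 0 = 1 := by simp [p, hf1, hk0]
  have hFre : ∀ z ∈ ball (0:ℂ) 1, z ≠ 0 → 0 < (E * p z).re := by
    intro z hz hz0
    have := hre z ⟨hz, hz0⟩
    rw [hgk z hz] at this
    convert this using 2
    have := hkne z hz
    simp only [p]
    field_simp
  have hE0 : (E * p 0).re = Real.cos θ := by rw [hp0, mul_one, hEn]; simp [-Complex.ofReal_cos, -Complex.ofReal_sin]
  have hcos : 0 < Real.cos θ := by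
    by_contra hc
    push Not at hc
    have hmax : IsMaxOn (norm ∘ fun z => Complex.exp (-(E * p z))) (ball (0:ℂ) 1) 0 := by
      intro z hz
      show ‖Complex.exp (-(E * p z))‖ ≤ ‖Complex.exp (-(E * p 0))‖
      by_cases hz0 : z = 0
      · rw [hz0]
      · rw [Complex.norm_exp, Complex.norm_exp, Complex.neg_re, Complex.neg_re, hE0]
        apply Real.exp_le_exp.2
        linarith [hFre z hz hz0]
    have hhalf : (1 / 2 : ℂ) ∈ ball (0:ℂ) 1 := by simp; norm_num
    have := Complex.norm_eqOn_of_isPreconnected_of_isMaxOn (convex_ball (0:ℂ) 1).isPreconnected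
      isOpen_ball ((hpd.const_mul E).neg.cexp) (mem_ball_self one_pos) hmax hhalf
    change ‖Complex.exp (-(E * p (1 / 2)))‖ = ‖Complex.exp (-(E * p 0))‖ at this
    rw [Complex.norm_exp, Complex.norm_exp, Complex.neg_re, Complex.neg_re, hE0] at this
    have := Real.exp_injective this
    linarith [hFre _ hhalf (by norm_num)]
  have hcc : (Real.cos θ : ℂ) ≠ 0 := by exact_mod_cast hcos.ne'
  have hEne : E ≠ 0 := Complex.exp_ne_zero _
  let κ : ℂ → ℂ := fun z => ((E * p z - Real.sin θ * Complex.I) / (Real.cos θ : ℂ) + 1) / 2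
  have hκd : DifferentiableOn ℂ κ (ball 0 1) :=
    ((((hpd.const_mul E).sub_const _).div_const _).add_const _).div_const _
  have hκ0 : κ 0 = 1 := by
    simp only [κ, hp0, hEn, mul_one, add_sub_cancel_right, div_self hcc]; norm_num
  have hκre : ∀ z ∈ ball (0:ℂ) 1, 1 / 2 ≤ (κ z).re := by
    intro z hz
    have h1 : 0 ≤ (E * p z).re := by
      by_cases hz0 : z = 0
      · rw [hz0, hE0]; exact hcos.le
      · exact (hFre z hz hz0).le
    have h2 : (κ z).re = ((E * p z).re / Real.cos θ + 1) / 2 := by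
      simp only [κ]
      rw [show ∀ x : ℂ, (x / 2).re = x.re / 2 from fun x => by
        rw [show (2:ℂ) = ((2:ℝ):ℂ) by simp, Complex.div_ofReal_re], Complex.add_re, Complex.div_ofReal_re, Complex.sub_re,
        Complex.re_ofReal_mul, Complex.I_re]
      simp
    rw [h2]
    have : 0 ≤ (E * p z).re / Real.cos θ := div_nonneg h1 hcos.le
    linarith
  refine ⟨Complex.exp ((-2 * θ : ℝ) * Complex.I), κ, k, Complex.norm_exp_ofReal_mul_I _, hκd, hkd,
    mom_of_re hκd hκre hκ0, mom_of_re hkd hkre hk0, ?_⟩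
  intro z hz
  have hc : Complex.exp ((-2 * θ : ℝ) * Complex.I) * (E * E) = 1 := by
    rw [hE, ← Complex.exp_add, ← Complex.exp_add, ← Complex.exp_zero]
    congr 1; push_cast; ring
  set c := Complex.exp ((-2 * θ : ℝ) * Complex.I)
  have hpy : (Real.cos θ : ℂ) ^ 2 + (Real.sin θ : ℂ) ^ 2 = 1 := by
    exact_mod_cast Real.cos_sq_add_sin_sq θ
  have hEinv : E * (Real.cos θ - Real.sin θ * Complex.I) = 1 := by
    rw [hEn]; linear_combination hpy - (Real.sin θ : ℂ) ^ 2 * Complex.I_sq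
  have hcE : c * E = Real.cos θ - Real.sin θ * Complex.I := by
    have : E * (c * E) = E * (Real.cos θ - Real.sin θ * Complex.I) := by
      rw [hEinv]; linear_combination hc
    exact mul_left_cancel₀ hEne this
  have hp : (1 + c) * κ z - c = p z := by
    have h1 : E * ((1 + c) * κ z - c) = E * p z := by
      have h2 : E * (1 + c) = 2 * Real.cos θ := by
        linear_combination hcE + hEn
      have h3 : E * ((1 + c) * κ z - c) = 2 * Real.cos θ * κ z - c * E := by
        linear_combination κ z * h2
      have h4 : 2 * Real.cos θ * κ z = E * p z - Real.sin θ * Complex.I + Real.cos θ := by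
        simp only [κ]; field_simp
      rw [h3, h4, hcE]; ring
    exact mul_left_cancel₀ hEne h1
  simp only [Pi.mul_apply]
  rw [hp]
  have := hkne z hz
  simp only [p]
  field_simp

open PowerSeries in
lemma ctc_hull {f : ℂ → ℂ} (hf : IsCloseToConvex f) (D : ℕ) (d : ℕ → ℂ) (M : ℝ)
    (h : ∀ x y : ℂ, ‖x‖ = 1 → ‖y‖ = 1 → (ell D d (inv3 y * (1 + C x * X))).re ≤ M) :
    (ell D d (ser (deriv f))).re ≤ M := by
  obtain ⟨c, κ, k, hc, hκd, hkd, hκ, hk, heq⟩ := ctc_decomp hf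
  rw [ser_congr heq, ser_mul ((hκd.const_mul _).sub_const _) (hkd.mul hkd), ser_mul hkd hkd,
    ser_affine hκd]
  exact hull hκ hk hk c hc D d M h

open PowerSeries in
lemma coeff_ser_deriv (f : ℂ → ℂ) (N : ℕ) :
    coeff N (ser (deriv f)) = (N + 1) * taylorCoeff f (N + 1) := by
  simp only [ser, coeff_mk, taylorCoeff, iteratedDeriv_succ', Nat.factorial_succ]
  have : (N.factorial : ℂ) ≠ 0 := by exact_mod_cast Nat.factorial_ne_zero _
  have h2 : (N : ℂ) + 1 ≠ 0 := by exact_mod_cast Nat.succ_ne_zero N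
  push_cast
  field_simp

open PowerSeries in
lemma coeff_ext (x y : ℂ) (N : ℕ) : coeff (N + 1) (inv3 y * (1 + C x * X)) =
    ((N : ℂ) + 2) * (N + 3) / 2 * y ^ (N + 1) + x * (((N : ℂ) + 1) * (N + 2) / 2 * y ^ N) := by
  rw [mul_add, mul_one, show inv3 y * (C x * X) = C x * (inv3 y * X) by ring, map_add, coeff_C_mul,
    coeff_succ_mul_X]
  simp only [inv3, coeff_mk]
  push_cast
  ring

open PowerSeries in
lemma ell_two (m : ℕ) (hm : 1 ≤ m) (α β : ℂ) (S : PowerSeries ℂ) :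
    ell (2 * m) (fun i => if i = m then α else if i = 2 * m then β else 0) S =
      α * coeff m S + β * coeff (2 * m) S := by
  unfold ell
  rw [Finset.sum_eq_add m (2 * m) (by omega)]
  · beta_reduce
    rw [if_pos rfl, if_neg (by omega), if_pos rfl]
  · intro i _ hi
    beta_reduce
    rw [if_neg hi.1, if_neg hi.2, zero_mul]
  · intro h; exact absurd (Finset.mem_range.2 (by omega)) h
  · intro h; exact absurd (Finset.mem_range.2 (by omega)) h

lemma unit_sq {z : ℂ} (h : ‖z‖ = 1) : z.re ^ 2 + z.im ^ 2 = 1 := by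
  have := Complex.normSq_eq_norm_sq z
  rw [h, Complex.normSq_apply] at this
  linarith

lemma exists_rot (W : ℂ) (m : ℕ) (hm : 1 ≤ m) : ∃ η : ℂ, ‖η‖ = 1 ∧ η ^ m * W = ‖W‖ := by
  have hm' : (m : ℂ) ≠ 0 := by exact_mod_cast (by omega : m ≠ 0)
  refine ⟨Complex.exp ((-(Complex.arg W) / m : ℝ) * Complex.I), Complex.norm_exp_ofReal_mul_I _, ?_⟩
  rw [← Complex.exp_nat_mul]
  have hW := Complex.norm_mul_exp_arg_mul_I W
  have hW2 : ∀ u : ℂ, u * W = u * (‖W‖ * Complex.exp (Complex.arg W * Complex.I)) := fun u => by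
    rw [hW]
  rw [hW2, mul_left_comm, ← Complex.exp_add]
  have : (m : ℂ) * (((-(Complex.arg W) / m : ℝ) : ℂ) * Complex.I) + Complex.arg W * Complex.I = 0 := by
    push_cast; field_simp; ring
  rw [this]; simp

end Zal

theorem generalized_zalcman_closeToConvex_large_lambda
    (n : ℕ) (hn : 3 ≤ n) (lam : ℝ)
    (hlam : (3 * (n : ℝ) + Real.sqrt (5 * (n : ℝ) ^ 2 - 4 * n)) / ((n : ℝ) ^ 2 + n) ≤ lam)
    (f : ℂ → ℂ) (hf : IsCloseToConvex f) :
    ‖(lam : ℂ) * (taylorCoeff f n) ^ 2 - taylorCoeff f (2 * n - 1)‖ ≤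
      lam * (n : ℝ) ^ 2 - (2 * (n : ℝ) - 1) := by
  obtain ⟨q, rfl⟩ : ∃ q, n = q + 2 := ⟨n - 2, by omega⟩
  rw [show 2 * (q + 2) - 1 = 2 * (q + 1) + 1 by omega]
  set a := taylorCoeff f (q + 2) with ha
  set b := taylorCoeff f (2 * (q + 1) + 1) with hb
  obtain ⟨η, hη, hrot⟩ := Zal.exists_rot ((lam : ℂ) * a ^ 2 - b) (2 * (q + 1)) (by omega)
  set zA := η ^ (q + 1) * a with hzA
  set zB := η ^ (2 * (q + 1)) * b with hzB
  set t := zA.re with ht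
  have hN : (((q + 2 : ℕ) : ℝ)) = (q : ℝ) + 2 := by push_cast; ring
  have hq2 : (q : ℂ) + 2 ≠ 0 := by exact_mod_cast (by omega : q + 2 ≠ 0)
  have hq3 : 2 * (q : ℂ) + 3 ≠ 0 := by exact_mod_cast (by omega : 2 * q + 3 ≠ 0)
  have hlam0 : 0 ≤ lam := le_trans (by positivity) hlam
  rw [hN] at hlam ⊢
  have key := Zal.ctc_hull hf (2 * (q + 1))
    (fun i => if i = q + 1 then ((2 * lam * t : ℝ) : ℂ) * η ^ (q + 1) / (q + 2) else
      if i = 2 * (q + 1) then -(η ^ (2 * (q + 1)) / (2 * q + 3)) else 0)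
    (lam * ((q : ℝ) + 2) ^ 2 - (2 * ((q : ℝ) + 2) - 1) + lam * t ^ 2) (by
      intro x y hx hy
      rw [Zal.ell_two _ (by omega), Zal.coeff_ext, show 2 * (q + 1) = (2 * q + 1) + 1 by ring,
        Zal.coeff_ext]
      set e1 := (η * y) ^ (q + 1) with he1
      set e2 := η * x * (η * y) ^ q with he2
      have hn1 : ‖e1‖ = 1 := by simp [he1, hη, hy]
      have hn2 : ‖e2‖ = 1 := by simp [he2, hη, hy, hx]
      have hE : ((2 * lam * t : ℝ) : ℂ) * η ^ (q + 1) / (q + 2) *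
          (((q : ℂ) + 2) * (q + 3) / 2 * y ^ (q + 1) + x * (((q : ℂ) + 1) * (q + 2) / 2 * y ^ q)) +
          -(η ^ (2 * q + 1 + 1) / (2 * q + 3)) *
          ((((2 * q + 1 : ℕ) : ℂ) + 2) * (((2 * q + 1 : ℕ) : ℂ) + 3) / 2 * y ^ (2 * q + 1 + 1) +
            x * ((((2 * q + 1 : ℕ) : ℂ) + 1) * (((2 * q + 1 : ℕ) : ℂ) + 2) / 2 * y ^ (2 * q + 1))) =
          ((2 * lam * t : ℝ) : ℂ) * ((((q : ℝ) + 3) / 2 : ℝ) * e1 + (((q : ℝ) + 1) / 2 : ℝ) * e2) -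
          ((((q : ℝ) + 2 : ℝ) : ℂ) * (e1 * e1) + (((q : ℝ) + 1 : ℝ) : ℂ) * (e1 * e2)) := by
        rw [he1, he2]
        push_cast
        field_simp
        ring
      rw [hE]
      have hr := Zal.real_ineq ((q : ℝ) + 2) lam (by linarith [(Nat.cast_nonneg q : (0:ℝ) ≤ q)]) hlam
        e1.re e1.im e2.re e2.im (Zal.unit_sq hn1) (Zal.unit_sq hn2)
      simp only [Complex.sub_re, Complex.re_ofReal_mul, Complex.add_re, Complex.mul_re e1]
      set A := ((q : ℝ) + 3) / 2 * e1.re + ((q : ℝ) + 1) / 2 * e2.re with hA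
      rw [show ((q : ℝ) + 2 + 1) / 2 * e1.re + ((q : ℝ) + 2 - 1) / 2 * e2.re = A by rw [hA]; ring,
        show ((q : ℝ) + 2 - 1) = q + 1 by ring] at hr
      nlinarith [mul_nonneg hlam0 (sq_nonneg (A - t))])
  rw [Zal.ell_two _ (by omega), Zal.coeff_ser_deriv, Zal.coeff_ser_deriv] at key
  rw [show q + 1 + 1 = q + 2 by ring, ← ha, ← hb] at key
  have e : ((2 * lam * t : ℝ) : ℂ) * η ^ (q + 1) / (q + 2) * ((((q + 1 : ℕ) : ℂ) + 1) * a) +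
      -(η ^ (2 * (q + 1)) / (2 * q + 3)) * ((((2 * (q + 1) : ℕ) : ℂ) + 1) * b) =
      ((2 * lam * t : ℝ) : ℂ) * zA - zB := by
    rw [hzA, hzB]
    push_cast
    field_simp
    ring
  rw [e, Complex.sub_re, Complex.re_ofReal_mul, ← ht] at key
  have hfin : ‖(lam : ℂ) * a ^ 2 - b‖ = ((lam : ℂ) * (zA * zA) - zB).re := by
    rw [show (lam : ℂ) * (zA * zA) - zB = η ^ (2 * (q + 1)) * ((lam : ℂ) * a ^ 2 - b) by
      rw [hzA, hzB]; ring, hrot, Complex.ofReal_re]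
  rw [hfin, Complex.sub_re, Complex.re_ofReal_mul, Complex.mul_re, ← ht]
  nlinarith [mul_nonneg hlam0 (mul_self_nonneg zA.im)]
end

section
/- Let n ≥ 3 be an integer and let λ be a real number with 2n/(n² − n + 1) < λ < (3n + √(5n² − 4n))/(n² + n). If f is a close-to-convex function on the unit disk with Taylor coefficients a_k, then |λ a_n² − a_{2n−1}| ≤ (λ[4n(n+1) − (3n² + 1)λ] + 4n(2 − λ)√(nλ(2 − λ))) / (λ[8n − λ(n+1)²]). -/
open Complex Metric

lemma circleAverage_pow_inv {q : ℂ → ℂ} (hq : DifferentiableOn ℂ q (ball (0:ℂ) 1)) {r : ℝ}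
    (hr0 : 0 < r) (hr1 : r < 1) (j : ℕ) :
    Real.circleAverage (fun z => (z ^ j)⁻¹ * q z) 0 r = taylorCoeff q j := by
  have hc : DifferentiableOn ℂ q (closedBall 0 r) := hq.mono (closedBall_subset_ball hr1)
  have := hc.circleIntegral_one_div_sub_center_pow_smul hr0 j
  rw [Real.circleAverage_eq_circleIntegral hr0.ne']
  have h2 : ∀ z : ℂ, (z - 0)⁻¹ • ((z ^ j)⁻¹ * q z) = (1 / (z - 0) ^ (j + 1)) • q z := by
    intro z
    simp [pow_succ]; ring
  simp_rw [h2, this, taylorCoeff, smul_eq_mul]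
  field_simp [Complex.two_pi_I_ne_zero, Real.pi_ne_zero]

lemma circleAverage_pow_mul {q : ℂ → ℂ} (hq : DifferentiableOn ℂ q (ball (0:ℂ) 1)) {r : ℝ}
    (hr0 : 0 < r) (hr1 : r < 1) (j : ℕ) :
    Real.circleAverage (fun z => z ^ (j+1) * q z) 0 r = 0 := by
  have hc : DifferentiableOn ℂ (fun z => z ^ (j+1) * q z) (closedBall 0 |r|) := by
    rw [abs_of_pos hr0]
    exact (by fun_prop : DifferentiableOn ℂ (fun z : ℂ => z ^ (j+1)) _).mul
      (hq.mono (closedBall_subset_ball hr1))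
  have := (hc.mono closure_ball_subset_closedBall).diffContOnCl.circleAverage
  rw [this]; simp

lemma herglotz_core {q : ℂ → ℂ} (hq : DifferentiableOn ℂ q (ball (0:ℂ) 1))
    (hpos : ∀ z ∈ ball (0:ℂ) 1, 0 ≤ (q z).re) (N : ℕ) (β : ℕ → ℂ) (τ : ℝ)
    (hT : ∀ w : ℂ, ‖w‖ = 1 → 0 ≤ τ + (∑ j ∈ Finset.range N, β j * w ^ (j+1)).re) :
    0 ≤ 2 * τ * (q 0).re + (∑ j ∈ Finset.range N, β j * taylorCoeff q (j+1)).re := by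
  have key : ∀ r : ℝ, 0 < r → r < 1 →
      0 ≤ 2 * τ * (q 0).re
        + (∑ j ∈ Finset.range N, β j * taylorCoeff q (j+1) * (r:ℂ) ^ (j+1)).re := by
    intro r hr0 hr1
    have hsub : sphere (0:ℂ) |r| ⊆ ball (0:ℂ) 1 := by
      rw [abs_of_pos hr0]
      exact sphere_subset_closedBall.trans (closedBall_subset_ball hr1)
    have hqc : ContinuousOn q (sphere (0:ℂ) |r|) := hq.continuousOn.mono hsub
    have hne : ∀ z ∈ sphere (0:ℂ) |r|, z ≠ 0 := by
      rintro z hz rfl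
      simp at hz
      exact (abs_pos.mpr hr0.ne').ne hz
    set K : ℂ → ℂ := fun z => (2 * τ : ℂ) * ((z ^ 0)⁻¹ * q z)
      + ((∑ j ∈ Finset.range N, (β j * (r:ℂ) ^ (j+1)) * ((z ^ (j+1))⁻¹ * q z))
      + (∑ j ∈ Finset.range N, ((starRingEnd ℂ) (β j) * ((r:ℂ) ^ (j+1))⁻¹) * (z ^ (j+1) * q z)))
      with hK
    have i1 : ∀ j : ℕ, ∀ a : ℂ, CircleIntegrable (fun z => a * ((z ^ j)⁻¹ * q z)) 0 r := by
      intro j a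
      apply ContinuousOn.circleIntegrable'
      refine continuousOn_const.mul (ContinuousOn.mul ?_ hqc)
      exact ContinuousOn.inv₀ (by fun_prop) (fun z hz => pow_ne_zero _ (hne z hz))
    have i2 : ∀ j : ℕ, ∀ a : ℂ, CircleIntegrable (fun z => a * (z ^ j * q z)) 0 r := by
      intro j a
      apply ContinuousOn.circleIntegrable'
      exact continuousOn_const.mul (ContinuousOn.mul (by fun_prop) hqc)
    have s1 : CircleIntegrable (fun z => ∑ j ∈ Finset.range N,
        (β j * (r:ℂ) ^ (j+1)) * ((z ^ (j+1))⁻¹ * q z)) 0 r :=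
      CircleIntegrable.fun_sum _ (fun j _ => i1 _ _)
    have s2 : CircleIntegrable (fun z => ∑ j ∈ Finset.range N,
        ((starRingEnd ℂ) (β j) * ((r:ℂ) ^ (j+1))⁻¹) * (z ^ (j+1) * q z)) 0 r :=
      CircleIntegrable.fun_sum _ (fun j _ => i2 _ _)
    have hKint : CircleIntegrable K 0 r := (i1 0 _).add (s1.add s2)
    have avg : Real.circleAverage K 0 r = 2 * τ * q 0
        + ∑ j ∈ Finset.range N, β j * taylorCoeff q (j+1) * (r:ℂ) ^ (j+1) := by
      have s3 := s1.add s2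
      simp only [Pi.add_def] at s3
      rw [hK, Real.circleAverage_fun_add (i1 0 _) s3, Real.circleAverage_fun_add s1 s2,
        Real.circleAverage_fun_sum (fun j _ => i1 _ _),
        Real.circleAverage_fun_sum (fun j _ => i2 _ _)]
      have e1 : ∀ j : ℕ, ∀ a : ℂ, Real.circleAverage (fun z => a * ((z ^ j)⁻¹ * q z)) 0 r
          = a * taylorCoeff q j := by
        intro j a
        have := Real.circleAverage_fun_smul (a := a) (f := fun z => (z ^ j)⁻¹ * q z) (c := 0)
          (R := r)
        simp only [smul_eq_mul] at this
        rw [this, circleAverage_pow_inv hq hr0 hr1]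
      have e2 : ∀ j : ℕ, ∀ a : ℂ, Real.circleAverage (fun z => a * (z ^ (j+1) * q z)) 0 r
          = 0 := by
        intro j a
        have := Real.circleAverage_fun_smul (a := a) (f := fun z => z ^ (j+1) * q z) (c := 0)
          (R := r)
        simp only [smul_eq_mul] at this
        rw [this, circleAverage_pow_mul hq hr0 hr1, mul_zero]
      simp only [e1, e2, Finset.sum_const_zero, add_zero]
      congr 1
      · simp [taylorCoeff]
      · exact Finset.sum_congr rfl (fun j _ => by ring)
    have hnn : 0 ≤ Real.circleAverage (Complex.reCLM ∘ K) 0 r := by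
      apply Real.circleAverage_nonneg_of_nonneg
      intro z hz
      have hz0 := hne z hz
      have hzr : ‖z‖ = r := by simpa [abs_of_pos hr0] using hz
      have hrC : (r:ℂ) ≠ 0 := by exact_mod_cast hr0.ne'
      have hw : ‖(r:ℂ) / z‖ = 1 := by
        rw [norm_div, hzr, Complex.norm_real, Real.norm_of_nonneg hr0.le, div_self hr0.ne']
      have h1 := hT _ hw
      set B := ∑ j ∈ Finset.range N, β j * ((r:ℂ) / z) ^ (j+1) with hB
      have hconj : (starRingEnd ℂ) ((r:ℂ) / z) = z / r := by
        have h2 : z * (starRingEnd ℂ) z = (r:ℂ) * r := by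
          rw [Complex.mul_conj, Complex.normSq_eq_norm_sq, hzr]; push_cast; ring
        rw [map_div₀, Complex.conj_ofReal]
        have : (starRingEnd ℂ) z ≠ 0 := by simpa using hz0
        field_simp
        linear_combination -h2
      have hBc : (starRingEnd ℂ) B = ∑ j ∈ Finset.range N, (starRingEnd ℂ) (β j) * (z / r) ^ (j+1) := by
        simp only [hB, map_sum, map_mul, map_pow, hconj]
      have hKz : K z = q z * (2 * τ + (B + (starRingEnd ℂ) B)) := by
        rw [hBc, hB, hK]
        simp only [mul_add, Finset.mul_sum]
        congr 1
        · simp; ring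
        · congr 1
          · exact Finset.sum_congr rfl (fun j _ => by rw [div_pow]; ring)
          · exact Finset.sum_congr rfl (fun j _ => by rw [div_pow]; ring)
      have : (K z).re = 2 * ((q z).re * (τ + B.re)) := by
        rw [hKz, Complex.add_conj]
        have : (2 * (τ:ℂ) + ((2 * B.re : ℝ):ℂ)) = ((2 * (τ + B.re) : ℝ) : ℂ) := by
          push_cast; ring
        rw [this, Complex.re_mul_ofReal]; ring
      simp only [Function.comp, Complex.reCLM_apply, this]
      have := hpos z (hsub hz)
      positivity
    rw [Complex.reCLM.circleAverage_comp_comm hKint, avg] at hnn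
    simpa using hnn
  have hcont : Filter.Tendsto (fun r : ℝ => 2 * τ * (q 0).re
        + (∑ j ∈ Finset.range N, β j * taylorCoeff q (j+1) * (r:ℂ) ^ (j+1)).re)
        (nhdsWithin 1 (Set.Iio 1)) (nhds (2 * τ * (q 0).re
        + (∑ j ∈ Finset.range N, β j * taylorCoeff q (j+1) * ((1:ℝ):ℂ) ^ (j+1)).re)) := by
    apply Filter.Tendsto.mono_left _ nhdsWithin_le_nhds
    apply Continuous.tendsto (f := fun r : ℝ => 2 * τ * (q 0).re
        + (∑ j ∈ Finset.range N, β j * taylorCoeff q (j+1) * (r:ℂ) ^ (j+1)).re)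
    fun_prop
  have := ge_of_tendsto hcont (by
    filter_upwards [Ioo_mem_nhdsLT (show (0:ℝ) < 1 by norm_num)] with r hr
    exact key r hr.1 hr.2)
  simpa using this

open PowerSeries in
/-- The Taylor series at the origin. -/
noncomputable def tser (F : ℂ → ℂ) : PowerSeries ℂ := PowerSeries.mk (taylorCoeff F)

/-- The geometric series. -/
noncomputable def gser (w : ℂ) : PowerSeries ℂ := PowerSeries.mk (fun j => w ^ j)

/-- Functionals depending on finitely many coefficients. -/
def FinFun (Λ : PowerSeries ℂ → ℂ) : Prop :=
  ∃ (N : ℕ) (α : ℕ → ℂ), ∀ φ, Λ φ = ∑ j ∈ Finset.range (N+1), α j * PowerSeries.coeff j φ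

lemma FinFun.mul_right {Λ : PowerSeries ℂ → ℂ} (h : FinFun Λ) (S : PowerSeries ℂ) :
    FinFun (fun φ => Λ (φ * S)) := by
  obtain ⟨N, α, h⟩ := h
  refine ⟨N, fun i => ∑ m ∈ Finset.range (N+1),
    if i ≤ m then α m * PowerSeries.coeff (m - i) S else 0, fun φ => ?_⟩
  simp only [h]
  simp only [PowerSeries.coeff_mul, Finset.Nat.sum_antidiagonal_eq_sum_range_succ_mk,
    Finset.sum_mul, Finset.mul_sum]
  rw [Finset.sum_comm]
  apply Finset.sum_congr rfl
  intro m hm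
  rw [Finset.mem_range] at hm
  have : Finset.range (m+1) ⊆ Finset.range (N+1) := Finset.range_mono (by omega)
  rw [← Finset.sum_subset this]
  · apply Finset.sum_congr rfl
    intro i hi
    rw [Finset.mem_range] at hi
    rw [if_pos (by omega)]; ring
  · intro i _ hi
    rw [Finset.mem_range] at hi
    rw [if_neg (by omega), zero_mul]

lemma FinFun.mul_left {Λ : PowerSeries ℂ → ℂ} (h : FinFun Λ) (S : PowerSeries ℂ) :
    FinFun (fun φ => Λ (S * φ)) := by
  simpa [mul_comm] using h.mul_right S

lemma tser_mul {F H : ℂ → ℂ} (hF : DifferentiableOn ℂ F (ball (0:ℂ) 1))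
    (hH : DifferentiableOn ℂ H (ball (0:ℂ) 1)) :
    tser (F * H) = tser F * tser H := by
  have h0 : ball (0:ℂ) 1 ∈ nhds (0:ℂ) := ball_mem_nhds _ one_pos
  have aF := hF.analyticAt h0
  have aH := hH.analyticAt h0
  ext n
  simp only [tser, PowerSeries.coeff_mk, taylorCoeff,
    iteratedDeriv_mul aF.contDiffAt aH.contDiffAt, PowerSeries.coeff_mul,
    Finset.Nat.sum_antidiagonal_eq_sum_range_succ_mk, Finset.sum_div]
  refine Finset.sum_congr rfl fun i hi ↦ ?_
  rw [Nat.cast_choose _ (by grind)]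
  field_simp [Nat.factorial_ne_zero]

lemma tser_congr {F H : ℂ → ℂ} (h : Set.EqOn F H (ball (0:ℂ) 1)) : tser F = tser H := by
  have h0 : ball (0:ℂ) 1 ∈ nhds (0:ℂ) := ball_mem_nhds _ one_pos
  ext n
  simp only [tser, PowerSeries.coeff_mk, taylorCoeff]
  rw [(h.eventuallyEq_of_mem h0).iteratedDeriv_eq]

lemma half_plane {q : ℂ → ℂ} (hq : DifferentiableOn ℂ q (ball (0:ℂ) 1))
    (hpos : ∀ z ∈ ball (0:ℂ) 1, 1/2 ≤ (q z).re) (h0 : q 0 = 1)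
    {Λ : PowerSeries ℂ → ℂ} (hΛ : FinFun Λ) (M : ℝ)
    (hM : ∀ w : ℂ, ‖w‖ = 1 → (Λ (gser w)).re ≤ M) : (Λ (tser q)).re ≤ M := by
  obtain ⟨N, α, h⟩ := hΛ
  have := herglotz_core (q := fun z => q z - 1/2) (hq.sub_const _)
    (fun z hz => by simpa using hpos z hz) N (fun j => - α (j+1)) (M - (α 0).re) (by
      intro w hw
      have := hM w hw
      rw [h, Finset.sum_range_succ'] at this
      simp only [gser, PowerSeries.coeff_mk, pow_zero, mul_one, Complex.add_re] at this
      simp only [neg_mul, Finset.sum_neg_distrib, Complex.neg_re]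
      linarith)
  have e : ∀ j, taylorCoeff (fun z => q z - 1/2) (j+1) = taylorCoeff q (j+1) := by
    intro j
    simp only [taylorCoeff, iteratedDeriv_succ']
    congr 2
    ext z
    simp
  simp only [e, h0, neg_mul, Finset.sum_neg_distrib, Complex.neg_re] at this
  rw [h, Finset.sum_range_succ']
  simp only [tser, PowerSeries.coeff_mk, Complex.add_re]
  have e0 : taylorCoeff q 0 = 1 := by simp [taylorCoeff, h0]
  rw [e0, mul_one]
  have h2 : ((1:ℂ) - 1/2).re = 1/2 := by norm_num
  rw [h2] at this
  linarith

lemma tilted_half_plane {p : ℂ → ℂ} (hp : DifferentiableOn ℂ p (ball (0:ℂ) 1)) (θ : ℝ)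
    (hpos : ∀ z ∈ ball (0:ℂ) 1, 0 ≤ (Complex.exp (θ * Complex.I) * p z).re) (h0 : p 0 = 1)
    {Λ : PowerSeries ℂ → ℂ} (hΛ : FinFun Λ) (M : ℝ)
    (hM : ∀ w : ℂ, ‖w‖ = 1 → (Λ ((1 + PowerSeries.C (Complex.exp (-(2 * θ) * Complex.I) * w)
      * PowerSeries.X) * gser w)).re ≤ M) : (Λ (tser p)).re ≤ M := by
  obtain ⟨N, α, h⟩ := hΛ
  set e := Complex.exp (θ * Complex.I) with he
  set e' := Complex.exp (-θ * Complex.I) with he'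
  have hee : e' * e = 1 := by
    rw [he, he', ← Complex.exp_add]; simp
  have hcos : (e + e') = ((2 * Real.cos θ : ℝ):ℂ) := by
    rw [he, he']; push_cast; rw [Complex.two_cos]
  have hc : Complex.exp (-(2 * θ) * Complex.I) = e' * e' := by
    rw [he', ← Complex.exp_add]; congr 1; ring
  have here : e.re = Real.cos θ := Complex.exp_ofReal_mul_I_re θ
  have h1c : 1 + e' * e' = ((2 * Real.cos θ : ℝ):ℂ) * e' := by
    rw [← hcos]; linear_combination -hee
  have hM' : ∀ w : ℂ, ‖w‖ = 1 → (α 0).re + 2 * Real.cos θ *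
      (∑ j ∈ Finset.range N, (α (j+1) * e') * w ^ (j+1)).re ≤ M := by
    intro w hw
    have := hM w hw
    rw [h, Finset.sum_range_succ'] at this
    convert this using 1
    rw [Complex.add_re, add_comm, ← Complex.re_ofReal_mul, Finset.mul_sum]
    congr 1
    · congr 1
      apply Finset.sum_congr rfl
      intro j _
      rw [add_mul, one_mul, map_add, mul_assoc (PowerSeries.C _), PowerSeries.coeff_C_mul,
        PowerSeries.coeff_succ_X_mul]
      simp only [gser, PowerSeries.coeff_mk, hc]
      rw [pow_succ]
      linear_combination (-(α (j+1) * (w^j * w))) * h1c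
    · simp [gser]
  have core := herglotz_core (q := fun z => e * p z) (hp.const_mul _) hpos
  have ec : ∀ j, taylorCoeff (fun z => e * p z) j = e * taylorCoeff p j := by
    intro j
    simp only [taylorCoeff]
    rw [iteratedDeriv_const_mul_field]
    ring
  have hc0 : 0 ≤ Real.cos θ := by
    have := hpos 0 (by simp)
    rwa [h0, mul_one, here] at this
  have goal_eq : (Λ (tser p)).re = (α 0).re
      + (∑ j ∈ Finset.range N, α (j+1) * taylorCoeff p (j+1)).re := by
    rw [h, Finset.sum_range_succ', Complex.add_re, add_comm]
    simp [tser, taylorCoeff, h0]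
  rw [goal_eq]
  rcases hc0.eq_or_lt with hz | hz
  · have := core N (fun j => -(α (j+1) * e')) (∑ j ∈ Finset.range N, ‖α (j+1)‖) (by
      intro w hw
      have : ‖∑ j ∈ Finset.range N, -(α (j+1) * e') * w ^ (j+1)‖
          ≤ ∑ j ∈ Finset.range N, ‖α (j+1)‖ := by
        refine (norm_sum_le _ _).trans (Finset.sum_le_sum ?_)
        intro j _
        have : ‖e'‖ = 1 := by
          rw [he']; have := Complex.norm_exp_ofReal_mul_I (-θ); push_cast at this; exact this
        simp [hw, this]
      have h2 := Complex.abs_re_le_norm (∑ j ∈ Finset.range N, -(α (j+1) * e') * w ^ (j+1))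
      have h3 := neg_abs_le (∑ j ∈ Finset.range N, -(α (j+1) * e') * w ^ (j+1)).re
      linarith)
    simp only [h0, mul_one, here, ← hz, mul_zero, zero_add, ec] at this
    have e3 : ∑ j ∈ Finset.range N, -(α (j+1) * e') * (e * taylorCoeff p (j+1))
        = - ∑ j ∈ Finset.range N, α (j+1) * taylorCoeff p (j+1) := by
      rw [← Finset.sum_neg_distrib]
      apply Finset.sum_congr rfl
      intro j _
      linear_combination (-(α (j+1) * taylorCoeff p (j+1))) * hee
    rw [e3, Complex.neg_re] at this
    have h4 := hM' 1 (by simp)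
    rw [← hz] at h4
    linarith
  · have := core N (fun j => ((-(2 * Real.cos θ) : ℝ) : ℂ) * (α (j+1) * e')) (M - (α 0).re) (by
      intro w hw
      have := hM' w hw
      simp only [mul_assoc _ (_ * e')]
      rw [← Finset.mul_sum, Complex.re_ofReal_mul]
      linarith)
    simp only [h0, mul_one, here, ec] at this
    have e3 : ∑ j ∈ Finset.range N, ((-(2 * Real.cos θ) : ℝ) : ℂ) * (α (j+1) * e')
        * (e * taylorCoeff p (j+1))
        = ((-(2 * Real.cos θ) : ℝ) : ℂ) * ∑ j ∈ Finset.range N, α (j+1) * taylorCoeff p (j+1) := by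
      rw [Finset.mul_sum]
      apply Finset.sum_congr rfl
      intro j _
      linear_combination (((-(2 * Real.cos θ) : ℝ) : ℂ) * (α (j+1) * taylorCoeff p (j+1))) * hee
    rw [e3, Complex.re_ofReal_mul] at this
    have h5 : 0 ≤ 2 * Real.cos θ * (M - (α 0).re
      - (∑ j ∈ Finset.range N, α (j+1) * taylorCoeff p (j+1)).re) := by linarith
    have := nonneg_of_mul_nonneg_right h5 (by positivity)
    linarith

/-! ### Geometric series identities -/

lemma gser_spec (a : ℂ) : (1 - PowerSeries.C a * PowerSeries.X) * gser a = 1 := by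
  ext m
  cases m with
  | zero => simp [gser]
  | succ m =>
    rw [sub_mul, one_mul, map_sub, mul_assoc, PowerSeries.coeff_C_mul, PowerSeries.coeff_succ_X_mul]
    simp [gser, PowerSeries.coeff_one, pow_succ]; ring

lemma gser_ne (a : ℂ) : (1 - PowerSeries.C a * PowerSeries.X : PowerSeries ℂ) ≠ 0 := by
  intro h
  have := gser_spec a
  rw [h, zero_mul] at this
  exact zero_ne_one this

lemma gser_diff (a b : ℂ) :
    PowerSeries.C (a - b) * PowerSeries.X * (gser a * gser b) = gser a - gser b := by
  have ha := gser_spec a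
  have hb := gser_spec b
  rw [map_sub]
  linear_combination (gser a) * hb - (gser b) * ha

lemma coeff_gser_mul (a b : ℂ) (m : ℕ) :
    (a - b) * PowerSeries.coeff m (gser a * gser b) = a ^ (m+1) - b ^ (m+1) := by
  have := congrArg (PowerSeries.coeff (m+1)) (gser_diff a b)
  rw [mul_assoc, PowerSeries.coeff_C_mul, PowerSeries.coeff_succ_X_mul] at this
  rw [this]; simp [gser]

lemma coeff_gser_sq (a : ℂ) (m : ℕ) :
    PowerSeries.coeff m (gser a ^ 2) = (m+1) * a ^ m := by
  rw [pow_two, PowerSeries.coeff_mul]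
  simp only [gser, PowerSeries.coeff_mk]
  rw [Finset.sum_congr rfl (g := fun _ => a ^ m)]
  · simp
  · intro x hx
    rw [← pow_add, Finset.HasAntidiagonal.mem_antidiagonal.mp hx]

lemma coeff_gser_cube (a : ℂ) (m : ℕ) :
    PowerSeries.coeff m (gser a ^ 3) = (m+1) * (m+2) / 2 * a ^ m := by
  rw [pow_succ, PowerSeries.coeff_mul]
  simp only [coeff_gser_sq]
  simp only [gser, PowerSeries.coeff_mk]
  rw [Finset.Nat.sum_antidiagonal_eq_sum_range_succ_mk]
  rw [Finset.sum_congr rfl (g := fun i : ℕ => ((i:ℂ) + 1) * a ^ m)]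
  · rw [← Finset.sum_mul]
    congr 1
    induction m with
    | zero => simp
    | succ m ih => rw [Finset.sum_range_succ, ih]; push_cast; ring
  · intro i hi
    rw [Finset.mem_range] at hi
    rw [mul_assoc, ← pow_add]; congr 2; omega

lemma coeff_gser_three (a b : ℂ) (m : ℕ) :
    (a - b) ^ 2 * PowerSeries.coeff m (gser a * gser b ^ 2)
      = a ^ (m+2) - b ^ (m+2) - (a - b) * ((m + 2) * b ^ (m+1)) := by
  have h : PowerSeries.C ((a - b)^2) * (PowerSeries.X * (PowerSeries.X * (gser a * gser b ^ 2)))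
      = gser a - gser b - PowerSeries.C (a - b) * (PowerSeries.X * gser b ^ 2) := by
    have := gser_diff a b
    rw [map_pow]
    linear_combination (PowerSeries.C (a-b) * PowerSeries.X * gser b) * this + this
  have := congrArg (PowerSeries.coeff (m+2)) h
  rw [PowerSeries.coeff_C_mul, PowerSeries.coeff_succ_X_mul, PowerSeries.coeff_succ_X_mul,
    map_sub, map_sub, PowerSeries.coeff_C_mul, PowerSeries.coeff_succ_X_mul, coeff_gser_sq] at this
  rw [this]; simp only [gser, PowerSeries.coeff_mk]; push_cast; ring

lemma taylor_two {f f' f'' : ℝ → ℝ} (h1 : ∀ t, HasDerivAt f (f' t) t)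
    (h2 : ∀ t, HasDerivAt f' (f'' t) t) {M : ℝ}
    (h : ∀ t ∈ Set.Icc (0:ℝ) 1, f'' t ≤ 2 * M) : f 1 - f 0 - f' 0 ≤ M := by
  have d1 : ∀ t, HasDerivAt (fun t => f' t - 2 * M * t) (f'' t - 2 * M) t := by
    intro t
    simpa using (h2 t).fun_sub ((hasDerivAt_id' t).const_mul (2 * M))
  have a1 : AntitoneOn (fun t => f' t - 2 * M * t) (Set.Icc (0:ℝ) 1) := by
    apply antitoneOn_of_deriv_nonpos (convex_Icc 0 1)
    · exact fun t _ => (d1 t).continuousAt.continuousWithinAt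
    · exact fun t _ => (d1 t).differentiableAt.differentiableWithinAt
    · intro t ht
      rw [(d1 t).deriv]
      linarith [h t (interior_subset ht)]
  have d2 : ∀ t, HasDerivAt (fun t => f t - f' 0 * t - M * t^2) (f' t - f' 0 - 2 * M * t) t := by
    intro t
    have := ((h1 t).fun_sub ((hasDerivAt_id' t).const_mul (f' 0))).fun_sub
      (((hasDerivAt_id' t).fun_pow 2).const_mul M)
    refine this.congr_deriv ?_
    simp; ring
  have a2 : AntitoneOn (fun t => f t - f' 0 * t - M * t^2) (Set.Icc (0:ℝ) 1) := by
    apply antitoneOn_of_deriv_nonpos (convex_Icc 0 1)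
    · exact fun t _ => (d2 t).continuousAt.continuousWithinAt
    · exact fun t _ => (d2 t).differentiableAt.differentiableWithinAt
    · intro t ht
      have ht' := interior_subset ht
      rw [(d2 t).deriv]
      have := a1 (Set.left_mem_Icc.mpr zero_le_one) ht' ht'.1
      simp only at this
      linarith
  have := a2 (Set.left_mem_Icc.mpr zero_le_one) (Set.right_mem_Icc.mpr zero_le_one) zero_le_one
  simp only at this
  linarith

lemma taylor_one {f f' : ℝ → ℝ} (h1 : ∀ t, HasDerivAt f (f' t) t) {M : ℝ}
    (h : ∀ t ∈ Set.Icc (0:ℝ) 1, f' t ≤ M) : f 1 - f 0 ≤ M := by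
  have d1 : ∀ t, HasDerivAt (fun t => f t - M * t) (f' t - M) t := by
    intro t
    simpa using (h1 t).fun_sub ((hasDerivAt_id' t).const_mul M)
  have a1 : AntitoneOn (fun t => f t - M * t) (Set.Icc (0:ℝ) 1) := by
    apply antitoneOn_of_deriv_nonpos (convex_Icc 0 1)
    · exact fun t _ => (d1 t).continuousAt.continuousWithinAt
    · exact fun t _ => (d1 t).differentiableAt.differentiableWithinAt
    · intro t ht
      rw [(d1 t).deriv]
      linarith [h t (interior_subset ht)]
  have := a1 (Set.left_mem_Icc.mpr zero_le_one) (Set.right_mem_Icc.mpr zero_le_one) zero_le_one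
  simp only at this
  linarith

lemma seg_mem {a b : ℂ} (ha : ‖a‖ ≤ 1) (hb : ‖b‖ ≤ 1) {t : ℝ} (ht : t ∈ Set.Icc (0:ℝ) 1) :
    ‖b + t * (a - b)‖ ≤ 1 := by
  have e : b + t * (a - b) = ((1 - t : ℝ) : ℂ) * b + (t : ℂ) * a := by push_cast; ring
  rw [e]
  refine (norm_add_le _ _).trans ?_
  rw [norm_mul, norm_mul, Complex.norm_real, Complex.norm_real, Real.norm_of_nonneg ht.1,
    Real.norm_of_nonneg (by linarith [ht.2])]
  nlinarith [ht.1, ht.2]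

/-- derivative of the real part of a polynomial along a segment -/
lemma hasDerivAt_seg (N : ℕ) (α : ℕ → ℂ) (a b : ℂ) (k : ℕ) (t : ℝ) :
    HasDerivAt (fun t : ℝ => (∑ m ∈ Finset.range N, α m * (b + t * (a - b)) ^ (m+k+1)).re)
      ((∑ m ∈ Finset.range N, α m * ((m + k + 1) * (a - b)) * (b + t * (a - b)) ^ (m+k)).re) t := by
  have hl : HasDerivAt (fun t : ℝ => b + (t:ℂ) * (a - b)) (a - b) t := by
    have := ((Complex.ofRealCLM.hasDerivAt (x := t)).mul_const (a - b)).const_add b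
    simpa using this
  have hs : HasDerivAt (fun t : ℝ => ∑ m ∈ Finset.range N, α m * (b + t * (a - b)) ^ (m+k+1))
      (∑ m ∈ Finset.range N, α m * ((m + k + 1) * (a - b)) * (b + t * (a - b)) ^ (m+k)) t := by
    apply HasDerivAt.fun_sum
    intro m _
    have := (hl.fun_pow (m+k+1)).const_mul (α m)
    refine this.congr_deriv ?_
    push_cast
    ring
  exact Complex.reCLM.hasFDerivAt.comp_hasDerivAt t hs

lemma seg_two {Λ : PowerSeries ℂ → ℂ} (hΛ : FinFun Λ) {M : ℝ}
    (hM : ∀ u : ℂ, ‖u‖ ≤ 1 → (Λ (gser u ^ 2)).re ≤ M) {a b : ℂ} (ha : ‖a‖ ≤ 1) (hb : ‖b‖ ≤ 1) :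
    (Λ (gser a * gser b)).re ≤ M := by
  by_cases hab : a = b
  · subst hab; rw [← pow_two]; exact hM a ha
  have hd : a - b ≠ 0 := sub_ne_zero.mpr hab
  obtain ⟨N, α, h⟩ := hΛ
  have := taylor_one (M := M) (fun t => hasDerivAt_seg (N+1) (fun m => α m / (a - b)) a b 0 t) (by
    intro t ht
    have := hM _ (seg_mem ha hb ht)
    rw [h] at this
    convert this using 2
    apply Finset.sum_congr rfl
    intro m _
    rw [coeff_gser_sq]
    simp only [add_zero, Nat.cast_zero]
    field_simp)
  refine le_trans (le_of_eq ?_) this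
  rw [h, ← Complex.sub_re, ← Finset.sum_sub_distrib]
  congr 1
  apply Finset.sum_congr rfl
  intro m _
  have e := coeff_gser_mul a b m
  simp only [Complex.ofReal_one, Complex.ofReal_zero, zero_mul, one_mul, add_zero,
    add_sub_cancel]
  field_simp
  linear_combination α m * e

lemma seg_three {Λ : PowerSeries ℂ → ℂ} (hΛ : FinFun Λ) {M : ℝ}
    (hM : ∀ u : ℂ, ‖u‖ ≤ 1 → (Λ (gser u ^ 3)).re ≤ M) {a b : ℂ} (ha : ‖a‖ ≤ 1) (hb : ‖b‖ ≤ 1) :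
    (Λ (gser a * gser b ^ 2)).re ≤ M := by
  by_cases hab : a = b
  · subst hab; rw [show gser a * gser a ^ 2 = gser a ^ 3 by ring]; exact hM a ha
  have hd : a - b ≠ 0 := sub_ne_zero.mpr hab
  obtain ⟨N, α, h⟩ := hΛ
  have := taylor_two (M := M)
    (fun t => hasDerivAt_seg (N+1) (fun m => α m / (a - b)^2) a b 1 t)
    (fun t => by
      have := hasDerivAt_seg (N+1) (fun m => α m * (m + 2) / (a - b)) a b 0 t
      convert this using 4
      · rename_i x i hi
        push_cast
        field_simp
        ring_nf
        ) (by
    intro t ht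
    have := hM _ (seg_mem ha hb ht)
    rw [h] at this
    have := mul_le_mul_of_nonneg_left this (zero_le_two (α := ℝ))
    refine le_trans (le_of_eq ?_) this
    have e2 : (2:ℝ) * (∑ j ∈ Finset.range (N + 1), α j * (PowerSeries.coeff j)
      (gser (b + ↑t * (a - b)) ^ 3)).re = (((2:ℝ):ℂ) * ∑ j ∈ Finset.range (N + 1), α j *
      (PowerSeries.coeff j) (gser (b + ↑t * (a - b)) ^ 3)).re := by rw [Complex.re_ofReal_mul]
    rw [e2, Finset.mul_sum]
    congr 1
    apply Finset.sum_congr rfl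
    intro m _
    rw [coeff_gser_cube]
    simp only [add_zero, Nat.cast_zero]
    push_cast
    field_simp)
  refine le_trans (le_of_eq ?_) this
  rw [h, ← Complex.sub_re, ← Complex.sub_re, ← Finset.sum_sub_distrib, ← Finset.sum_sub_distrib]
  congr 1
  apply Finset.sum_congr rfl
  intro m _
  have e := coeff_gser_three a b m
  simp only [Complex.ofReal_one, Complex.ofReal_zero, zero_mul, one_mul, add_zero,
    add_sub_cancel]
  push_cast
  field_simp
  linear_combination α m * e

lemma max_three {Λ : PowerSeries ℂ → ℂ} (hΛ : FinFun Λ) {M : ℝ}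
    (hM : ∀ u : ℂ, ‖u‖ = 1 → (Λ (gser u ^ 3)).re ≤ M) {u : ℂ} (hu : ‖u‖ ≤ 1) :
    (Λ (gser u ^ 3)).re ≤ M := by
  obtain ⟨N, α, h⟩ := hΛ
  have hdiff : Differentiable ℂ (fun u => Complex.exp (Λ (gser u ^ 3))) := by
    simp only [h, coeff_gser_cube]
    fun_prop
  have := Complex.norm_le_of_forall_mem_frontier_norm_le (U := ball (0:ℂ) 1) isBounded_ball
    hdiff.diffContOnCl (C := Real.exp M) (by
      intro z hz
      rw [frontier_ball _ one_ne_zero, mem_sphere_zero_iff_norm] at hz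
      rw [Complex.norm_exp, Real.exp_le_exp]
      exact hM z hz) (z := u) (by
      rw [closure_ball _ one_ne_zero]; simpa using hu)
  rwa [Complex.norm_exp, Real.exp_le_exp] at this

lemma hull_bound {p q : ℂ → ℂ} (hp : DifferentiableOn ℂ p (ball (0:ℂ) 1)) (θ : ℝ)
    (hppos : ∀ z ∈ ball (0:ℂ) 1, 0 ≤ (Complex.exp (θ * Complex.I) * p z).re) (hp0 : p 0 = 1)
    (hq : DifferentiableOn ℂ q (ball (0:ℂ) 1))
    (hqpos : ∀ z ∈ ball (0:ℂ) 1, 1/2 ≤ (q z).re) (hq0 : q 0 = 1)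
    {Λ : PowerSeries ℂ → ℂ} (hΛ : FinFun Λ) {M : ℝ}
    (hM : ∀ x u : ℂ, ‖x‖ = 1 → ‖u‖ = 1 →
      (Λ ((1 + PowerSeries.C x * PowerSeries.X) * gser u ^ 3)).re ≤ M) :
    (Λ (tser p * tser q * tser q)).re ≤ M := by
  refine half_plane hq hqpos hq0 (hΛ.mul_left (tser p * tser q)) M fun v2 hv2 => ?_
  have e2 : ∀ v : PowerSeries ℂ, tser p * v * gser v2 = v * (tser p * gser v2) := fun v => by ring
  rw [e2]
  refine half_plane hq hqpos hq0 (hΛ.mul_right (tser p * gser v2)) M fun v1 hv1 => ?_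
  rw [show gser v1 * (tser p * gser v2) = tser p * (gser v1 * gser v2) by ring]
  refine tilted_half_plane hp θ hppos hp0 (hΛ.mul_right (gser v1 * gser v2)) M fun w hw => ?_
  set x := Complex.exp (-(2 * θ) * Complex.I) * w with hx
  have hx1 : ‖x‖ = 1 := by
    rw [hx, norm_mul, hw]
    have := Complex.norm_exp_ofReal_mul_I (-(2 * θ))
    push_cast at this
    rw [this, one_mul]
  set L := (1 + PowerSeries.C x * PowerSeries.X : PowerSeries ℂ)
  refine seg_two (hΛ.mul_left (L * gser w)) (fun η hη => ?_) hv1.le hv2.le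
  rw [mul_assoc]
  refine seg_three (hΛ.mul_left L) (fun u hu => ?_) hw.le hη
  exact max_three (hΛ.mul_left L) (fun u hu => hM x u hx1 hu) hu

lemma jack_disc {φ : ℂ → ℂ} (hφ : DifferentiableOn ℂ φ (ball (0:ℂ) 1)) (h0 : φ 0 = 0)
    (h1 : ∀ z ∈ ball (0:ℂ) 1, φ z ≠ 1)
    (hpos : ∀ z ∈ ball (0:ℂ) 1, 0 < (1 + 2 * (z * deriv φ z) / (1 - φ z)).re) :
    ∀ z ∈ ball (0:ℂ) 1, ‖φ z‖ < 1 := by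
  by_contra! hcon
  obtain ⟨z1, hz1, hz1'⟩ := hcon
  have hz1n : ‖z1‖ < 1 := by simpa using hz1
  have hcl : closedBall (0:ℂ) ‖z1‖ ⊆ ball 0 1 := closedBall_subset_ball hz1n
  have hcont : ContinuousOn (fun z => ‖φ z‖) (closedBall (0:ℂ) ‖z1‖) :=
    (hφ.continuousOn.mono hcl).norm
  set S := closedBall (0:ℂ) ‖z1‖ ∩ (fun z => ‖φ z‖) ⁻¹' Set.Ici 1 with hS
  have hSc : IsCompact S := (isCompact_closedBall (0:ℂ) ‖z1‖).of_isClosed_subset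
    (hcont.preimage_isClosed_of_isClosed isClosed_closedBall isClosed_Ici) Set.inter_subset_left
  have hSne : S.Nonempty := ⟨z1, by simp, hz1'⟩
  obtain ⟨z0, hz0S, hmin⟩ := hSc.exists_isMinOn hSne continuous_norm.continuousOn
  have hz0 : z0 ∈ ball (0:ℂ) 1 := hcl hz0S.1
  have hz0ne : z0 ≠ 0 := by
    rintro rfl
    have := hz0S.2
    simp [h0] at this
    linarith
  have hr0 : 0 < ‖z0‖ := norm_pos_iff.mpr hz0ne
  have hr1 : ‖z0‖ < 1 := by simpa using hz0
  have hr2 : ‖z0‖ ≤ ‖z1‖ := by simpa using hz0S.1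
  have hlt : ∀ z, ‖z‖ < ‖z0‖ → ‖φ z‖ < 1 := by
    intro z hz
    by_contra! hc
    have : z ∈ S := ⟨by simpa using (hz.le.trans hr2), hc⟩
    have := hmin this
    simp only [Set.mem_ofPred_eq] at this
    linarith
  have hsch : ∀ z ∈ ball (0:ℂ) ‖z0‖, ‖φ z‖ ≤ 1 / ‖z0‖ * ‖z‖ := by
    intro z hz
    have := Complex.dist_le_div_mul_dist_of_mapsTo_ball (f := φ) (c := 0) (R₁ := ‖z0‖) (R₂ := 1)
      (hφ.mono (ball_subset_ball hr1.le)) (by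
        intro w hw
        have := (hlt w (by simpa using hw)).le
        simpa [h0] using this) hz
    simpa [h0, dist_eq_norm] using this
  have hsch2 : ∀ z, ‖z‖ ≤ ‖z0‖ → ‖φ z‖ ≤ 1 / ‖z0‖ * ‖z‖ := by
    intro z hz
    have hcb : closure (ball (0:ℂ) ‖z0‖) = closedBall 0 ‖z0‖ := closure_ball _ hr0.ne'
    refine le_on_closure hsch ?_ (by fun_prop) (by rw [hcb]; simpa using hz)
    rw [hcb]
    exact (hφ.continuousOn.mono (closedBall_subset_ball hr1)).norm
  have hn1 : ‖φ z0‖ = 1 := by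
    apply le_antisymm
    · have := hsch2 z0 le_rfl
      rwa [one_div_mul_cancel hr0.ne'] at this
    · exact hz0S.2
  set χ : ℂ → ℂ := fun s => φ (z0 * Complex.exp s) * Complex.exp (-s) with hχ
  have hχ1 : ∀ s : ℂ, s.re ≤ 0 → ‖χ s‖ ≤ 1 := by
    intro s hs
    have h2 : ‖z0 * Complex.exp s‖ = ‖z0‖ * Real.exp s.re := by rw [norm_mul, Complex.norm_exp]
    have := hsch2 (z0 * Complex.exp s) (by
      rw [h2]
      exact mul_le_of_le_one_right hr0.le (Real.exp_le_one_iff.mpr hs))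
    rw [h2, ← mul_assoc, one_div_mul_cancel hr0.ne', one_mul] at this
    rw [hχ]
    simp only [norm_mul, Complex.norm_exp, Complex.neg_re]
    calc _ ≤ Real.exp s.re * Real.exp (-s.re) := by gcongr
      _ = 1 := by rw [← Real.exp_add]; simp
  have hχ0 : χ 0 = φ z0 := by simp [hχ]
  have hφd : HasDerivAt φ (deriv φ z0) (z0 * Complex.exp 0) := by
    rw [Complex.exp_zero, mul_one]
    exact (hφ.differentiableAt (isOpen_ball.mem_nhds hz0)).hasDerivAt
  have hχd : HasDerivAt χ (z0 * deriv φ z0 - φ z0) 0 := by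
    have e1 : HasDerivAt (fun s => z0 * Complex.exp s) (z0 * Complex.exp 0) 0 :=
      (Complex.hasDerivAt_exp 0).const_mul z0
    have e2 : HasDerivAt (fun s => Complex.exp (-s)) (-1) 0 := by
      have := (hasDerivAt_neg (0:ℂ)).cexp
      simpa using this
    have := (hφd.comp (0:ℂ) e1).fun_mul e2
    refine this.congr_deriv ?_
    simp; ring
  set A := z0 * deriv φ z0 - φ z0 with hA
  have line : ∀ d : ℂ, HasDerivAt (fun t : ℝ => ‖χ (t * d)‖ ^ 2)
      (2 * ((starRingEnd ℂ) (φ z0) * (d * A)).re) 0 := by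
    intro d
    have e1 : HasDerivAt (fun t : ℝ => (t:ℂ) * d) d 0 := by
      have := (Complex.ofRealCLM.hasDerivAt (x := (0:ℝ))).mul_const d
      simpa using this
    have e2 : HasDerivAt (fun t : ℝ => χ (t * d)) (d * A) 0 := by
      have := HasDerivAt.scomp (h := fun t : ℝ => (t:ℂ) * d) (0:ℝ) (by simpa using hχd) e1
      simpa [Function.comp_def] using this
    have := e2.norm_sq
    refine this.congr_deriv ?_
    simp [hχ0, Complex.inner, mul_comm]
  -- tangential direction
  have tang : ((starRingEnd ℂ) (φ z0) * A).im = 0 := by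
    have hmax : IsLocalMax (fun t : ℝ => ‖χ (t * Complex.I)‖ ^ 2) 0 := by
      refine Filter.Eventually.of_forall fun t => ?_
      have := hχ1 (t * Complex.I) (by simp)
      simp only [Complex.ofReal_zero, zero_mul, hχ0, hn1]
      exact pow_le_pow_left₀ (norm_nonneg _) this 2
    have := hmax.hasDerivAt_eq_zero (line Complex.I)
    rw [show (starRingEnd ℂ) (φ z0) * (Complex.I * A) = Complex.I * ((starRingEnd ℂ) (φ z0) * A)
      by ring, Complex.I_mul_re] at this
    linarith
  have rad : 0 ≤ ((starRingEnd ℂ) (φ z0) * A).re := by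
    have := (line 1).tendsto_slope
    have h3 : Filter.Tendsto (slope (fun t : ℝ => ‖χ (t * 1)‖ ^ 2) 0) (nhdsWithin 0 (Set.Iio 0))
        (nhds (2 * ((starRingEnd ℂ) (φ z0) * (1 * A)).re)) :=
      this.mono_left (nhdsWithin_mono _ (fun x hx => ne_of_lt hx))
    have h4 := ge_of_tendsto h3 (b := 0) (by
      filter_upwards [self_mem_nhdsWithin] with t ht
      have ht : t < 0 := ht
      rw [slope_def_field]
      have := hχ1 (t * 1) (by simpa using ht.le)
      have h5 : ‖χ (t * 1)‖ ^ 2 ≤ 1 ^ 2 := pow_le_pow_left₀ (norm_nonneg _) this 2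
      apply div_nonneg_of_nonpos
      · simp only [Complex.ofReal_zero, zero_mul, hχ0, hn1]
        linarith
      · linarith)
    rw [one_mul] at h4
    linarith
  have hconj : φ z0 * (starRingEnd ℂ) (φ z0) = 1 := by
    rw [Complex.mul_conj, Complex.normSq_eq_norm_sq, hn1]; simp
  set k : ℝ := ((starRingEnd ℂ) (φ z0) * A).re with hk
  have hAk : A = k * φ z0 := by
    have : (starRingEnd ℂ) (φ z0) * A = (k:ℂ) := by
      apply Complex.ext <;> simp [hk, tang]
    rw [← this]; linear_combination -A * hconj
  have hzd : z0 * deriv φ z0 = ((1 + k : ℝ):ℂ) * φ z0 := by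
    push_cast; linear_combination hAk
  have hd : 1 - φ z0 ≠ 0 := sub_ne_zero.mpr (h1 z0 hz0).symm
  have hp := hpos z0 hz0
  have e : 1 + 2 * (z0 * deriv φ z0) / (1 - φ z0)
      = 1 + ((1 + k : ℝ):ℂ) * (2 * φ z0 / (1 - φ z0)) := by rw [hzd]; ring
  have e2 : (2 * φ z0 / (1 - φ z0)).re = -1 := by
    have hn : (φ z0).re ^ 2 + (φ z0).im ^ 2 = 1 := by
      have := Complex.sq_norm (φ z0); rw [hn1, Complex.normSq_apply] at this; nlinarith
    have hns : Complex.normSq (1 - φ z0) = 2 * (1 - (φ z0).re) := by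
      rw [Complex.normSq_apply]; simp; nlinarith
    have hns0 : Complex.normSq (1 - φ z0) ≠ 0 := by simpa using hd
    rw [Complex.div_re]
    rw [← add_div, div_eq_iff hns0, hns]
    simp
    nlinarith
  rw [e, Complex.add_re, Complex.re_ofReal_mul, e2, Complex.one_re] at hp
  linarith

lemma starlike_sqrt {g : ℂ → ℂ} (hg : IsStarlikeFn g) :
    ∃ q : ℂ → ℂ, DifferentiableOn ℂ q (ball (0:ℂ) 1) ∧ q 0 = 1 ∧
      (∀ z ∈ ball (0:ℂ) 1, 1/2 ≤ (q z).re) ∧ (∀ z, q z ≠ 0) ∧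
      ∀ z ∈ ball (0:ℂ) 1, g z = z * q z ^ 2 := by
  obtain ⟨hgd, hg0, hg1, hgpos⟩ := hg
  have hmem0 : ball (0:ℂ) 1 ∈ nhds (0:ℂ) := ball_mem_nhds _ one_pos
  set h := dslope g 0 with hh
  have hd : DifferentiableOn ℂ h (ball 0 1) := (Complex.differentiableOn_dslope hmem0).mpr hgd
  have h0 : h 0 = 1 := by rw [hh, dslope_same, hg1]
  have hgh : ∀ z, g z = z * h z := by
    intro z
    have := sub_smul_dslope g 0 z
    simp [hg0] at this
    exact this.symm
  have hne : ∀ z ∈ ball (0:ℂ) 1, h z ≠ 0 := by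
    intro z hz hzero
    by_cases hz0 : z = 0
    · rw [hz0, h0] at hzero; exact one_ne_zero hzero
    · have := hgpos z ⟨hz, hz0⟩
      rw [hgh z, hzero] at this
      simp at this
  have hdd : DifferentiableOn ℂ (deriv h) (ball 0 1) := hd.deriv isOpen_ball
  have hquot : DifferentiableOn ℂ (fun z => deriv h z / h z) (ball 0 1) := hdd.div hd hne
  obtain ⟨L, hL⟩ := hquot.isExactOn_ball.with_val_at 0 0
  obtain ⟨hL0, hL⟩ := hL
  have hLd : DifferentiableOn ℂ L (ball 0 1) := fun z hz =>
    (hL z hz).differentiableAt.differentiableWithinAt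
  have hhd : ∀ z ∈ ball (0:ℂ) 1, HasDerivAt h (deriv h z) z := fun z hz =>
    (hd.differentiableAt (isOpen_ball.mem_nhds hz)).hasDerivAt
  have hK : ∀ z ∈ ball (0:ℂ) 1, HasDerivAt (fun z => h z * Complex.exp (-L z)) 0 z := by
    intro z hz
    refine ((hhd z hz).fun_mul ((hL z hz).fun_neg.cexp)).congr_deriv ?_
    have := hne z hz
    field_simp
    ring
  have hexp : ∀ z ∈ ball (0:ℂ) 1, h z = Complex.exp (L z) := by
    intro z hz
    have := isOpen_ball.is_const_of_deriv_eq_zero (convex_ball (0:ℂ) 1).isPreconnected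
      (fun w hw => (hK w hw).differentiableAt.differentiableWithinAt)
      (fun w hw => (hK w hw).deriv) hz (mem_ball_self one_pos)
    simp only [h0, hL0, neg_zero, Complex.exp_zero, mul_one] at this
    rw [Complex.exp_neg] at this
    exact eq_of_mul_inv_eq_one this
  have hφd : ∀ z ∈ ball (0:ℂ) 1, HasDerivAt (fun z => 1 - Complex.exp (-L z / 2))
      (Complex.exp (-L z / 2) * (deriv h z / h z) / 2) z := by
    intro z hz
    refine (((hL z hz).fun_neg.div_const 2).cexp.const_sub 1).congr_deriv ?_
    ring
  have hlt := jack_disc (φ := fun z => 1 - Complex.exp (-L z / 2))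
    (fun z hz => (hφd z hz).differentiableAt.differentiableWithinAt) (by simp [hL0])
    (by intro z hz; simp) (by
      intro z hz
      rw [(hφd z hz).deriv]
      have hE := Complex.exp_ne_zero (-L z / 2)
      have hnz := hne z hz
      have e : 1 + 2 * (z * (Complex.exp (-L z / 2) * (deriv h z / h z) / 2))
          / (1 - (1 - Complex.exp (-L z / 2))) = 1 + z * deriv h z / h z := by
        rw [sub_sub_cancel]
        field_simp
      rw [e]
      by_cases hz0 : z = 0
      · simp [hz0]
      · have := hgpos z ⟨hz, hz0⟩
        have hgd' : deriv g z = h z + z * deriv h z := by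
          have e1 : g = fun z => z * h z := funext hgh
          rw [e1]
          refine (((hasDerivAt_id z).fun_mul (hhd z hz)).congr_deriv ?_).deriv
          simp
        rw [hgd', hgh z] at this
        have e2 : z * (h z + z * deriv h z) / (z * h z) = 1 + z * deriv h z / h z := by
          field_simp
        rwa [e2] at this)
  refine ⟨fun z => Complex.exp (L z / 2), ?_, by simp [hL0], ?_, fun z => Complex.exp_ne_zero _, ?_⟩
  · exact (hLd.div_const 2).cexp
  · intro z hz
    have h1 := hlt z hz
    set w := Complex.exp (-L z / 2) with hw
    have hwq : Complex.exp (L z / 2) = w⁻¹ := by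
      rw [hw, ← Complex.exp_neg]; congr 1; ring
    have hw0 : 0 < Complex.normSq w := Complex.normSq_pos.mpr (Complex.exp_ne_zero _)
    have h2 : ‖1 - w‖ ^ 2 < 1 := by
      have := norm_nonneg (1 - w)
      have h1 : ‖1 - w‖ < 1 := h1
      nlinarith
    rw [Complex.sq_norm, Complex.normSq_apply] at h2
    simp only [Complex.sub_re, Complex.sub_im, Complex.one_re, Complex.one_im] at h2
    show 1/2 ≤ (Complex.exp (L z / 2)).re
    rw [hwq, Complex.inv_re, le_div_iff₀ hw0, Complex.normSq_apply]
    nlinarith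
  · intro z hz
    rw [hgh z, hexp z hz, ← Complex.exp_nat_mul]
    congr 2
    push_cast; ring

lemma final_ineq (n lam : ℝ) (hn : 3 ≤ n) (h0 : 0 < lam) (h1 : lam * (n+1)^2 < 8 * n)
    (X Y : ℂ) (hX : ‖X‖ = 1) (hY : ‖Y‖ = 1) :
    lam * ((((n:ℂ)+1) * X + (n-1) * Y) / 2).re ^ 2 - ((n:ℂ) * X^2 + (n-1) * (X * Y)).re ≤
      (lam * (4 * n * (n + 1) - (3 * n ^ 2 + 1) * lam)
          + 4 * n * (2 - lam) * Real.sqrt (n * lam * (2 - lam)))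
        / (lam * (8 * n - lam * (n + 1) ^ 2)) := by
  have hl2 : lam < 2 := by nlinarith [sq_nonneg (n-1)]
  have hpos : 0 < n * lam * (2 - lam) := by
    have : 0 < 2 - lam := by linarith
    positivity
  set s := Real.sqrt (n * lam * (2 - lam)) with hs
  have hs2 : s ^ 2 = n * lam * (2 - lam) := Real.sq_sqrt hpos.le
  have hs0 : 0 < s := Real.sqrt_pos.mpr hpos
  -- D = 2 s - (n-1) lam > 0
  have hD : 0 < 2 * s - (n - 1) * lam := by
    have : ((n-1)*lam)^2 < (2*s)^2 := by nlinarith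
    have := abs_lt_of_sq_lt_sq this (by positivity)
    linarith [(abs_lt.mp this).2]
  set k := (2 * s - (n-1) * lam) / ((n-1) * lam) with hk
  have hn1 : 0 < n - 1 := by linarith
  have hk0 : 0 < k := by positivity
  have hden : lam * (8 * n - lam * (n+1)^2) = (2*s - (n-1)*lam) * (2*s + (n-1)*lam) := by
    nlinarith
  have hden0 : 0 < 8 * n - lam * (n+1)^2 := by linarith
  have hB : (lam * (4 * n * (n + 1) - (3 * n ^ 2 + 1) * lam)
          + 4 * n * (2 - lam) * s) / (lam * (8 * n - lam * (n + 1) ^ 2))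
      = n + (n-1)/2 * (k + 1/k) := by
    rw [hden, hk]
    have : 0 < 2*s + (n-1)*lam := by positivity
    rw [div_eq_iff (by positivity)]
    have hD2 : 2 * s - lam * (n - 1) ≠ 0 := by linarith
    field_simp
    linear_combination (-(8 * s + 8 * lam * n - 4 * (n-1) * lam)) * hs2
  rw [hB]
  clear hB hden
  clear_value k s
  have x2 : X.re ^ 2 + X.im ^ 2 = 1 := by
    have := Complex.sq_norm X; rw [hX, Complex.normSq_apply] at this; nlinarith
  have y2 : Y.re ^ 2 + Y.im ^ 2 = 1 := by
    have := Complex.sq_norm Y; rw [hY, Complex.normSq_apply] at this; nlinarith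
  have e1 : ((((n:ℂ)+1) * X + (n-1) * Y) / 2).re = ((n+1) * X.re + (n-1) * Y.re)/2 := by
    have : ((((n:ℂ)+1) * X + (n-1) * Y) / 2) = (((n+1)/2 : ℝ) : ℂ) * X + (((n-1)/2 : ℝ):ℂ) * Y := by
      push_cast; ring
    rw [this, Complex.add_re, Complex.re_ofReal_mul, Complex.re_ofReal_mul]; ring
  have e2 : ((n:ℂ) * X^2 + (n-1) * (X * Y)).re
      = n * (X.re^2 - X.im^2) + (n-1) * (X.re * Y.re - X.im * Y.im) := by
    have : ((n:ℂ) * X^2 + (n-1) * (X * Y)) = (n : ℂ) * (X*X) + ((n-1 : ℝ):ℂ) * (X * Y) := by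
      push_cast; ring
    rw [this, Complex.add_re, Complex.re_ofReal_mul, Complex.re_ofReal_mul, Complex.mul_re,
      Complex.mul_re]; ring
  rw [e1, e2]
  generalize X.re = u at *
  generalize Y.re = v at *
  generalize X.im = a at *
  generalize Y.im = b at *
  -- AM-GM
  have am : a * b ≤ (k * a^2 + b^2 / k) / 2 := by
    have : (k * a^2 + b^2 / k) / 2 - a * b = (k * a - b)^2 / (2 * k) := by field_simp; ring
    have h2 : 0 ≤ (k * a - b)^2 / (2 * k) := by positivity
    linarith
  have ha : a^2 = 1 - u^2 := by linarith
  have hb : b^2 = 1 - v^2 := by linarith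
  have hk2 : (n-1)^2 * lam * (k^2 + 2*k) = 8 * n - lam * (n+1)^2 := by
    have h3 : (n-1) * lam * (k + 1) = 2 * s := by rw [hk]; field_simp; ring
    have h4 : ((n-1) * lam * (k + 1))^2 = 4 * (n * lam * (2 - lam)) := by rw [h3, mul_pow, hs2]; ring
    have : lam * ((n-1)^2 * lam * (k^2 + 2*k)) = lam * (8 * n - lam * (n+1)^2) := by nlinarith
    exact mul_left_cancel₀ h0.ne' this
  have hP : 0 < 8 * n + 2*(n-1)*k - lam * (n+1)^2 := by
    have : 0 < 2*(n-1)*k := by positivity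
    linarith
  have Q : lam/4 * ((n+1)*u+(n-1)*v)^2 - 2*n*u^2 - (n-1)*(u*v) - (n-1)/2*(k*u^2 + v^2/k) ≤ 0 := by
    obtain ⟨P, hPdef⟩ : ∃ P, P = 8 * n + 2*(n-1)*k - lam * (n+1)^2 := ⟨_, rfl⟩
    rw [← hPdef] at hP
    have : lam/4 * ((n+1)*u+(n-1)*v)^2 - 2*n*u^2 - (n-1)*(u*v) - (n-1)/2*(k*u^2 + v^2/k)
        = - (P * u - (n-1)*(lam*(n+1)-2) * v)^2 / (4 * P) := by
      field_simp
      rw [hPdef]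
      linear_combination (4 * (n-1) * v^2) * hk2
    rw [this]
    apply div_nonpos_of_nonpos_of_nonneg
    · linarith [sq_nonneg (P * u - (n-1)*(lam*(n+1)-2) * v)]
    · positivity
  have am2 := mul_le_mul_of_nonneg_left am hn1.le
  rw [ha, hb] at am2
  have : (k * (1 - u^2) + (1 - v^2)/k)/2 = (k + 1/k)/2 - (k * u^2 + v^2/k)/2 := by ring
  rw [this] at am2
  rw [ha]
  linarith

lemma taylorCoeff_deriv (f : ℂ → ℂ) (m : ℕ) :
    taylorCoeff (deriv f) m = ((m:ℂ) + 1) * taylorCoeff f (m + 1) := by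
  unfold taylorCoeff
  rw [iteratedDeriv_succ', Nat.factorial_succ]
  have h1 : ((m:ℂ) + 1) ≠ 0 := by exact_mod_cast Nat.succ_ne_zero m
  have h2 : ((Nat.factorial m : ℕ) : ℂ) ≠ 0 := by exact_mod_cast Nat.factorial_ne_zero m
  push_cast
  field_simp

lemma coeff_extreme (x u : ℂ) (k : ℕ) :
    PowerSeries.coeff (k + 1) ((1 + PowerSeries.C x * PowerSeries.X) * gser u ^ 3)
      = ((k:ℂ) + 2) * (k + 3) / 2 * u ^ (k + 1) + x * (((k:ℂ) + 1) * (k + 2) / 2 * u ^ k) := by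
  rw [add_mul, one_mul, mul_assoc, map_add, PowerSeries.coeff_C_mul, PowerSeries.coeff_succ_X_mul,
    coeff_gser_cube, coeff_gser_cube]
  push_cast
  ring

lemma ctc_factor {f : ℂ → ℂ} (hf : IsCloseToConvex f) {Λ : PowerSeries ℂ → ℂ} {M : ℝ}
    (hΛ : FinFun Λ)
    (hM : ∀ x u : ℂ, ‖x‖ = 1 → ‖u‖ = 1 →
      (Λ ((1 + PowerSeries.C x * PowerSeries.X) * gser u ^ 3)).re ≤ M) :
    (Λ (tser (deriv f))).re ≤ M := by
  obtain ⟨hfd, hf0, hf1, θ, g, hg, hpos⟩ := hf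
  obtain ⟨q, hq, hq0, hqpos, hqne, hgq⟩ := starlike_sqrt hg
  have hfd' : DifferentiableOn ℂ (deriv f) (ball 0 1) := hfd.deriv isOpen_ball
  set p : ℂ → ℂ := fun z => deriv f z / q z ^ 2 with hpdef
  have hp : DifferentiableOn ℂ p (ball 0 1) :=
    hfd'.div (hq.pow 2) (fun z _ => pow_ne_zero 2 (hqne z))
  have hp0 : p 0 = 1 := by simp [hpdef, hf1, hq0]
  have hpp : ∀ z ∈ ball (0:ℂ) 1, z ≠ 0 → 0 ≤ (Complex.exp (θ * Complex.I) * p z).re := by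
    intro z hz hz0
    have := (hpos z ⟨hz, hz0⟩).le
    rw [hgq z hz] at this
    have e : Complex.exp (θ * Complex.I) * z * deriv f z / (z * q z ^ 2)
        = Complex.exp (θ * Complex.I) * p z := by
      have := hqne z
      simp only [hpdef]
      field_simp
    rwa [e] at this
  have hppos : ∀ z ∈ ball (0:ℂ) 1, 0 ≤ (Complex.exp (θ * Complex.I) * p z).re := by
    intro z hz
    by_cases hz0 : z = 0
    · subst hz0
      have hc : ContinuousAt (fun z => (Complex.exp (θ * Complex.I) * p z).re) 0 := by
        have : ContinuousAt p 0 := (hp.differentiableAt (isOpen_ball.mem_nhds hz)).continuousAt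
        fun_prop
      have ht : Filter.Tendsto (fun z => (Complex.exp (θ * Complex.I) * p z).re)
          (nhdsWithin 0 {0}ᶜ) (nhds (Complex.exp (θ * Complex.I) * p 0).re) :=
        hc.tendsto.mono_left nhdsWithin_le_nhds
      refine ge_of_tendsto ht ?_
      filter_upwards [self_mem_nhdsWithin, mem_nhdsWithin_of_mem_nhds (isOpen_ball.mem_nhds hz)]
        with w hw hw2
      exact hpp w hw2 hw
    · exact hpp z hz hz0
  have key : tser (deriv f) = tser p * tser q * tser q := by
    rw [← tser_mul hp hq, ← tser_mul (hp.mul hq) hq]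
    apply tser_congr
    intro z hz
    have := hqne z
    simp only [Pi.mul_apply, hpdef]
    field_simp
  rw [key]
  exact hull_bound hp θ hppos hp0 hq hqpos hq0 hΛ hM

lemma finFun_two (A B : ℂ) (i j : ℕ) (hij : i ≤ j) :
    FinFun (fun φ => A * PowerSeries.coeff i φ + B * PowerSeries.coeff j φ) := by
  refine ⟨j, fun k => (if k = i then A else 0) + (if k = j then B else 0), fun φ => ?_⟩
  simp only [add_mul, ite_mul, zero_mul, Finset.sum_add_distrib, Finset.sum_ite_eq',
    Finset.mem_range]
  rw [if_pos (by omega), if_pos (by omega)]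

lemma lam_bounds (n lam : ℝ) (hn : 3 ≤ n) (h1 : 2 * n / (n ^ 2 - n + 1) < lam)
    (h2 : lam < (3 * n + Real.sqrt (5 * n ^ 2 - 4 * n)) / (n ^ 2 + n)) :
    0 < lam ∧ lam * (n + 1) ^ 2 < 8 * n := by
  constructor
  · refine lt_trans ?_ h1
    apply div_pos <;> nlinarith
  · have hs : Real.sqrt (5 * n ^ 2 - 4 * n) ≤ 9 / 4 * n := by
      apply Real.sqrt_le_iff.mpr
      constructor <;> nlinarith
    rw [lt_div_iff₀ (by nlinarith)] at h2
    have h3 : lam * (n + 1) < 21 / 4 := by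
      have : (lam * (n + 1)) * n < 21 / 4 * n := by nlinarith
      exact lt_of_mul_lt_mul_right this (by linarith)
    nlinarith

lemma main_aux (m : ℕ) (hm : 1 ≤ m) (lam : ℝ) (h0 : 0 < lam) {M : ℝ}
    (hfin : ∀ X Y : ℂ, ‖X‖ = 1 → ‖Y‖ = 1 →
      lam * ((((m:ℂ) + 3) * X + (m + 1) * Y) / 2).re ^ 2
        - (((m:ℂ) + 2) * X ^ 2 + (m + 1) * (X * Y)).re ≤ M)
    (f : ℂ → ℂ) (hf : IsCloseToConvex f) :
    ‖(lam : ℂ) * (taylorCoeff f (m + 2)) ^ 2 - taylorCoeff f (2 * m + 3)‖ ≤ M := by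
  set a := taylorCoeff f (m + 2) with ha
  set b := taylorCoeff f (2 * m + 3) with hb
  set W := (lam : ℂ) * a ^ 2 - b with hW
  set ε := Complex.exp ((-(Complex.arg W) / 2 : ℝ) * Complex.I) with hε
  have hε1 : ‖ε‖ = 1 := Complex.norm_exp_ofReal_mul_I _
  have hεW : ε ^ 2 * W = ‖W‖ := by
    conv_lhs => rw [← Complex.norm_mul_exp_arg_mul_I W]
    rw [hε, ← Complex.exp_nat_mul, mul_left_comm, ← Complex.exp_add]
    have : ((2:ℕ):ℂ) * (((-(Complex.arg W) / 2 : ℝ):ℂ) * Complex.I)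
        + (Complex.arg W) * Complex.I = 0 := by push_cast; ring
    rw [this]; simp
  set t := (ε * a).re with ht
  have hWt : ‖W‖ ≤ lam * t ^ 2 - (ε ^ 2 * b).re := by
    have e : (ε ^ 2 * W).re = lam * ((ε * a).re ^ 2 - (ε * a).im ^ 2) - (ε ^ 2 * b).re := by
      have : ε ^ 2 * W = lam * (ε * a) ^ 2 - ε ^ 2 * b := by rw [hW]; ring
      rw [this, Complex.sub_re, Complex.re_ofReal_mul, pow_two (ε * a), Complex.mul_re]
      ring
    rw [hεW, Complex.ofReal_re] at e
    rw [e, ht]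
    nlinarith [mul_nonneg h0.le (sq_nonneg (ε * a).im)]
  have hm2 : ((m:ℂ) + 2) ≠ 0 := by exact_mod_cast (by omega : m + 2 ≠ 0)
  have hm3 : (2 * (m:ℂ) + 3) ≠ 0 := by exact_mod_cast (by omega : 2 * m + 3 ≠ 0)
  have hfun := ctc_factor hf (M := M + lam * t ^ 2)
    (finFun_two ((2 * lam * t : ℝ) * ε / (m + 2)) (-ε ^ 2 / (2 * m + 3)) (m + 1) (2 * m + 1 + 1)
      (by omega)) (by
    intro x u hx hu
    have hXn : ‖ε * u ^ (m + 1)‖ = 1 := by simp [hε1, hu]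
    have hYn : ‖ε * x * u ^ m‖ = 1 := by simp [hε1, hu, hx]
    have := hfin _ _ hXn hYn
    set X := ε * u ^ (m + 1) with hX
    set Y := ε * x * u ^ m with hY
    set r := ((((m:ℂ) + 3) * X + (m + 1) * Y) / 2).re with hr
    have e : ((2 * lam * t : ℝ):ℂ) * ε / (m + 2) *
          PowerSeries.coeff (m + 1) ((1 + PowerSeries.C x * PowerSeries.X) * gser u ^ 3)
        + (-ε ^ 2 / (2 * m + 3)) *
          PowerSeries.coeff (2 * m + 1 + 1) ((1 + PowerSeries.C x * PowerSeries.X) * gser u ^ 3)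
        = ((2 * lam * t : ℝ):ℂ) * ((((m:ℂ) + 3) * X + (m + 1) * Y) / 2)
          - (((m:ℂ) + 2) * X ^ 2 + (m + 1) * (X * Y)) := by
      rw [coeff_extreme, coeff_extreme, hX, hY]
      push_cast
      field_simp
      ring
    show (_ : ℂ).re ≤ _
    rw [e, Complex.sub_re, Complex.re_ofReal_mul, ← hr]
    nlinarith [mul_nonneg h0.le (sq_nonneg (t - r))])
  have e : ((2 * lam * t : ℝ):ℂ) * ε / (m + 2) * PowerSeries.coeff (m + 1) (tser (deriv f))
        + (-ε ^ 2 / (2 * m + 3)) * PowerSeries.coeff (2 * m + 1 + 1) (tser (deriv f))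
        = ((2 * lam * t : ℝ):ℂ) * (ε * a) - ε ^ 2 * b := by
    unfold tser
    rw [PowerSeries.coeff_mk, PowerSeries.coeff_mk, taylorCoeff_deriv, taylorCoeff_deriv]
    rw [show m + 1 + 1 = m + 2 from rfl, show 2 * m + 1 + 1 + 1 = 2 * m + 3 from rfl, ← ha, ← hb]
    push_cast
    field_simp
    ring
  simp only [e] at hfun
  rw [Complex.sub_re, Complex.re_ofReal_mul, ← ht] at hfun
  nlinarith

theorem generalized_zalcman_closeToConvex_middle_lambda
    (n : ℕ) (hn : 3 ≤ n) (lam : ℝ)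
    (hlam1 : 2 * (n : ℝ) / ((n : ℝ) ^ 2 - n + 1) < lam)
    (hlam2 : lam < (3 * (n : ℝ) + Real.sqrt (5 * (n : ℝ) ^ 2 - 4 * n)) / ((n : ℝ) ^ 2 + n))
    (f : ℂ → ℂ) (hf : IsCloseToConvex f) :
    ‖(lam : ℂ) * (taylorCoeff f n) ^ 2 - taylorCoeff f (2 * n - 1)‖ ≤
      (lam * (4 * (n : ℝ) * (n + 1) - (3 * (n : ℝ) ^ 2 + 1) * lam)
          + 4 * (n : ℝ) * (2 - lam) * Real.sqrt ((n : ℝ) * lam * (2 - lam)))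
        / (lam * (8 * (n : ℝ) - lam * ((n : ℝ) + 1) ^ 2)) := by
  have hn' : (3:ℝ) ≤ n := by exact_mod_cast hn
  obtain ⟨h0, h1⟩ := lam_bounds n lam hn' hlam1 hlam2
  have hfin := final_ineq n lam hn' h0 h1
  obtain ⟨m, rfl⟩ : ∃ m, n = m + 2 := ⟨n - 2, by omega⟩
  rw [show 2 * (m + 2) - 1 = 2 * m + 3 by omega]
  refine main_aux m (by omega) lam h0 (fun X Y hX hY => ?_) f hf
  have := hfin X Y hX hY
  convert this using 3
  · push_cast; ring_nf
  · push_cast; ring_nf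
end

section
/- Let n ≥ 3 be an integer and let λ be a real number with 0 < λ ≤ 2n/(n² − n + 1). If f is a close-to-convex function on the unit disk with Taylor coefficients a_k, then |λ a_n² − a_{2n−1}| ≤ 2n − 1. -/
open Complex Metric

/-- Real linear functional on power series depending on the first `N` coefficients. -/
noncomputable def ctcL (b : ℕ → ℂ) (N : ℕ) (q : PowerSeries ℂ) : ℝ :=
  (∑ k ∈ Finset.range N, b k * PowerSeries.coeff k q).re

/-- Geometric series `1/(1-xz)`. -/
noncomputable def ctcG (x : ℂ) : PowerSeries ℂ := PowerSeries.mk fun k => x ^ k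

/-- The series `1/(1-xz)^2`. -/
noncomputable def ctcG2 (x : ℂ) : PowerSeries ℂ := PowerSeries.mk fun k => ((k : ℂ) + 1) * x ^ k

/-- The series `1/(1-xz)^3`. -/
noncomputable def ctcG3 (x : ℂ) : PowerSeries ℂ :=
  PowerSeries.mk fun k => ((k : ℂ) + 1) * ((k : ℂ) + 2) / 2 * x ^ k

lemma ctcL_mul (b : ℕ → ℂ) (N : ℕ) (q : PowerSeries ℂ) :
    ∃ b' : ℕ → ℂ, ∀ p : PowerSeries ℂ, ctcL b N (p * q) = ctcL b' N p := by
  refine ⟨fun i => ∑ k ∈ Finset.range N, if i ≤ k then b k * PowerSeries.coeff (k - i) q else 0, ?_⟩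
  intro p
  unfold ctcL
  congr 1
  simp_rw [Finset.sum_mul]
  rw [Finset.sum_comm]
  refine Finset.sum_congr rfl fun k hk => ?_
  rw [PowerSeries.coeff_mul, Finset.Nat.sum_antidiagonal_eq_sum_range_succ_mk, Finset.mul_sum]
  have hsub : Finset.range (k + 1) ⊆ Finset.range N := by
    intro i hi
    simp only [Finset.mem_range] at *
    omega
  rw [← Finset.sum_subset hsub]
  · refine Finset.sum_congr rfl fun i hi => ?_
    have : i ≤ k := by simp only [Finset.mem_range] at hi; omega
    simp only [this, if_true]
    ring
  · intro i _ hi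
    have : ¬ i ≤ k := by simp only [Finset.mem_range] at hi; omega
    simp [this]

lemma ctc_beta (i j : ℕ) :
    ∫ t in (0 : ℝ)..1, (t : ℂ) ^ i * (1 - (t : ℂ)) ^ j =
      (i.factorial : ℂ) * j.factorial / (i + j + 1).factorial := by
  have h := Complex.Gamma_mul_Gamma_eq_betaIntegral (s := (i : ℂ) + 1) (t := (j : ℂ) + 1)
    (by simp; positivity) (by simp; positivity)
  have e : (i : ℂ) + 1 + (j + 1) = ((i + j + 1 : ℕ) : ℂ) + 1 := by push_cast; ring
  rw [e, Complex.Gamma_nat_eq_factorial, Complex.Gamma_nat_eq_factorial,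
    Complex.Gamma_nat_eq_factorial] at h
  have h2 : Complex.betaIntegral ((i : ℂ) + 1) ((j : ℂ) + 1) =
      ∫ t in (0 : ℝ)..1, (t : ℂ) ^ i * (1 - (t : ℂ)) ^ j := by
    unfold Complex.betaIntegral
    congr 1
    ext t
    simp [Complex.cpow_natCast]
  have h3 : (((i + j + 1).factorial : ℕ) : ℂ) ≠ 0 := by
    exact_mod_cast (i + j + 1).factorial_ne_zero
  rw [← h2, h, mul_div_cancel_left₀ _ h3]

lemma ctc_choose (k i : ℕ) (hi : i ≤ k) :
    ((k.choose i : ℕ) : ℂ) * ((i.factorial : ℂ) * (k - i).factorial) = k.factorial := by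
  have := Nat.choose_mul_factorial_mul_factorial hi
  rw [← this]; push_cast; ring

lemma ctc_int1 (x y : ℂ) (k : ℕ) :
    ∫ t in (0 : ℝ)..1, (((1 : ℝ) : ℂ)) * (((k : ℂ) + 1) * ((t : ℂ) * x + (1 - (t : ℂ)) * y) ^ k) =
      ∑ i ∈ Finset.range (k + 1), x ^ i * y ^ (k - i) := by
  have e : ∀ t : ℝ, (((1 : ℝ) : ℂ)) * (((k : ℂ) + 1) * ((t : ℂ) * x + (1 - (t : ℂ)) * y) ^ k) =
      ∑ i ∈ Finset.range (k + 1), (((k : ℂ) + 1) * x ^ i * y ^ (k - i) * (k.choose i)) *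
        ((t : ℂ) ^ i * (1 - (t : ℂ)) ^ (k - i)) := by
    intro t
    rw [add_pow, Finset.mul_sum, Finset.mul_sum]
    refine Finset.sum_congr rfl fun i _ => ?_
    rw [mul_pow, mul_pow]; push_cast; ring
  simp_rw [e]
  rw [intervalIntegral.integral_finsetSum]
  · refine Finset.sum_congr rfl fun i hi => ?_
    have hik : i ≤ k := by simp only [Finset.mem_range] at hi; omega
    rw [intervalIntegral.integral_const_mul, ctc_beta]
    have h1 : i + (k - i) + 1 = k + 1 := by omega
    rw [h1, Nat.factorial_succ]
    have h2 := ctc_choose k i hik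
    have h3 : ((k.factorial : ℕ) : ℂ) ≠ 0 := by exact_mod_cast k.factorial_ne_zero
    have h4 : ((k : ℂ) + 1) ≠ 0 := by exact_mod_cast Nat.succ_ne_zero k
    push_cast
    rw [mul_div_assoc', div_eq_iff (mul_ne_zero h4 h3), ← h2]
    ring
  · intro i _
    apply Continuous.intervalIntegrable
    fun_prop

lemma ctc_int2 (x y : ℂ) (k : ℕ) :
    ∫ t in (0 : ℝ)..1, (((2 * t : ℝ) : ℂ)) *
        (((k : ℂ) + 1) * ((k : ℂ) + 2) / 2 * ((t : ℂ) * x + (1 - (t : ℂ)) * y) ^ k) =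
      ∑ i ∈ Finset.range (k + 1), (((i : ℂ) + 1) * x ^ i) * y ^ (k - i) := by
  have e : ∀ t : ℝ, (((2 * t : ℝ) : ℂ)) *
        (((k : ℂ) + 1) * ((k : ℂ) + 2) / 2 * ((t : ℂ) * x + (1 - (t : ℂ)) * y) ^ k) =
      ∑ i ∈ Finset.range (k + 1), (((k : ℂ) + 1) * ((k : ℂ) + 2) * x ^ i * y ^ (k - i) *
        (k.choose i)) * ((t : ℂ) ^ (i + 1) * (1 - (t : ℂ)) ^ (k - i)) := by
    intro t
    rw [add_pow, Finset.mul_sum, Finset.mul_sum]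
    refine Finset.sum_congr rfl fun i _ => ?_
    rw [mul_pow, mul_pow]; push_cast; ring
  simp_rw [e]
  rw [intervalIntegral.integral_finsetSum]
  · refine Finset.sum_congr rfl fun i hi => ?_
    have hik : i ≤ k := by simp only [Finset.mem_range] at hi; omega
    rw [intervalIntegral.integral_const_mul, ctc_beta]
    have h1 : i + 1 + (k - i) + 1 = k + 1 + 1 := by omega
    rw [h1, Nat.factorial_succ (k + 1), Nat.factorial_succ k, Nat.factorial_succ i]
    have h2 := ctc_choose k i hik
    have h3 : ((k.factorial : ℕ) : ℂ) ≠ 0 := by exact_mod_cast k.factorial_ne_zero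
    have h4 : ((k : ℂ) + 1) ≠ 0 := by exact_mod_cast Nat.succ_ne_zero k
    have h5 : ((k : ℂ) + 1 + 1) ≠ 0 := by exact_mod_cast Nat.succ_ne_zero (k + 1)
    push_cast
    rw [mul_div_assoc', div_eq_iff (mul_ne_zero h5 (mul_ne_zero h4 h3)), ← h2]
    ring
  · intro i _
    apply Continuous.intervalIntegrable
    fun_prop

lemma ctcL_integral (b : ℕ → ℂ) (N : ℕ) (q : PowerSeries ℂ) (p : ℝ → PowerSeries ℂ) (w : ℝ → ℝ)
    (C : ℝ) (hw : Continuous w) (hw0 : ∀ t ∈ Set.Icc (0 : ℝ) 1, 0 ≤ w t)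
    (hw1 : ∫ t in (0 : ℝ)..1, w t = 1)
    (hp : ∀ k, Continuous fun t => PowerSeries.coeff k (p t))
    (hq : ∀ k, PowerSeries.coeff k q = ∫ t in (0 : ℝ)..1, (w t : ℂ) * PowerSeries.coeff k (p t))
    (hC : ∀ t ∈ Set.Icc (0 : ℝ) 1, ctcL b N (p t) ≤ C) : ctcL b N q ≤ C := by
  have hcont : Continuous fun t => ctcL b N (p t) := by
    unfold ctcL
    apply Complex.continuous_re.comp
    exact continuous_finsetSum _ fun k _ => continuous_const.mul (hp k)
  have key : ctcL b N q = ∫ t in (0 : ℝ)..1, w t * ctcL b N (p t) := by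
    have h1 : ∑ k ∈ Finset.range N, b k * PowerSeries.coeff k q =
        ∫ t in (0 : ℝ)..1, ∑ k ∈ Finset.range N, (w t : ℂ) * (b k * PowerSeries.coeff k (p t)) := by
      rw [intervalIntegral.integral_finsetSum]
      · refine Finset.sum_congr rfl fun k _ => ?_
        rw [hq k, ← intervalIntegral.integral_const_mul]
        congr 1; ext t; ring
      · intro k _
        apply Continuous.intervalIntegrable
        exact (Complex.continuous_ofReal.comp hw).mul (continuous_const.mul (hp k))
    have h2 : ∀ t, w t * ctcL b N (p t) = Complex.reCLM
        (∑ k ∈ Finset.range N, (w t : ℂ) * (b k * PowerSeries.coeff k (p t))) := by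
      intro t
      rw [← Finset.mul_sum]
      simp [ctcL]
    unfold ctcL at *
    rw [h1]
    simp_rw [h2]
    rw [ContinuousLinearMap.intervalIntegral_comp_comm]
    · rfl
    · apply Continuous.intervalIntegrable
      exact continuous_finsetSum _ fun k _ =>
        (Complex.continuous_ofReal.comp hw).mul (continuous_const.mul (hp k))
  rw [key]
  calc ∫ t in (0 : ℝ)..1, w t * ctcL b N (p t) ≤ ∫ t in (0 : ℝ)..1, w t * C := by
        apply intervalIntegral.integral_mono_on (by norm_num)
        · exact (hw.mul hcont).intervalIntegrable _ _
        · exact (hw.mul continuous_const).intervalIntegrable _ _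
        · intro t ht
          exact mul_le_mul_of_nonneg_left (hC t ht) (hw0 t ht)
    _ = C := by rw [intervalIntegral.integral_mul_const, hw1, one_mul]

lemma ctc_seg {x y : ℂ} (hx : ‖x‖ ≤ 1) (hy : ‖y‖ ≤ 1) {t : ℝ} (ht : t ∈ Set.Icc (0 : ℝ) 1) :
    ‖(t : ℂ) * x + (1 - (t : ℂ)) * y‖ ≤ 1 := by
  have h1 : ‖(t : ℂ)‖ = t := by simp [abs_of_nonneg ht.1]
  have h2 : ‖(1 - (t : ℂ))‖ = 1 - t := by
    rw [← Complex.ofReal_one, ← Complex.ofReal_sub, Complex.norm_real, Real.norm_eq_abs,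
      abs_of_nonneg (by linarith [ht.2])]
  refine (norm_add_le _ _).trans ?_
  rw [norm_mul, norm_mul, h1, h2]
  nlinarith [ht.1, ht.2, norm_nonneg x, norm_nonneg y]

lemma ctc_feyn1 (b : ℕ → ℂ) (N : ℕ) (C : ℝ) {x y : ℂ} (hx : ‖x‖ ≤ 1) (hy : ‖y‖ ≤ 1)
    (h : ∀ a : ℂ, ‖a‖ ≤ 1 → ctcL b N (ctcG2 a) ≤ C) : ctcL b N (ctcG x * ctcG y) ≤ C := by
  refine ctcL_integral b N _ (fun t => ctcG2 ((t : ℂ) * x + (1 - (t : ℂ)) * y)) (fun _ => 1) C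
    continuous_const (fun _ _ => zero_le_one) (by simp) ?_ ?_ ?_
  · intro k
    simp only [ctcG2, PowerSeries.coeff_mk]
    fun_prop
  · intro k
    simp only [ctcG2, ctcG, PowerSeries.coeff_mk, PowerSeries.coeff_mul]
    rw [ctc_int1, Finset.Nat.sum_antidiagonal_eq_sum_range_succ_mk]
  · intro t ht
    exact h _ (ctc_seg hx hy ht)

lemma ctc_feyn2 (b : ℕ → ℂ) (N : ℕ) (C : ℝ) {x y : ℂ} (hx : ‖x‖ ≤ 1) (hy : ‖y‖ ≤ 1)
    (h : ∀ a : ℂ, ‖a‖ ≤ 1 → ctcL b N (ctcG3 a) ≤ C) : ctcL b N (ctcG2 x * ctcG y) ≤ C := by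
  refine ctcL_integral b N _ (fun t => ctcG3 ((t : ℂ) * x + (1 - (t : ℂ)) * y)) (fun t => 2 * t) C
    (by fun_prop) (fun t ht => by linarith [ht.1])
    (by rw [intervalIntegral.integral_const_mul, integral_id]; norm_num) ?_ ?_ ?_
  · intro k
    simp only [ctcG3, PowerSeries.coeff_mk]
    fun_prop
  · intro k
    simp only [ctcG2, ctcG, ctcG3, PowerSeries.coeff_mk, PowerSeries.coeff_mul]
    rw [ctc_int2, Finset.Nat.sum_antidiagonal_eq_sum_range_succ_mk]
  · intro t ht
    exact h _ (ctc_seg hx hy ht)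

lemma ctc_feyn (b : ℕ → ℂ) (N : ℕ) (C : ℝ) (E : PowerSeries ℂ) {x y w : ℂ}
    (hx : ‖x‖ ≤ 1) (hy : ‖y‖ ≤ 1) (hw : ‖w‖ ≤ 1)
    (h : ∀ a : ℂ, ‖a‖ ≤ 1 → ctcL b N (E * ctcG3 a) ≤ C) :
    ctcL b N (E * (ctcG x * ctcG y * ctcG w)) ≤ C := by
  obtain ⟨b1, hb1⟩ := ctcL_mul b N E
  obtain ⟨b2, hb2⟩ := ctcL_mul b1 N (ctcG w)
  rw [mul_comm, hb1, hb2]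
  refine ctc_feyn1 b2 N C hx hy fun d hd => ?_
  rw [← hb2]
  refine ctc_feyn2 b1 N C hd hw fun a ha => ?_
  rw [← hb1, mul_comm]
  exact h a ha

lemma ctc_real_ineq (n p q s t lam : ℝ) (hn : 3 ≤ n) 
    (hlam2 : lam ≤ 2 * n / (n ^ 2 - n + 1)) (hA : p ^ 2 + s ^ 2 ≤ 1) (hB : q ^ 2 + t ^ 2 ≤ 1) :
    lam * (((n + 1) * p + (n - 1) * q) / 2) ^ 2 - n * (p ^ 2 - s ^ 2) - (n - 1) * (p * q - s * t)
      ≤ 2 * n - 1 := by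
  have hd : 0 < n ^ 2 - n + 1 := by nlinarith
  have h1 : lam * (((n + 1) * p + (n - 1) * q) / 2) ^ 2 ≤
      2 * n / (n ^ 2 - n + 1) * (((n + 1) * p + (n - 1) * q) / 2) ^ 2 :=
    mul_le_mul_of_nonneg_right hlam2 (sq_nonneg _)
  have h2 : 2 * n / (n ^ 2 - n + 1) * (((n + 1) * p + (n - 1) * q) / 2) ^ 2 ≤
      (n - 1) / 2 * (p + q) ^ 2 + 2 * n * p ^ 2 := by
    rw [div_mul_eq_mul_div, div_le_iff₀ hd]
    have : ((n - 1) / 2 * (p + q) ^ 2 + 2 * n * p ^ 2) * (n ^ 2 - n + 1) -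
        2 * n * (((n + 1) * p + (n - 1) * q) / 2) ^ 2 =
        (n - 1) / 2 * ((p + q) - 2 * n * p) ^ 2 := by ring
    nlinarith [mul_nonneg (by linarith : 0 ≤ (n - 1) / 2) (sq_nonneg ((p + q) - 2 * n * p))]
  have h3 : 0 ≤ (n - 1) / 2 * (s - t) ^ 2 := mul_nonneg (by linarith) (sq_nonneg _)
  have h4 : n * (p ^ 2 + s ^ 2) ≤ n * 1 := mul_le_mul_of_nonneg_left hA (by linarith)
  have h5 : (n - 1) / 2 * (p ^ 2 + s ^ 2) ≤ (n - 1) / 2 * 1 :=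
    mul_le_mul_of_nonneg_left hA (by linarith)
  have h6 : (n - 1) / 2 * (q ^ 2 + t ^ 2) ≤ (n - 1) / 2 * 1 :=
    mul_le_mul_of_nonneg_left hB (by linarith)
  nlinarith

lemma ctc_extreme (n : ℕ) (hn : 3 ≤ n) (lam : ℝ)
    (hlam1 : 0 < lam) (hlam2 : lam ≤ 2 * (n : ℝ) / ((n : ℝ) ^ 2 - n + 1))
    (s : ℝ) (u : ℂ) (hu : ‖u‖ = 1) (X a : ℂ) (hX : ‖X‖ ≤ 1) (ha : ‖a‖ ≤ 1) :
    ctcL (fun k => if k = n - 1 then 2 * lam * s * u / n else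
        if k = 2 * n - 2 then - u ^ 2 / (2 * n - 1) else 0) (2 * n - 1)
      ((1 + PowerSeries.C X * PowerSeries.X) * ctcG3 a) ≤ 2 * (n : ℝ) - 1 + lam * s ^ 2 := by
  obtain ⟨m, rfl⟩ : ∃ m, n = m + 3 := ⟨n - 3, by omega⟩
  have hcoef : ∀ k : ℕ, PowerSeries.coeff (k + 1)
      ((1 + PowerSeries.C X * PowerSeries.X) * ctcG3 a) =
      ((k : ℂ) + 2) * ((k : ℂ) + 3) / 2 * a ^ (k + 1) +
      X * (((k : ℂ) + 1) * ((k : ℂ) + 2) / 2 * a ^ k) := by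
    intro k
    rw [add_mul, one_mul, mul_assoc, map_add, PowerSeries.coeff_C_mul,
      PowerSeries.coeff_succ_X_mul]
    simp only [ctcG3, PowerSeries.coeff_mk]
    push_cast
    ring
  unfold ctcL
  have hsum : ∀ c : ℕ → ℂ, ∑ k ∈ Finset.range (2 * (m + 3) - 1),
      (if k = m + 3 - 1 then 2 * lam * s * u / ((m + 3 : ℕ) : ℂ) else
        if k = 2 * (m + 3) - 2 then - u ^ 2 / (2 * ((m + 3 : ℕ) : ℂ) - 1) else 0) * c k =
      2 * lam * s * u / ((m + 3 : ℕ) : ℂ) * c (m + 1 + 1) +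
        (- u ^ 2 / (2 * ((m + 3 : ℕ) : ℂ) - 1)) * c (2 * m + 3 + 1) := by
    intro c
    have e : ∀ k : ℕ, (if k = m + 3 - 1 then 2 * lam * s * u / ((m + 3 : ℕ) : ℂ) else
        if k = 2 * (m + 3) - 2 then - u ^ 2 / (2 * ((m + 3 : ℕ) : ℂ) - 1) else 0) * c k =
        (if k = m + 1 + 1 then 2 * lam * s * u / ((m + 3 : ℕ) : ℂ) * c k else 0) +
        (if k = 2 * m + 3 + 1 then (- u ^ 2 / (2 * ((m + 3 : ℕ) : ℂ) - 1)) * c k else 0) := by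
      intro k
      have e1 : m + 3 - 1 = m + 1 + 1 := by omega
      have e2 : 2 * (m + 3) - 2 = 2 * m + 3 + 1 := by omega
      rw [e1, e2]
      by_cases h1 : k = m + 1 + 1
      · have : ¬ k = 2 * m + 3 + 1 := by omega
        rw [if_pos h1, if_pos h1, if_neg this, add_zero]
      · rw [if_neg h1, if_neg h1, zero_add, ite_mul, zero_mul]
    simp_rw [e]
    rw [Finset.sum_add_distrib, Finset.sum_ite_eq', Finset.sum_ite_eq', if_pos, if_pos]
    · simp only [Finset.mem_range]; omega
    · simp only [Finset.mem_range]; omega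
  rw [hsum fun k => PowerSeries.coeff k ((1 + PowerSeries.C X * PowerSeries.X) * ctcG3 a)]
  rw [hcoef, hcoef]
  set A : ℂ := u * a ^ (m + 2) with hA
  set B : ℂ := u * X * a ^ (m + 1) with hB
  have hm : ((m : ℂ) + 3) ≠ 0 := by exact_mod_cast (by omega : m + 3 ≠ 0)
  have hm2 : (2 * ((m : ℂ) + 3) - 1) ≠ 0 := by
    have : (2 * ((m : ℂ) + 3) - 1) = ((2 * m + 5 : ℕ) : ℂ) := by push_cast; ring
    rw [this]
    exact_mod_cast (by omega : 2 * m + 5 ≠ 0)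
  have hval : 2 * lam * s * u / ((m + 3 : ℕ) : ℂ) * ((((m + 1 : ℕ) : ℂ) + 2) *
        (((m + 1 : ℕ) : ℂ) + 3) / 2 * a ^ (m + 1 + 1) +
        X * ((((m + 1 : ℕ) : ℂ) + 1) * (((m + 1 : ℕ) : ℂ) + 2) / 2 * a ^ (m + 1))) +
      (- u ^ 2 / (2 * ((m + 3 : ℕ) : ℂ) - 1)) * ((((2 * m + 3 : ℕ) : ℂ) + 2) *
        (((2 * m + 3 : ℕ) : ℂ) + 3) / 2 * a ^ (2 * m + 3 + 1) +
        X * ((((2 * m + 3 : ℕ) : ℂ) + 1) * (((2 * m + 3 : ℕ) : ℂ) + 2) / 2 * a ^ (2 * m + 3))) =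
      ((lam * s : ℝ) : ℂ) * (((m + 4 : ℝ) : ℂ) * A + ((m + 2 : ℝ) : ℂ) * B)
        - (((m + 3 : ℝ) : ℂ) * (A * A) + ((m + 2 : ℝ) : ℂ) * (A * B)) := by
    rw [hA, hB]
    push_cast
    field_simp
    ring
  rw [hval]
  have hAn : ‖A‖ ≤ 1 := by
    rw [hA, norm_mul, hu, one_mul, norm_pow]
    exact pow_le_one₀ (norm_nonneg _) ha
  have hBn : ‖B‖ ≤ 1 := by
    rw [hB, norm_mul, norm_mul, hu, one_mul, norm_pow]
    exact mul_le_one₀ hX (by positivity) (pow_le_one₀ (norm_nonneg _) ha)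
  have hA2 : A.re ^ 2 + A.im ^ 2 ≤ 1 := by
    have := Complex.sq_norm A
    rw [Complex.normSq_apply] at this
    nlinarith [norm_nonneg A]
  have hB2 : B.re ^ 2 + B.im ^ 2 ≤ 1 := by
    have := Complex.sq_norm B
    rw [Complex.normSq_apply] at this
    nlinarith [norm_nonneg B]
  have key := ctc_real_ineq ((m + 3 : ℕ) : ℝ) A.re B.re A.im B.im lam (by exact_mod_cast hn)
    hlam2 hA2 hB2
  simp only [Complex.sub_re, Complex.add_re, Complex.re_ofReal_mul]
  simp only [Complex.mul_re]
  push_cast at key ⊢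
  set Z : ℝ := ((m : ℝ) + 4) * A.re + (m + 2) * B.re with hZ
  have hJ : 0 ≤ lam * (Z / 2 - s) ^ 2 := mul_nonneg hlam1.le (sq_nonneg _)
  have hZ2 : ((m : ℝ) + 3 + 1) * A.re + (m + 3 - 1) * B.re = Z := by rw [hZ]; ring
  rw [hZ2] at key
  nlinarith

/-- Taylor series as a formal power series. -/
noncomputable def ctcT (f : ℂ → ℂ) : PowerSeries ℂ := PowerSeries.mk (taylorCoeff f)

lemma ctc_analyticAt {f : ℂ → ℂ} (hf : DifferentiableOn ℂ f (ball (0 : ℂ) 1)) :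
    AnalyticAt ℂ f 0 :=
  hf.analyticAt (ball_mem_nhds _ one_pos)

lemma ctcT_mul {f g : ℂ → ℂ} (hf : AnalyticAt ℂ f 0) (hg : AnalyticAt ℂ g 0) :
    ctcT (fun z => f z * g z) = ctcT f * ctcT g := by
  ext k
  rw [PowerSeries.coeff_mul, Finset.Nat.sum_antidiagonal_eq_sum_range_succ_mk]
  simp only [ctcT, PowerSeries.coeff_mk, taylorCoeff]
  rw [iteratedDeriv_fun_mul hf.contDiffAt hg.contDiffAt, Finset.sum_div]
  refine Finset.sum_congr rfl fun i hi => ?_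
  have hik : i ≤ k := by simp only [Finset.mem_range] at hi; omega
  have h2 := ctc_choose k i hik
  have h3 : ((k.factorial : ℕ) : ℂ) ≠ 0 := by exact_mod_cast k.factorial_ne_zero
  have h4 : ((i.factorial : ℕ) : ℂ) ≠ 0 := by exact_mod_cast i.factorial_ne_zero
  have h5 : (((k - i).factorial : ℕ) : ℂ) ≠ 0 := by exact_mod_cast (k - i).factorial_ne_zero
  rw [div_mul_div_comm, div_eq_div_iff h3 (mul_ne_zero h4 h5), ← h2]
  ring

lemma ctcT_congr {f g : ℂ → ℂ} (h : Set.EqOn f g (ball (0 : ℂ) 1)) : ctcT f = ctcT g := by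
  ext k
  simp only [ctcT, PowerSeries.coeff_mk, taylorCoeff]
  have : f =ᶠ[nhds 0] g := Filter.eventuallyEq_of_mem (ball_mem_nhds _ one_pos) h
  rw [this.iteratedDeriv_eq]

lemma ctc_coeff_avg {Q : ℂ → ℂ} (hQ : DifferentiableOn ℂ Q (ball (0 : ℂ) 1)) {r : ℝ} (hr0 : 0 < r)
    (hr1 : r < 1) (k : ℕ) :
    Real.circleAverage (fun z => Q z * (z ^ k)⁻¹) 0 r = taylorCoeff Q k := by
  have hd : DiffContOnCl ℂ Q (ball (0 : ℂ) r) := by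
    apply DifferentiableOn.diffContOnCl
    apply hQ.mono
    rw [closure_ball _ hr0.ne']
    exact closedBall_subset_ball hr1
  have h := hd.circleIntegral_one_div_sub_center_pow_smul hr0 k
  rw [Real.circleAverage_eq_circleIntegral hr0.ne']
  have e : (fun z : ℂ => (z - 0)⁻¹ • (Q z * (z ^ k)⁻¹)) =
      fun z : ℂ => (1 / (z - 0) ^ (k + 1)) • Q z := by
    ext z
    simp only [sub_zero, smul_eq_mul, pow_succ, one_div, mul_inv]
    ring
  rw [e, h, taylorCoeff, smul_eq_mul, smul_eq_mul]
  have : (2 * Real.pi * I : ℂ) ≠ 0 := Complex.two_pi_I_ne_zero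
  field_simp

lemma ctc_pos_avg {Q : ℂ → ℂ} (hQ : DifferentiableOn ℂ Q (ball (0 : ℂ) 1)) {r : ℝ} (hr0 : 0 < r)
    (hr1 : r < 1) (k : ℕ) :
    Real.circleAverage (fun z => Q z * z ^ (k + 1)) 0 r = 0 := by
  have hd : DiffContOnCl ℂ (fun z => Q z * z ^ (k + 1)) (ball (0 : ℂ) |r|) := by
    apply DifferentiableOn.diffContOnCl
    rw [abs_of_pos hr0, closure_ball _ hr0.ne']
    refine DifferentiableOn.mul (hQ.mono (closedBall_subset_ball hr1)) ?_
    fun_prop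
  rw [hd.circleAverage]
  simp

lemma ctc_herglotz_r {Q : ℂ → ℂ} (hQ : DifferentiableOn ℂ Q (ball (0 : ℂ) 1))
    (hre : ∀ z ∈ ball (0 : ℂ) 1, 0 ≤ (Q z).re) (N : ℕ) (β : ℕ → ℂ) (M : ℝ)
    (hM : ∀ x : ℂ, ‖x‖ = 1 → 2 * (∑ k ∈ Finset.range N, β k * x ^ (k + 1)).re ≤ M)
    {r : ℝ} (hr0 : 0 < r) (hr1 : r < 1) :
    (∑ k ∈ Finset.range N, β k * (r : ℂ) ^ (k + 1) * taylorCoeff Q (k + 1)).re ≤ M * (Q 0).re := by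
  have hrC : (r : ℂ) ≠ 0 := by exact_mod_cast hr0.ne'
  have hcQ : ContinuousOn Q (sphere (0 : ℂ) r) := by
    apply hQ.continuousOn.mono
    exact sphere_subset_closedBall.trans (closedBall_subset_ball hr1)
  have hz0 : ∀ z ∈ sphere (0 : ℂ) r, z ≠ 0 := by
    intro z hz h
    rw [mem_sphere_zero_iff_norm, h, norm_zero] at hz
    exact hr0.ne hz
  set F : ℕ → ℂ → ℂ := fun k z =>
    (β k * (r : ℂ) ^ (k + 1)) • (Q z * (z ^ (k + 1))⁻¹) +
      ((starRingEnd ℂ) (β k) * ((r : ℂ) ^ (k + 1))⁻¹) • (Q z * z ^ (k + 1)) with hF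
  have hi1 : ∀ k, CircleIntegrable (fun z => Q z * (z ^ (k + 1))⁻¹) 0 r := by
    intro k
    apply ContinuousOn.circleIntegrable hr0.le
    refine hcQ.mul (ContinuousOn.inv₀ (by fun_prop) fun z hz => pow_ne_zero _ (hz0 z hz))
  have hi2 : ∀ k, CircleIntegrable (fun z => Q z * z ^ (k + 1)) 0 r := by
    intro k
    apply ContinuousOn.circleIntegrable hr0.le
    exact hcQ.mul (by fun_prop)
  have hi0 : CircleIntegrable Q 0 r := hcQ.circleIntegrable hr0.le
  have hiF : ∀ k, CircleIntegrable (F k) 0 r := fun k =>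
    (hi1 k).const_smul.add (hi2 k).const_smul
  have haF : ∀ k, Real.circleAverage (F k) 0 r =
      β k * (r : ℂ) ^ (k + 1) * taylorCoeff Q (k + 1) := by
    intro k
    rw [hF]
    simp only
    rw [Real.circleAverage_fun_add, Real.circleAverage_fun_smul, Real.circleAverage_fun_smul,
      ctc_coeff_avg hQ hr0 hr1, ctc_pos_avg hQ hr0 hr1]
    · simp
    · exact (hi1 k).const_smul
    · exact (hi2 k).const_smul
  have ha0 : Real.circleAverage Q 0 r = Q 0 := by
    have := ctc_coeff_avg hQ hr0 hr1 0
    simpa [taylorCoeff] using this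
  have hiS : CircleIntegrable (fun z => ∑ k ∈ Finset.range N, F k z) 0 r :=
    CircleIntegrable.fun_sum _ fun k _ => hiF k
  have htot : Real.circleAverage (fun z => (M : ℂ) • Q z - ∑ k ∈ Finset.range N, F k z) 0 r =
      (M : ℂ) * Q 0 - ∑ k ∈ Finset.range N, β k * (r : ℂ) ^ (k + 1) * taylorCoeff Q (k + 1) := by
    rw [Real.circleAverage_fun_sub, Real.circleAverage_fun_smul, ha0,
      Real.circleAverage_fun_sum]
    · simp_rw [haF]; rfl
    · intro k _; exact hiF k
    · exact hi0.const_smul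
    · exact hiS
  have hiT : CircleIntegrable (fun z => (M : ℂ) • Q z - ∑ k ∈ Finset.range N, F k z) 0 r :=
    hi0.const_smul.sub hiS
  have hre2 := Complex.reCLM.circleAverage_comp_comm hiT
  have hnn : 0 ≤ Real.circleAverage
      (Complex.reCLM ∘ (fun z => (M : ℂ) • Q z - ∑ k ∈ Finset.range N, F k z)) 0 r := by
    apply Real.circleAverage_nonneg_of_nonneg
    intro z hz
    rw [abs_of_pos hr0] at hz
    have hzn : ‖z‖ = r := mem_sphere_zero_iff_norm.1 hz
    have hzne := hz0 z hz
    set x : ℂ := r / z with hx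
    have hxn : ‖x‖ = 1 := by
      rw [hx, norm_div, hzn, Complex.norm_real, Real.norm_eq_abs, abs_of_pos hr0, div_self hr0.ne']
    have hxc : z / r = (starRingEnd ℂ) x := by
      rw [← Complex.inv_eq_conj hxn, hx, inv_div]
    have hsumF : ∑ k ∈ Finset.range N, F k z =
        ((2 * (∑ k ∈ Finset.range N, β k * x ^ (k + 1)).re : ℝ) : ℂ) * Q z := by
      set S := ∑ k ∈ Finset.range N, β k * x ^ (k + 1) with hS
      have h1 : ((2 * S.re : ℝ) : ℂ) = S + (starRingEnd ℂ) S := by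
        rw [Complex.add_conj]
      rw [h1, hS, map_sum, ← Finset.sum_add_distrib, Finset.sum_mul]
      refine Finset.sum_congr rfl fun k _ => ?_
      rw [map_mul, map_pow, ← hxc, hx, hF]
      simp only [smul_eq_mul, div_pow]
      field_simp
    have hzb : z ∈ ball (0 : ℂ) 1 := by rw [mem_ball_zero_iff, hzn]; exact hr1
    simp only [Function.comp_apply, Complex.reCLM_apply]
    rw [hsumF, smul_eq_mul, ← sub_mul, ← Complex.ofReal_sub, Complex.re_ofReal_mul]
    exact mul_nonneg (by linarith [hM x hxn]) (hre z hzb)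
  rw [hre2, htot] at hnn
  simp only [Complex.reCLM_apply, Complex.sub_re, Complex.re_ofReal_mul] at hnn
  linarith

lemma ctc_herglotz {Q : ℂ → ℂ} (hQ : DifferentiableOn ℂ Q (ball (0 : ℂ) 1))
    (hre : ∀ z ∈ ball (0 : ℂ) 1, 0 ≤ (Q z).re) (N : ℕ) (β : ℕ → ℂ) (M : ℝ)
    (hM : ∀ x : ℂ, ‖x‖ = 1 → 2 * (∑ k ∈ Finset.range N, β k * x ^ (k + 1)).re ≤ M) :
    (∑ k ∈ Finset.range N, β k * taylorCoeff Q (k + 1)).re ≤ M * (Q 0).re := by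
  have hc : Continuous fun r : ℝ =>
      (∑ k ∈ Finset.range N, β k * (r : ℂ) ^ (k + 1) * taylorCoeff Q (k + 1)).re := by
    apply Complex.continuous_re.comp
    fun_prop
  have ht := (hc.tendsto 1).mono_left (nhdsWithin_le_nhds (s := Set.Iio 1))
  simp only [Complex.ofReal_one, one_pow, mul_one] at ht
  refine le_of_tendsto ht ?_
  filter_upwards [Ioo_mem_nhdsLT (zero_lt_one' ℝ)] with r hr
  exact ctc_herglotz_r hQ hre N β M hM hr.1 hr.2

lemma ctcL_succ (b : ℕ → ℂ) (N : ℕ) (p : PowerSeries ℂ) :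
    ctcL b (N + 1) p = (∑ k ∈ Finset.range N, b (k + 1) * PowerSeries.coeff (k + 1) p).re +
      (b 0 * PowerSeries.coeff 0 p).re := by
  unfold ctcL
  rw [Finset.sum_range_succ', Complex.add_re]

lemma ctc_hull_h {h : ℂ → ℂ} (hd : DifferentiableOn ℂ h (ball (0 : ℂ) 1)) (h0 : h 0 = 1)
    (hre : ∀ z ∈ ball (0 : ℂ) 1, 1 / 2 ≤ (h z).re) (b : ℕ → ℂ) (N : ℕ) (C : ℝ)
    (hC : ∀ x : ℂ, ‖x‖ = 1 → ctcL b N (ctcG x) ≤ C) : ctcL b N (ctcT h) ≤ C := by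
  rcases N with _ | N
  · have := hC 1 (by simp)
    simpa [ctcL] using this
  have hQ : DifferentiableOn ℂ (fun z => h z - 1 / 2) (ball (0 : ℂ) 1) := hd.sub_const _
  have key := ctc_herglotz hQ (fun z hz => by
    have := hre z hz
    simp only [Complex.sub_re]
    norm_num
    linarith) N (fun k => b (k + 1)) (2 * (C - (b 0).re)) (by
    intro x hx
    have := hC x hx
    rw [ctcL_succ] at this
    simp only [ctcG, PowerSeries.coeff_mk, pow_zero, mul_one] at this
    linarith)
  rw [ctcL_succ]
  have hT : ∀ k, taylorCoeff (fun z => h z - 1 / 2) (k + 1) = taylorCoeff h (k + 1) := by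
    intro k
    unfold taylorCoeff
    rw [iteratedDeriv_succ', iteratedDeriv_succ']
    simp only [deriv_sub_const_fun]
  simp_rw [hT] at key
  simp only [ctcT, PowerSeries.coeff_mk]
  have e0 : taylorCoeff h 0 = 1 := by simp [taylorCoeff, h0]
  have e1 : (h 0 - 1 / 2).re = 1 / 2 := by rw [h0]; norm_num
  rw [e0, mul_one]
  rw [e1] at key
  linarith

lemma ctc_hull_p {q : ℂ → ℂ} {e : ℂ} (he : ‖e‖ = 1)
    (hd : DifferentiableOn ℂ q (ball (0 : ℂ) 1)) (h0 : q 0 = 1)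
    (hre : ∀ z ∈ ball (0 : ℂ) 1, 0 ≤ (e * q z).re) (b : ℕ → ℂ) (N : ℕ) (C : ℝ)
    (hC : ∀ x : ℂ, ‖x‖ = 1 → ctcL b N
      ((1 + PowerSeries.C ((starRingEnd ℂ) e ^ 2 * x) * PowerSeries.X) * ctcG x) ≤ C) :
    ctcL b N (ctcT q) ≤ C := by
  rcases N with _ | N
  · have := hC 1 (by simp)
    simpa [ctcL] using this
  have hee : e * (starRingEnd ℂ) e = 1 := by
    rw [Complex.mul_conj, Complex.normSq_eq_norm_sq, he]; norm_num
  have hQ : DifferentiableOn ℂ (fun z => e * q z) (ball (0 : ℂ) 1) := hd.const_mul e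
  set β : ℕ → ℂ := fun k => (starRingEnd ℂ) e * b (k + 1) with hβ
  have hT : ∀ k, β k * taylorCoeff (fun z => e * q z) (k + 1) =
      b (k + 1) * taylorCoeff q (k + 1) := by
    intro k
    unfold taylorCoeff
    rw [iteratedDeriv_const_mul_field, hβ]
    linear_combination (b (k + 1) * (iteratedDeriv (k + 1) q 0 / ((k + 1).factorial : ℂ))) * hee
  have hpos : 0 ≤ e.re := by
    have := hre 0 (mem_ball_self one_pos)
    rwa [h0, mul_one] at this
  have hC2 : ∀ x : ℂ, ‖x‖ = 1 →
      2 * e.re * (∑ k ∈ Finset.range N, β k * x ^ (k + 1)).re + (b 0).re ≤ C := by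
    intro x hx
    have := hC x hx
    rw [ctcL_succ] at this
    have e1 : ∀ k : ℕ, PowerSeries.coeff (k + 1)
        ((1 + PowerSeries.C ((starRingEnd ℂ) e ^ 2 * x) * PowerSeries.X) * ctcG x) =
        ((2 * e.re : ℝ) : ℂ) * (starRingEnd ℂ) e * x ^ (k + 1) := by
      intro k
      rw [add_mul, one_mul, mul_assoc, map_add, PowerSeries.coeff_C_mul,
        PowerSeries.coeff_succ_X_mul, ← Complex.add_conj]
      simp only [ctcG, PowerSeries.coeff_mk]
      linear_combination (- x ^ (k + 1)) * hee
    have e2 : PowerSeries.coeff 0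
        ((1 + PowerSeries.C ((starRingEnd ℂ) e ^ 2 * x) * PowerSeries.X) * ctcG x) = 1 := by
      simp [ctcG]
    rw [e2, mul_one] at this
    simp_rw [e1] at this
    have e3 : ∑ k ∈ Finset.range N, b (k + 1) *
        (((2 * e.re : ℝ) : ℂ) * (starRingEnd ℂ) e * x ^ (k + 1)) =
        ((2 * e.re : ℝ) : ℂ) * ∑ k ∈ Finset.range N, β k * x ^ (k + 1) := by
      rw [Finset.mul_sum]
      refine Finset.sum_congr rfl fun k _ => ?_
      rw [hβ]; ring
    rw [e3, Complex.re_ofReal_mul] at this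
    exact this
  have hfin : (∑ k ∈ Finset.range N, b (k + 1) * taylorCoeff q (k + 1)).re ≤ C - (b 0).re := by
    simp_rw [← hT]
    rcases hpos.eq_or_lt with hz | hp
    · have key := ctc_herglotz hQ hre N β (2 * ∑ k ∈ Finset.range N, ‖β k‖) (by
        intro x hx
        refine mul_le_mul_of_nonneg_left ?_ (by norm_num)
        refine (Complex.re_le_norm _).trans ((norm_sum_le _ _).trans ?_)
        refine Finset.sum_le_sum fun k _ => ?_
        rw [norm_mul, norm_pow, hx, one_pow, mul_one])
      have h1 := hC2 1 (by simp)
      rw [h0, mul_one, ← hz, mul_zero] at key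
      rw [← hz] at h1
      linarith
    · have key := ctc_herglotz hQ hre N β ((C - (b 0).re) / e.re) (by
        intro x hx
        rw [le_div_iff₀ hp]
        linarith [hC2 x hx])
      rw [h0, mul_one, div_mul_cancel₀ _ hp.ne'] at key
      exact key
  rw [ctcL_succ]
  simp only [ctcT, PowerSeries.coeff_mk]
  have e0 : taylorCoeff q 0 = 1 := by simp [taylorCoeff, h0]
  rw [e0, mul_one]
  linarith

lemma ctc_jack {ω : ℂ → ℂ} (hd : DifferentiableOn ℂ ω (ball (0 : ℂ) 1)) (h0 : ω 0 = 0)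
    (h1 : ∀ z ∈ ball (0 : ℂ) 1, ω z ≠ 1)
    (hre : ∀ z ∈ ball (0 : ℂ) 1, z ≠ 0 → 0 < (1 + 2 * z * deriv ω z / (1 - ω z)).re) :
    ∀ z ∈ ball (0 : ℂ) 1, ‖ω z‖ < 1 := by
  intro z1 hz1
  by_contra hcon
  push Not at hcon
  have hsub : closedBall (0 : ℂ) ‖z1‖ ⊆ ball (0 : ℂ) 1 :=
    closedBall_subset_ball (mem_ball_zero_iff.1 hz1)
  have hcont : ContinuousOn (fun z => ‖ω z‖) (closedBall (0 : ℂ) ‖z1‖) :=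
    (hd.continuousOn.mono hsub).norm
  set K : Set ℂ := closedBall (0 : ℂ) ‖z1‖ ∩ (fun z => ‖ω z‖) ⁻¹' Set.Ici 1 with hK
  have hKc : IsCompact K := (isCompact_closedBall (0 : ℂ) ‖z1‖).of_isClosed_subset
    (hcont.preimage_isClosed_of_isClosed isClosed_closedBall isClosed_Ici) Set.inter_subset_left
  have hKn : K.Nonempty := ⟨z1, by simp, hcon⟩
  obtain ⟨z0, hz0K, hmin⟩ := hKc.exists_isMinOn hKn (continuous_norm.continuousOn)
  have hz0b : z0 ∈ ball (0 : ℂ) 1 := hsub hz0K.1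
  have hz0n : ‖z0‖ ≤ ‖z1‖ := by simpa using hz0K.1
  have hω0 : 1 ≤ ‖ω z0‖ := hz0K.2
  have hz0 : z0 ≠ 0 := by
    rintro rfl
    rw [h0, norm_zero] at hω0
    linarith
  have hR : 0 < ‖z0‖ := norm_pos_iff.2 hz0
  have hin : ∀ z ∈ ball (0 : ℂ) ‖z0‖, ‖ω z‖ < 1 := by
    intro z hz
    by_contra hc
    push Not at hc
    rw [mem_ball_zero_iff] at hz
    have hzK : z ∈ K := ⟨by rw [mem_closedBall_zero_iff]; linarith, hc⟩
    have := hmin hzK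
    simp only [Set.mem_ofPred_eq] at this
    linarith
  have hbsub : ball (0 : ℂ) ‖z0‖ ⊆ ball (0 : ℂ) 1 :=
    ball_subset_ball (mem_ball_zero_iff.1 hz0b).le
  have hdz0 : DifferentiableAt ℂ ω z0 := hd.differentiableAt (isOpen_ball.mem_nhds hz0b)
  have hle : ‖ω z0‖ ≤ 1 := by
    have hcl : z0 ∈ closure (ball (0 : ℂ) ‖z0‖) := by
      rw [closure_ball _ hR.ne']; simp
    exact ContinuousWithinAt.closure_le (f := fun z => ‖ω z‖) (g := fun _ => (1 : ℝ)) hcl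
      hdz0.continuousAt.norm.continuousWithinAt continuousWithinAt_const
      (fun y hy => (hin y hy).le)
  have hone : ‖ω z0‖ = 1 := le_antisymm hle hω0
  have hschwarz : ∀ z ∈ ball (0 : ℂ) ‖z0‖, ‖ω z‖ ≤ 1 / ‖z0‖ * ‖z‖ := by
    intro z hz
    have := Complex.dist_le_div_mul_dist_of_mapsTo_ball (R₂ := 1) (hd.mono hbsub) (by
      intro y hy
      rw [h0, mem_closedBall_zero_iff]
      exact (hin y hy).le) hz
    simpa [h0] using this
  set w := ω z0 with hw
  have hw1 : 1 - w ≠ 0 := sub_ne_zero.2 (h1 z0 hz0b).symm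
  have hww : (starRingEnd ℂ) w * w = 1 := by
    rw [mul_comm, Complex.mul_conj, Complex.normSq_eq_norm_sq, hone]; norm_num
  set v : ℂ := 2 * w / (1 - w) with hv
  have hvre : v.re = -1 := by
    have hns : Complex.normSq w = 1 := by rw [Complex.normSq_eq_norm_sq, hone]; norm_num
    have hns2 : Complex.normSq (1 - w) = 2 - 2 * w.re := by
      rw [Complex.normSq_apply] at *
      simp only [Complex.sub_re, Complex.sub_im, Complex.one_re, Complex.one_im]
      nlinarith
    have hpos : 0 < Complex.normSq (1 - w) := Complex.normSq_pos.2 hw1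
    have e : v = 2 * w * (starRingEnd ℂ) (1 - w) / (Complex.normSq (1 - w) : ℂ) := by
      rw [hv, div_eq_div_iff hw1 (by exact_mod_cast hpos.ne'), ← Complex.mul_conj]
      ring
    have e2 : 2 * w * (starRingEnd ℂ) (1 - w) = 2 * w - 2 := by
      rw [map_sub, map_one]
      linear_combination (-2) * hww
    rw [e, e2, Complex.div_ofReal_re, div_eq_iff hpos.ne', hns2]
    simp
  have hc : HasDerivAt (fun t : ℝ => z0 * (1 + (t : ℂ) * v)) (z0 * v) 0 := by
    have : HasDerivAt (fun t : ℝ => (t : ℂ)) 1 0 := Complex.ofRealCLM.hasDerivAt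
    simpa using ((this.mul_const v).const_add 1).const_mul z0
  have hc1 : HasDerivAt (fun t : ℝ => 1 + (t : ℂ) * v) v 0 := by
    have : HasDerivAt (fun t : ℝ => (t : ℂ)) 1 0 := Complex.ofRealCLM.hasDerivAt
    simpa using ((this.mul_const v).const_add 1)
  have hωc : HasDerivAt (fun t : ℝ => ω (z0 * (1 + (t : ℂ) * v))) (deriv ω z0 * (z0 * v)) 0 := by
    have hh : HasDerivAt ω (deriv ω z0) ((fun t : ℝ => z0 * (1 + (t : ℂ) * v)) 0) := by
      simpa using hdz0.hasDerivAt
    exact hh.comp (0 : ℝ) hc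
  have hψ := hωc.norm_sq.sub hc1.norm_sq
  have hψ0 := hasDerivAt_iff_tendsto_slope.1 hψ
  have hψ1 := hψ0.mono_left (nhdsWithin_mono (0 : ℝ) (s := Set.Ioi 0) (t := {0}ᶜ)
    (fun x hx => (ne_of_gt hx : x ≠ 0)))
  have hdle := le_of_tendsto (b := 0) hψ1 (by
    have hsmall : ∀ᶠ t : ℝ in nhdsWithin 0 (Set.Ioi 0), t * ‖v‖ ^ 2 < 2 := by
      apply Filter.Eventually.filter_mono nhdsWithin_le_nhds
      have : Filter.Tendsto (fun t : ℝ => t * ‖v‖ ^ 2) (nhds 0) (nhds (0 * ‖v‖ ^ 2)) :=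
        (continuous_id.mul continuous_const).tendsto 0
      rw [zero_mul] at this
      exact this.eventually (gt_mem_nhds (by norm_num))
    filter_upwards [hsmall, self_mem_nhdsWithin] with t ht ht0
    have ht0 : 0 < t := ht0
    have hn1 : ‖1 + (t : ℂ) * v‖ ^ 2 < 1 := by
      rw [← Complex.normSq_eq_norm_sq] at *
      rw [Complex.normSq_apply] at *
      simp only [Complex.add_re, Complex.add_im, Complex.one_re, Complex.one_im,
        Complex.re_ofReal_mul, Complex.im_ofReal_mul, hvre] at *
      nlinarith
    have hn2 : ‖1 + (t : ℂ) * v‖ < 1 := by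
      by_contra hc
      push Not at hc
      nlinarith
    have hmem : z0 * (1 + (t : ℂ) * v) ∈ ball (0 : ℂ) ‖z0‖ := by
      rw [mem_ball_zero_iff, norm_mul]
      nlinarith
    have hs := hschwarz _ hmem
    rw [norm_mul, ← mul_assoc, one_div, inv_mul_cancel₀ hR.ne', one_mul] at hs
    rw [slope_def_field]
    apply div_nonpos_of_nonpos_of_nonneg
    · simp only [Pi.sub_apply, Complex.ofReal_zero, zero_mul, add_zero, mul_one, norm_one, ← hw,
        hone]
      have := pow_le_pow_left₀ (norm_nonneg _) hs 2
      linarith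
    · linarith)
  simp only [Complex.ofReal_zero, zero_mul, add_zero, mul_one, ← hw, Complex.inner] at hdle
  have e1 : deriv ω z0 * (z0 * v) * (starRingEnd ℂ) w = 2 * z0 * deriv ω z0 / (1 - w) := by
    have : deriv ω z0 * (z0 * v) * (starRingEnd ℂ) w =
        (2 * z0 * deriv ω z0 / (1 - w)) * ((starRingEnd ℂ) w * w) := by rw [hv]; ring
    rw [this, hww, mul_one]
  rw [e1, map_one, mul_one, hvre] at hdle
  have := hre z0 hz0b hz0
  rw [Complex.add_re, Complex.one_re, ← hw] at this
  linarith

lemma ctc_starlike {g : ℂ → ℂ} (hg : IsStarlikeFn g) :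
    ∃ h : ℂ → ℂ, DifferentiableOn ℂ h (ball (0 : ℂ) 1) ∧ h 0 = 1 ∧
      (∀ z ∈ ball (0 : ℂ) 1, g z = z * (h z * h z)) ∧ (∀ z, h z ≠ 0) ∧
      ∀ z ∈ ball (0 : ℂ) 1, 1 / 2 ≤ (h z).re := by
  obtain ⟨gd, g0, g1, gre⟩ := hg
  set G : ℂ → ℂ := dslope g 0 with hG
  have hGd : DifferentiableOn ℂ G (ball (0 : ℂ) 1) :=
    (Complex.differentiableOn_dslope (ball_mem_nhds _ one_pos)).2 gd
  have hgG : ∀ z, g z = z * G z := by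
    intro z
    have := sub_smul_dslope g 0 z
    simp only [sub_zero, g0, smul_eq_mul] at this
    exact this.symm
  have hG0 : G 0 = 1 := by rw [hG, dslope_same, g1]
  have hGne : ∀ z ∈ ball (0 : ℂ) 1, G z ≠ 0 := by
    intro z hz hzG
    by_cases hz0 : z = 0
    · rw [hz0, hG0] at hzG; exact one_ne_zero hzG
    · have := gre z ⟨hz, hz0⟩
      rw [hgG z, hzG, mul_zero, div_zero] at this
      simp at this
  have hGat : ∀ z ∈ ball (0 : ℂ) 1, DifferentiableAt ℂ G z := fun z hz =>
    hGd.differentiableAt (isOpen_ball.mem_nhds hz)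
  have hLd : DifferentiableOn ℂ (fun z => deriv G z / (2 * G z)) (ball (0 : ℂ) 1) := by
    refine DifferentiableOn.div (hGd.deriv isOpen_ball) (hGd.const_mul 2) ?_
    intro z hz
    exact mul_ne_zero two_ne_zero (hGne z hz)
  obtain ⟨φ, hφ0, hφ⟩ := hLd.isExactOn_ball.with_val_at 0 0
  have hsq : ∀ z ∈ ball (0 : ℂ) 1, G z = Complex.exp (φ z) * Complex.exp (φ z) := by
    have hder : ∀ z ∈ ball (0 : ℂ) 1, HasDerivAt (fun z => G z * Complex.exp (-2 * φ z)) 0 z := by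
      intro z hz
      have h1 := (hGat z hz).hasDerivAt.mul (((hφ z hz).const_mul (-2)).cexp)
      convert! h1 using 1
      have := hGne z hz
      field_simp
      ring
    intro z hz
    have hconst := isOpen_ball.is_const_of_deriv_eq_zero (convex_ball (0 : ℂ) 1).isPreconnected
      (fun y hy => (hder y hy).differentiableAt.differentiableWithinAt)
      (fun y hy => (hder y hy).deriv) hz (mem_ball_self one_pos)
    simp only [hφ0, hG0, mul_zero, Complex.exp_zero, mul_one] at hconst
    rw [← Complex.exp_add]
    have e : Complex.exp (-2 * φ z) * Complex.exp (φ z + φ z) = 1 := by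
      rw [← Complex.exp_add, ← Complex.exp_zero]; congr 1; ring
    linear_combination (Complex.exp (φ z + φ z)) * hconst - G z * e
  set ω : ℂ → ℂ := fun z => 1 - Complex.exp (-φ z) with hω
  have hωder : ∀ z ∈ ball (0 : ℂ) 1,
      HasDerivAt ω (Complex.exp (-φ z) * (deriv G z / (2 * G z))) z := by
    intro z hz
    have h1 := ((hφ z hz).neg.cexp).const_sub 1
    convert! h1 using 1
    simp only [Pi.neg_apply]
    ring
  have hjack := ctc_jack (ω := ω)
    (fun y hy => (hωder y hy).differentiableAt.differentiableWithinAt)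
    (by simp [hω, hφ0])
    (by
      intro z _ h
      simp only [hω, sub_eq_self] at h
      exact Complex.exp_ne_zero _ h)
    (by
      intro z hz hz0
      have hg' : HasDerivAt g (1 * G z + z * deriv G z) z := by
        have h1 := (hasDerivAt_id z).mul (hGat z hz).hasDerivAt
        have e : g = fun z => id z * G z := funext hgG
        rw [e]
        exact h1
      have h2 := gre z ⟨hz, hz0⟩
      rw [hg'.deriv, hgG z] at h2
      convert! h2 using 2
      rw [(hωder z hz).deriv]
      have h3 := hGne z hz
      have h4 : 1 - ω z = Complex.exp (-φ z) := by simp [hω]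
      rw [h4]
      have h5 := Complex.exp_ne_zero (-φ z)
      field_simp)
  refine ⟨fun z => Complex.exp (φ z), ?_, by simp [hφ0], ?_, fun z => Complex.exp_ne_zero _, ?_⟩
  · intro z hz
    exact (hφ z hz).cexp.differentiableAt.differentiableWithinAt
  · intro z hz
    rw [hgG z, hsq z hz]
  · intro z hz
    have hlt := hjack z hz
    set w := Complex.exp (-φ z) with hw
    have hwe : Complex.exp (φ z) = w⁻¹ := by rw [hw, Complex.exp_neg, inv_inv]
    have hwne : w ≠ 0 := Complex.exp_ne_zero _
    have hn : 0 < Complex.normSq w := Complex.normSq_pos.2 hwne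
    have hlt2 : Complex.normSq (1 - w) < 1 := by
      rw [Complex.normSq_eq_norm_sq]
      have : ‖1 - w‖ < 1 := hlt
      nlinarith [norm_nonneg (1 - w)]
    simp only [hwe, Complex.inv_re]
    rw [div_le_div_iff₀ (by norm_num) hn]
    rw [Complex.normSq_apply] at *
    simp only [Complex.sub_re, Complex.sub_im, Complex.one_re, Complex.one_im] at hlt2
    nlinarith

lemma ctc_twosum (n : ℕ) (hn : 3 ≤ n) (p r : ℂ) (c : ℕ → ℂ) :
    ∑ k ∈ Finset.range (2 * n - 1),
      (if k = n - 1 then p else if k = 2 * n - 2 then r else 0) * c k =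
      p * c (n - 1) + r * c (2 * n - 2) := by
  have e : ∀ k : ℕ, (if k = n - 1 then p else if k = 2 * n - 2 then r else 0) * c k =
      (if k = n - 1 then p * c k else 0) + (if k = 2 * n - 2 then r * c k else 0) := by
    intro k
    by_cases h1 : k = n - 1
    · have : ¬ k = 2 * n - 2 := by omega
      rw [if_pos h1, if_pos h1, if_neg this, add_zero]
    · rw [if_neg h1, if_neg h1, zero_add, ite_mul, zero_mul]
  simp_rw [e]
  rw [Finset.sum_add_distrib, Finset.sum_ite_eq', Finset.sum_ite_eq', if_pos, if_pos]
  · simp only [Finset.mem_range]; omega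
  · simp only [Finset.mem_range]; omega

lemma ctc_hull_all {q h : ℂ → ℂ} {e : ℂ} (he : ‖e‖ = 1)
    (hqd : DifferentiableOn ℂ q (ball (0 : ℂ) 1)) (q0 : q 0 = 1)
    (hqre : ∀ z ∈ ball (0 : ℂ) 1, 0 ≤ (e * q z).re)
    (hd : DifferentiableOn ℂ h (ball (0 : ℂ) 1)) (h0 : h 0 = 1)
    (hre : ∀ z ∈ ball (0 : ℂ) 1, 1 / 2 ≤ (h z).re) (b : ℕ → ℂ) (N : ℕ) (C : ℝ)
    (hC : ∀ X a : ℂ, ‖X‖ ≤ 1 → ‖a‖ ≤ 1 →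
      ctcL b N ((1 + PowerSeries.C X * PowerSeries.X) * ctcG3 a) ≤ C) :
    ctcL b N (ctcT q * (ctcT h * ctcT h)) ≤ C := by
  obtain ⟨b1, hb1⟩ := ctcL_mul b N (ctcT h * ctcT h)
  rw [hb1]
  refine ctc_hull_p he hqd q0 hqre b1 N C fun x hx => ?_
  rw [← hb1]
  set E : PowerSeries ℂ := 1 + PowerSeries.C ((starRingEnd ℂ) e ^ 2 * x) * PowerSeries.X with hE
  obtain ⟨b2, hb2⟩ := ctcL_mul b N (E * ctcG x * ctcT h)
  have r1 : E * ctcG x * (ctcT h * ctcT h) = ctcT h * (E * ctcG x * ctcT h) := by ring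
  rw [r1, hb2]
  refine ctc_hull_h hd h0 hre b2 N C fun y hy => ?_
  rw [← hb2]
  obtain ⟨b3, hb3⟩ := ctcL_mul b N (E * ctcG x * ctcG y)
  have r2 : ctcG y * (E * ctcG x * ctcT h) = ctcT h * (E * ctcG x * ctcG y) := by ring
  rw [r2, hb3]
  refine ctc_hull_h hd h0 hre b3 N C fun w hw => ?_
  rw [← hb3]
  have r3 : ctcG w * (E * ctcG x * ctcG y) = E * (ctcG x * ctcG y * ctcG w) := by ring
  rw [r3]
  refine ctc_feyn b N C E hx.le hy.le hw.le fun a ha => ?_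
  refine hC _ a ?_ ha
  rw [norm_mul, norm_pow, RCLike.norm_conj, he, hx]
  norm_num

lemma ctc_coeff_deriv (f : ℂ → ℂ) (k : ℕ) :
    taylorCoeff (deriv f) k = ((k : ℂ) + 1) * taylorCoeff f (k + 1) := by
  unfold taylorCoeff
  rw [iteratedDeriv_succ', Nat.factorial_succ]
  have h1 : ((k : ℂ) + 1) ≠ 0 := by exact_mod_cast Nat.succ_ne_zero k
  have h2 : (k.factorial : ℂ) ≠ 0 := by exact_mod_cast Nat.factorial_ne_zero k
  push_cast
  field_simp

lemma ctc_factor_s2 {f : ℂ → ℂ} (hf : IsCloseToConvex f) (b : ℕ → ℂ) (N : ℕ) (C : ℝ)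
    (hC : ∀ X a : ℂ, ‖X‖ ≤ 1 → ‖a‖ ≤ 1 →
      ctcL b N ((1 + PowerSeries.C X * PowerSeries.X) * ctcG3 a) ≤ C) :
    ctcL b N (ctcT (deriv f)) ≤ C := by
  obtain ⟨fd, f0, f1, θ, g, hg, hre⟩ := hf
  obtain ⟨h, hd, h0, hgh, hne, hhre⟩ := ctc_starlike hg
  set e : ℂ := Complex.exp (θ * Complex.I) with he
  have hen : ‖e‖ = 1 := Complex.norm_exp_ofReal_mul_I θ
  set q : ℂ → ℂ := fun z => deriv f z / (h z * h z) with hq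
  have hqd : DifferentiableOn ℂ q (ball (0 : ℂ) 1) :=
    (fd.deriv isOpen_ball).div (hd.mul hd) fun z _ => mul_ne_zero (hne z) (hne z)
  have q0 : q 0 = 1 := by simp [hq, f1, h0]
  have hq1 : ∀ z ∈ ball (0 : ℂ) 1 \ {0}, 0 ≤ (e * q z).re := by
    intro z hz
    have h1 := hre z hz
    have hz0 : z ≠ 0 := hz.2
    have h2 : e * z * deriv f z / g z = e * q z := by
      rw [hgh z hz.1]
      simp only [hq]
      have := hne z
      field_simp
    rw [h2] at h1
    exact h1.le
  have hqre : ∀ z ∈ ball (0 : ℂ) 1, 0 ≤ (e * q z).re := by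
    intro z hz
    by_cases hz0 : z = 0
    · have hc : ContinuousAt (fun z => (e * q z).re) z :=
        Complex.continuous_re.continuousAt.comp (continuousAt_const.mul
          (hqd.differentiableAt (isOpen_ball.mem_nhds hz)).continuousAt)
      have ht : Filter.Tendsto (fun z => (e * q z).re) (nhdsWithin z {z}ᶜ)
          (nhds (e * q z).re) := hc.tendsto.mono_left nhdsWithin_le_nhds
      refine ge_of_tendsto ht ?_
      filter_upwards [self_mem_nhdsWithin, nhdsWithin_le_nhds (isOpen_ball.mem_nhds hz)]
        with y hy1 hy2
      refine hq1 y ⟨hy2, ?_⟩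
      rw [hz0] at hy1
      exact hy1
    · exact hq1 z ⟨hz, hz0⟩
  have hfac : ctcT (deriv f) = ctcT q * (ctcT h * ctcT h) := by
    rw [← ctcT_mul (ctc_analyticAt hd) (ctc_analyticAt hd),
      ← ctcT_mul (g := fun z => h z * h z) (ctc_analyticAt hqd) (ctc_analyticAt (hd.mul hd))]
    refine ctcT_congr fun z _ => ?_
    simp only [hq]
    have := hne z
    field_simp
  rw [hfac]
  exact ctc_hull_all hen hqd q0 hqre hd h0 hhre b N C hC

theorem generalized_zalcman_closeToConvex_small_lambda
    (n : ℕ) (hn : 3 ≤ n) (lam : ℝ) (hlam1 : 0 < lam)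
    (hlam2 : lam ≤ 2 * (n : ℝ) / ((n : ℝ) ^ 2 - n + 1))
    (f : ℂ → ℂ) (hf : IsCloseToConvex f) :
    ‖(lam : ℂ) * (taylorCoeff f n) ^ 2 - taylorCoeff f (2 * n - 1)‖ ≤
      2 * (n : ℝ) - 1 := by
  set W : ℂ := (lam : ℂ) * (taylorCoeff f n) ^ 2 - taylorCoeff f (2 * n - 1) with hW
  have main : ∀ u : ℂ, ‖u‖ = 1 → (u ^ 2 * W).re ≤ 2 * (n : ℝ) - 1 := by
    intro u hu
    set s : ℝ := (u * taylorCoeff f n).re with hs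
    have key := ctc_factor_s2 hf _ (2 * n - 1) _
      (fun X a hX ha => ctc_extreme n hn lam hlam1 hlam2 s u hu X a hX ha)
    unfold ctcL at key
    rw [ctc_twosum n hn] at key
    simp only [ctcT, PowerSeries.coeff_mk, ctc_coeff_deriv] at key
    have e1 : n - 1 + 1 = n := by omega
    have e2 : 2 * n - 2 + 1 = 2 * n - 1 := by omega
    have e3 : (((n - 1 : ℕ) : ℂ) + 1) = n := by exact_mod_cast congrArg (Nat.cast (R := ℂ)) e1
    have e4 : (((2 * n - 2 : ℕ) : ℂ) + 1) = 2 * n - 1 := by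
      have h1 : 2 * n - 2 + 2 = 2 * n := by omega
      have h2 : (((2 * n - 2 : ℕ) : ℂ) + 2) = 2 * n := by
        exact_mod_cast congrArg (Nat.cast (R := ℂ)) h1
      linear_combination h2
    rw [e1, e2, e3, e4] at key
    have hn0 : (n : ℂ) ≠ 0 := by exact_mod_cast (by omega : n ≠ 0)
    have hn1 : (2 * (n : ℂ) - 1) ≠ 0 := by
      rw [← e4]
      exact_mod_cast Nat.succ_ne_zero (2 * n - 2)
    have e5 : 2 * lam * s * u / n * (n * taylorCoeff f n) +
        - u ^ 2 / (2 * n - 1) * ((2 * n - 1) * taylorCoeff f (2 * n - 1)) =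
        ((2 * lam * s : ℝ) : ℂ) * (u * taylorCoeff f n) - u ^ 2 * taylorCoeff f (2 * n - 1) := by
      push_cast
      field_simp
      ring
    rw [e5, Complex.sub_re, Complex.re_ofReal_mul, ← hs] at key
    have e6 : u ^ 2 * W = (lam : ℂ) * ((u * taylorCoeff f n) * (u * taylorCoeff f n)) -
        u ^ 2 * taylorCoeff f (2 * n - 1) := by
      rw [hW]; ring
    rw [e6, Complex.sub_re, Complex.re_ofReal_mul, Complex.mul_re (u * taylorCoeff f n), ← hs]
    nlinarith [mul_nonneg hlam1.le (mul_self_nonneg (u * taylorCoeff f n).im)]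
  have hu : ‖Complex.exp ((-(W.arg / 2) : ℝ) * Complex.I)‖ = 1 :=
    Complex.norm_exp_ofReal_mul_I _
  have h1 := main _ hu
  have h2 : Complex.exp ((-(W.arg / 2) : ℝ) * Complex.I) ^ 2 * W = (‖W‖ : ℂ) := by
    conv_lhs => rw [← Complex.norm_mul_exp_arg_mul_I W]
    rw [mul_left_comm, ← Complex.exp_nat_mul, ← Complex.exp_add]
    have : ((2 : ℕ) : ℂ) * ((-(W.arg / 2) : ℝ) * Complex.I) + W.arg * Complex.I = 0 := by
      push_cast; ring
    rw [Complex.norm_mul_exp_arg_mul_I, this, Complex.exp_zero, mul_one]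
  rw [h2, Complex.ofReal_re] at h1
  exact h1
end
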